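/- Every element of G of finite order n > 1 is conjugate in G to one of the following elements, or to the inverse of one of them: v², j⁶, (bu⁻¹)², u, j⁴, uj⁴, buv, v, j³, vj³, v²j³, bu⁻¹, j², v²j², v²uj, v²uj⁵, bv²u⁻¹j, bv², uvj, bj, (bj)³, j, j⁵, uv⁻¹j², uv⁻¹j³, uv⁻¹j⁶, uv⁻¹j⁻¹, v²j, uv², uj, uj³, bv, (bv)⁻⁵, uv, vuj². -/

import Mathlib

/-!
The proof is geometric. The subgroup `K = ⟨u, v⟩` is finite, with normal forms `tᵢ v^q j^a`
(`i < 6`, `q < 4`, `a < 12`). The lattice acts projectively, by matrices over `ℤ[ζ₁₂][1/2]`, on the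
complex two-ball `α|z₀|² + α|z₁|² < |z₂|²`, `α = 1 + √3`, and `K` fixes the centre. Let `Sset` be the
union of the double cosets `K`, `K b K` and `K b u⁻¹ b K`.

The abstract group, given by its presentation, is compared with the action on the ball by a
covering-space argument. Take one open metric ball for every word in the generators, around the
corresponding translate of the centre, and call two words related if they differ by an element of
`Sset`. Three facts are checked: over a common point of the balls the relation is transitive
(`cover_trans`; a finite computation with double cosets and the entries of the matrices), every point
of an open ball lies in a slightly smaller closed ball of a related word (`cover_core`; a metric
estimate), and related overlapping balls link any two words (`cover_conn`). Hence gluing the metric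
balls along the relation gives a connected covering space of the ball. As the ball is simply
connected, the metric balls cover it, and any two that overlap belong to related words (`nerve`,
`cover`).

An element of finite order fixes a point of the ball (`exists_fixed`). This point lies in the metric
ball of some word `w`, and also in that of `g w`, so that `w⁻¹ g w` lies in `Sset` (`conj_Sset`).
Therefore `g` is conjugate to some `σ_s k`, where `σ₀, σ₁, σ₂ = 1, b, bu⁻¹b` and `k` is in `K`. Up to
inversion and conjugation by elements of `K` commuting with `σ_s`, these `3 · 288` elements fall into
the classes in `reps` (`mask_orb`). Each class is trivial, or is carried to a listed element by
conjugations by elements `b c` with `c` in `K` (`tab_chk`), or has infinite order: an element of finite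
order has unimodular eigenvalues, which makes the discriminant of its characteristic polynomial
nonpositive (`disc_fin`), whereas the remaining classes have positive discriminant (`infs_hyp`).
-/

/-- Generators of the Cartwright–Steger lattice presentation. -/
inductive CSgen : Type
  | u : CSgen
  | v : CSgen
  | b : CSgen

open FreeGroup in
/-- Relators of the Cartwright–Steger lattice:
`u³ = v⁴ = b³ = 1`, `(uv)² = (vu)²`, `vb = bv`, `(buv)³ = 1`, `(buvu)²v = 1`. -/
def csRels : Set (FreeGroup CSgen) :=
  { (of CSgen.u) ^ 3,
    (of CSgen.v) ^ 4,
    (of CSgen.b) ^ 3,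
    (of CSgen.u * of CSgen.v) ^ 2 * ((of CSgen.v * of CSgen.u) ^ 2)⁻¹,
    of CSgen.v * of CSgen.b * (of CSgen.b * of CSgen.v)⁻¹,
    (of CSgen.b * of CSgen.u * of CSgen.v) ^ 3,
    (of CSgen.b * of CSgen.u * of CSgen.v * of CSgen.u) ^ 2 * of CSgen.v }

/-- The Cartwright–Steger lattice, as an abstract presented group. -/
abbrev CS : Type := PresentedGroup csRels

def gu : CS := PresentedGroup.of CSgen.u
def gv : CS := PresentedGroup.of CSgen.v
def gb : CS := PresentedGroup.of CSgen.b
/-- `j = (uv)²`. -/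
def gj : CS := (gu * gv) ^ 2

/-- Representatives of the conjugacy classes of nontrivial torsion elements
(up to inverses): `v²`, `j⁶`, `(bu⁻¹)²`, `u`, `j⁴`, `uj⁴`, `buv`, `v`, `j³`, `vj³`,
`v²j³`, `bu⁻¹`, `j²`, `v²j²`, `v²uj`, `v²uj⁵`, `bv²u⁻¹j`, `bv²`, `uvj`, `bj`, `(bj)³`,
`j`, `j⁵`, `uv⁻¹j²`, `uv⁻¹j³`, `uv⁻¹j⁶`, `uv⁻¹j⁻¹`, `v²j`, `uv²`, `uj`, `uj³`,
`bv`, `(bv)⁻⁵`, `uv`, `vuj²`. -/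
def torsionReps : List CS :=
  [ gv ^ 2, gj ^ 6, (gb * gu⁻¹) ^ 2,
    gu, gj ^ 4, gu * gj ^ 4, gb * gu * gv,
    gv, gj ^ 3, gv * gj ^ 3, gv ^ 2 * gj ^ 3, gb * gu⁻¹,
    gj ^ 2, gv ^ 2 * gj ^ 2, gv ^ 2 * gu * gj, gv ^ 2 * gu * gj ^ 5,
    gb * gv ^ 2 * gu⁻¹ * gj, gb * gv ^ 2,
    gu * gv * gj, gb * gj, (gb * gj) ^ 3,
    gj, gj ^ 5, gu * gv⁻¹ * gj ^ 2, gu * gv⁻¹ * gj ^ 3, gu * gv⁻¹ * gj ^ 6,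
    gu * gv⁻¹ * gj⁻¹, gv ^ 2 * gj, gu * gv ^ 2, gu * gj, gu * gj ^ 3,
    gb * gv, (gb * gv) ^ (-5 : ℤ),
    gu * gv, gv * gu * gj ^ 2 ]

namespace CSProof

/-! ### Gluing an open cover of a simply connected space -/

section Nerve
open Set Topology

variable {X I : Type*} [TopologicalSpace X] (U : I → Set X) (R : I → I → Prop)

/-- The disjoint union of the sets `U i`. -/
abbrev Sheets : Type _ := {p : I × X // p.2 ∈ U p.1}

/-- Two points of the disjoint union are glued when they lie over the same point of `X` and their
sheets are related. -/
def glue (hrefl : ∀ i, R i i) (hsymm : ∀ i k, R i k → R k i)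
    (htrans : ∀ i k l x, x ∈ U i → x ∈ U k → x ∈ U l → R i k → R k l → R i l) :
    Setoid (Sheets U) where
  r p q := p.1.2 = q.1.2 ∧ R p.1.1 q.1.1
  iseqv :=
    { refl := fun _ => ⟨rfl, hrefl _⟩
      symm := fun h => ⟨h.1.symm, hsymm _ _ h.2⟩
      trans := fun {p q r} h h' => ⟨h.1.trans h'.1,
        htrans _ _ _ p.1.2 p.2 (h.1 ▸ q.2) (h.1.trans h'.1 ▸ r.2) h.2 h'.2⟩ }

/-- An open cover of a simply connected space recovered from a relation `R` on its index set. Glue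
the sheets `U i` along `R`, at the points common to two of them. The cores `A i` and the
neighbourhoods in `hnbhd` make the projection to `X` a covering map, which has a section since `X`
is simply connected. By `hconn` the section agrees with every sheet, so the sheets cover `X` and
any two sheets over a common point are glued there. -/
theorem nerve [TopologicalSpace I] [DiscreteTopology I]
    [SimplyConnectedSpace X] [LocallyPathConnectedSpace X] (A : I → Set X)
    (hrefl : ∀ i, R i i) (hsymm : ∀ i k, R i k → R k i)
    (htrans : ∀ i k l x, x ∈ U i → x ∈ U k → x ∈ U l → R i k → R k l → R i l)
    (hAU : ∀ i, A i ⊆ U i) (hUo : ∀ i, IsOpen (U i)) (hUc : ∀ i, IsPreconnected (U i))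
    (hcore : ∀ i x, x ∈ U i → ∃ k, R i k ∧ x ∈ A k)
    (hnbhd : ∀ x, ∃ W, IsOpen W ∧ x ∈ W ∧
      ∀ i, (x ∈ A i → W ⊆ U i) ∧ ∀ y ∈ W, y ∈ A i → x ∈ U i)
    (hconn : ∀ i k, Relation.ReflTransGen (fun i k => R i k ∧ (U i ∩ U k).Nonempty) i k)
    (hne : ∃ i, (U i).Nonempty) :
    (∀ x, ∃ i, x ∈ U i) ∧ ∀ i k x, x ∈ U i → x ∈ U k → R i k := by
  let S := glue U R hrefl hsymm htrans
  let Y := Quotient S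
  let mk : ∀ i x, x ∈ U i → Y := fun i x h => Quotient.mk S ⟨(i, x), h⟩
  have mk_eq : ∀ {i x k y} (h : x ∈ U i) (h' : y ∈ U k), mk i x h = mk k y h' ↔ x = y ∧ R i k :=
    fun h h' => Quotient.eq (r := S)
  let f : Y → X := Quotient.lift (fun p : Sheets U => p.1.2) (fun p q h => h.1)
  have f_mk : ∀ i x h, f (mk i x h) = x := fun i x h => rfl
  have ind : ∀ y : Y, ∃ i x h, y = mk i x h := by
    intro y
    induction y using Quotient.inductionOn with
    | h p => exact ⟨p.1.1, p.1.2, p.2, rfl⟩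
  have open_iff : ∀ T : Set Y, IsOpen T ↔ ∀ k, IsOpen {z | ∃ h : z ∈ U k, mk k z h ∈ T} := by
    intro T
    rw [isOpen_coinduced]
    constructor
    · intro h k
      obtain ⟨V, hV, hVT⟩ := isOpen_induced_iff.1 h
      have h1 : IsOpen {z : X | (k, z) ∈ V} := hV.preimage (by fun_prop : Continuous fun z : X => (k, z))
      convert! h1.inter (hUo k) using 1
      ext z
      constructor
      · rintro ⟨hz, hz'⟩
        exact ⟨(Set.ext_iff.1 hVT ⟨(k, z), hz⟩).2 hz', hz⟩
      · rintro ⟨hz, hz'⟩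
        exact ⟨hz', (Set.ext_iff.1 hVT ⟨(k, z), hz'⟩).1 hz⟩
    · intro h
      refine isOpen_induced_iff.2 ⟨⋃ k, ({k} : Set I) ×ˢ {z | ∃ h : z ∈ U k, mk k z h ∈ T},
        isOpen_iUnion fun k => (isOpen_discrete _).prod (h k), ?_⟩
      ext ⟨⟨k, z⟩, hz⟩
      simp only [mem_preimage, mem_iUnion, mem_prod, mem_singleton_iff, mem_ofPred_eq]
      constructor
      · rintro ⟨k', rfl, h1, h2⟩; exact h2
      · intro h2; exact ⟨k, rfl, hz, h2⟩
  have mk_cont : ∀ i, Continuous (fun z : U i => mk i z z.2) := fun i =>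
    continuous_quotient_mk'.comp (by fun_prop : Continuous fun z : U i => (⟨(i, z), z.2⟩ : Sheets U))
  -- Over the neighbourhood `W` of `x` the sheets are those of the `A i` containing `x`, one
  -- representative `rep y` being chosen for each point `y` of the fibre.
  have hcov : IsCoveringMap f := by
    intro x
    obtain ⟨W, hW, hxW, hWA⟩ := hnbhd x
    have key : ∀ y : Y, f y = x → ∃ i, x ∈ A i ∧ ∀ h : x ∈ U i, y = mk i x h := by
      intro y hy
      obtain ⟨k, z, h, rfl⟩ := ind y
      obtain rfl : z = x := hy
      obtain ⟨i, hR, hi⟩ := hcore k z h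
      exact ⟨i, hi, fun _ => (mk_eq _ _).2 ⟨rfl, hR⟩⟩
    have : Nonempty I := ⟨hne.choose⟩
    choose! rep hrepA hrep using key
    let ι : Type _ := {i : I // ∃ y, f y = x ∧ rep y = i}
    have exh : ∀ y, f y ∈ W → ∃ i : ι, ∃ h : f y ∈ U i, y = mk i (f y) h := by
      intro y hy
      obtain ⟨k, z, h, rfl⟩ := ind y
      rw [f_mk] at hy
      obtain ⟨i, hR, hi⟩ := hcore k z h
      have hxi := (hWA i).2 z hy hi
      have h2 := hrep (mk i x hxi) rfl (hAU _ (hrepA (mk i x hxi) rfl))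
      have hA := hrepA (mk i x hxi) rfl
      refine ⟨⟨rep (mk i x hxi), _, rfl, rfl⟩, (hWA _).1 hA hy, ?_⟩
      exact (mk_eq _ _).2 ⟨rfl, htrans _ _ _ z h (hAU _ hi) ((hWA _).1 hA hy) hR
        ((mk_eq _ _).1 h2).2⟩
    have sub : ∀ i : ι, x ∈ A i ∧ W ⊆ U i := by
      rintro ⟨i, y, hy, rfl⟩
      exact ⟨hrepA y hy, (hWA _).1 (hrepA y hy)⟩
    by_cases hι : Nonempty ι
    · have hYne : Nonempty Y := ⟨mk hι.some.1 x (hAU _ (sub hι.some).1)⟩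
      let t : Bundle.Trivialization ι f := IsOpen.trivializationDiscrete
        (fun i : ι => {y | ∃ z, ∃ h : z ∈ W, y = mk i z ((sub i).2 h)}) W hW
        (by
          intro i W' hW'
          rw [open_iff]
          constructor
          · intro ho k
            by_cases hR : R k i
            · convert! ho.inter (hUo k) using 1
              ext z
              constructor
              · rintro ⟨h, h1, h2⟩; exact ⟨h1, h⟩
              · rintro ⟨h1, h2⟩
                exact ⟨h2, h1, z, hW' h1, (mk_eq _ _).2 ⟨rfl, hR⟩⟩
            · convert! isOpen_empty using 1
              ext z
              simp only [mem_ofPred_eq, mem_empty_iff_false, iff_false]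
              rintro ⟨h, h1, z', h2, h3⟩
              exact hR ((mk_eq _ _).1 h3).2
          · intro h
            convert! h i using 1
            ext z
            constructor
            · intro h1; exact ⟨(sub i).2 (hW' h1), h1, z, hW' h1, rfl⟩
            · rintro ⟨h1, h2, h3⟩; exact h2)
        (by
          rintro i _ ⟨z, h, rfl⟩ _ ⟨z', h', rfl⟩ hz
          obtain rfl : z = z' := hz
          rfl)
        (by
          intro i z hz
          exact ⟨mk i z ((sub i).2 hz), ⟨z, hz, rfl⟩, rfl⟩)
        (by
          intro i i' hii
          refine Set.disjoint_left.2 ?_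
          rintro _ ⟨z, h, rfl⟩ ⟨z', h', he⟩
          apply hii
          have hR := ((mk_eq _ _).1 he).2
          obtain ⟨i, y, hy, rfl⟩ := i
          obtain ⟨i', y', hy', rfl⟩ := i'
          have : y = y' := by
            rw [hrep y hy (hAU _ (hrepA y hy)), hrep y' hy' (hAU _ (hrepA y' hy'))]
            exact (mk_eq _ _).2 ⟨rfl, hR⟩
          subst this; rfl)
        (by
          intro y hy
          obtain ⟨i, h, h'⟩ := exh y hy
          exact mem_iUnion.2 ⟨i, f y, hy, h'⟩)
      exact (IsEvenlyCovered.of_trivialization (t := t) hxW).to_isEvenlyCovered_preimage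
    · have hι' : IsEmpty ι := not_nonempty_iff.1 hι
      refine (IsEvenlyCovered.of_preimage_eq_empty (I := ι) (hW.mem_nhds hxW)
        (Set.eq_empty_of_forall_notMem fun y hy => ?_)).to_isEvenlyCovered_preimage
      obtain ⟨i, -⟩ := exh y hy
      exact hι ⟨i⟩
  obtain ⟨i₀, x₀, h₀⟩ := hne
  obtain ⟨s, ⟨hs0, hs⟩, -⟩ := hcov.existsUnique_continuousMap_lifts (ContinuousMap.id X) x₀
    (mk i₀ x₀ h₀) rfl
  have hs' : ∀ x, f (s x) = x := fun x => congrFun hs x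
  -- The section `s` agrees with the whole of a connected sheet as soon as it agrees at one point.
  have spread : ∀ k z, ∀ h : z ∈ U k, s z = mk k z h → ∀ z', ∀ h' : z' ∈ U k, s z' = mk k z' h' := by
    intro k z h hz z' h'
    have : PreconnectedSpace (U k) := Subtype.preconnectedSpace (hUc k)
    have := hcov.eq_of_comp_eq (A := U k) (g₁ := fun z => s z) (g₂ := fun z => mk k z z.2)
      (by fun_prop) (mk_cont k) (funext fun z => hs' z) ⟨z, h⟩ hz
    exact congrFun this ⟨z', h'⟩
  have all : ∀ k, ∀ z, ∀ h : z ∈ U k, s z = mk k z h := by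
    intro k
    induction hconn i₀ k with
    | refl => exact spread i₀ x₀ h₀ hs0
    | tail _ hstep ih =>
      obtain ⟨hR, z, hz, hz'⟩ := hstep
      exact spread _ z hz' ((ih z hz).trans ((mk_eq _ _).2 ⟨rfl, hR⟩))
  refine ⟨fun x => ?_, fun i k x hi hk => ?_⟩
  · obtain ⟨i, z, h, hz⟩ := ind (s x)
    have : x = z := by rw [← hs' x, hz, f_mk]
    exact ⟨i, this ▸ h⟩
  · exact ((mk_eq hi hk).1 ((all i x hi).symm.trans (all k x hk))).2

end Nerve

/-! ### Consequences of the defining relations -/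

section Relations
variable {G : Type*} [Group G] {u v b : G}

/-- The defining relations of the lattice, for a triple of elements of a group. -/
structure IsCS (u v b : G) : Prop where
  u3 : u ^ 3 = 1
  v4 : v ^ 4 = 1
  b3 : b ^ 3 = 1
  uv : (u * v) ^ 2 = (v * u) ^ 2
  vb : v * b = b * v
  buv : (b * u * v) ^ 3 = 1
  buvu : (b * u * v * u) ^ 2 * v = 1

namespace IsCS

theorem uvu (_h : IsCS u v b) : u * v * u = (u * v) ^ 2 * v⁻¹ := by rw [pow_two]; group

theorem vuv (h : IsCS u v b) : v * u * v = (u * v) ^ 2 * u⁻¹ := by rw [h.uv, pow_two]; group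

theorem ju (h : IsCS u v b) : Commute ((u * v) ^ 2) u := by
  have : (u * v) ^ 2 * u = u * (v * u) ^ 2 := by simp only [pow_two, mul_assoc]
  rw [Commute, SemiconjBy, this, h.uv]

theorem jv (h : IsCS u v b) : Commute ((u * v) ^ 2) v := by
  have : (v * u) ^ 2 * v = v * (u * v) ^ 2 := by simp only [pow_two, mul_assoc]
  rw [Commute, SemiconjBy, ← this, h.uv]

theorem uu (h : IsCS u v b) : u * u = u⁻¹ := by
  rw [eq_inv_iff_mul_eq_one, ← h.u3]; simp only [pow_succ, pow_zero, one_mul, mul_assoc]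

theorem bb (h : IsCS u v b) : b * b = b⁻¹ := by
  rw [eq_inv_iff_mul_eq_one, ← h.b3]; simp only [pow_succ, pow_zero, one_mul, mul_assoc]

theorem v3 (h : IsCS u v b) : v ^ 3 = v⁻¹ := by
  rw [eq_inv_iff_mul_eq_one, ← h.v4]; group

theorem vbc (h : IsCS u v b) : Commute v b := h.vb

/-- `(uv²)³ = j³`, solved for `uv²u`. -/
theorem uvvu (h : IsCS u v b) : u * v ^ 2 * u = (u * v) ^ 2 * (u * v) ^ 2 * (v⁻¹ * u * v⁻¹) := by
  have e1 : u * v ^ 2 * u = u * v * (v * u * v) * v⁻¹ := by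
    rw [pow_two]; group
  have e2 : u * v * u⁻¹ = (u * v) ^ 2 * (v⁻¹ * u) := by
    rw [← h.uu, ← mul_assoc, ← mul_assoc, h.uvu, mul_assoc]
  have c := ((h.ju.mul_right h.jv) : Commute ((u * v) ^ 2) (u * v))
  rw [e1, h.vuv, ← mul_assoc, ← c.eq]
  calc (u * v) ^ 2 * (u * v) * u⁻¹ * v⁻¹ = (u * v) ^ 2 * (u * v * u⁻¹) * v⁻¹ := by group
    _ = _ := by rw [e2]; simp only [mul_assoc]

/-- The element `uv⁻¹u` is conjugated by `v` into itself up to a central factor. -/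
theorem vA (h : IsCS u v b) : v * (u * v⁻¹ * u) = (u * v) ^ 2 * (u * v) ^ 2 * (u * v) ^ 2 * (u * v⁻¹ * u * v⁻¹) := by
  have cu := h.ju
  have cv := h.jv
  have e : ∀ j : G, Commute j u → Commute j v → u * v * u = j * v⁻¹ → v * u * v = j * u⁻¹ →
      v * (u * v⁻¹ * u) = j * j * j * (u * v⁻¹ * u * v⁻¹) := by
    intro j ju jv h1 h2
    have i1 : u⁻¹ = j⁻¹ * (v * u * v) := by rw [h2]; group
    have i2 : v⁻¹ = j⁻¹ * (u * v * u) := by rw [h1]; group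
    have v4 : v⁻¹ = v * v * v := by rw [← h.v3]; simp only [pow_succ, pow_zero, one_mul, mul_assoc]
    have a1 : u * v⁻¹ * u = j⁻¹ * (u⁻¹ * v * u⁻¹) := by
      nth_rewrite 1 [i2]
      rw [← h.uu]
      simp only [mul_assoc]
      rw [← mul_assoc u j⁻¹, ← ju.inv_left.eq]
      simp only [mul_assoc]
    have a2 : u⁻¹ * v * u⁻¹ = j⁻¹ * j⁻¹ * (v * (u * v⁻¹ * u) * v) := by
      nth_rewrite 1 2 [i1]
      rw [v4]
      have : Commute j⁻¹ (v * u * v * v) := (((jv.mul_right ju).mul_right jv).mul_right jv).inv_left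
      calc j⁻¹ * (v * u * v) * v * (j⁻¹ * (v * u * v)) = j⁻¹ * ((v * u * v * v) * j⁻¹) * (v * u * v) := by
            simp only [mul_assoc]
        _ = _ := by rw [← this.eq]; simp only [mul_assoc]
    have a3 : u * v⁻¹ * u * v⁻¹ = j⁻¹ * (j⁻¹ * j⁻¹) * (v * (u * v⁻¹ * u)) := by
      nth_rewrite 1 [a1, a2]
      group
    rw [a3]; group
  exact e _ cu cv h.uvu h.vuv

/-- The element `j` is central in `⟨u, v⟩` and of order dividing `12`. -/
theorem j12 (h : IsCS u v b) : ((u * v) ^ 2) ^ 12 = 1 := by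
  have hv := h.vA
  have cv := h.jv
  have v4 := h.v4
  generalize u * v⁻¹ * u = A at hv
  generalize (u * v) ^ 2 = j at *
  have c3 : Commute (j * j * j) v := (cv.mul_left cv).mul_left cv
  have e1 : v * A * v = j * j * j * A := by rw [hv]; group
  have e2 : ∀ n : ℕ, v ^ n * A * v ^ n = (j * j * j) ^ n * A := by
    intro n
    induction n with
    | zero => simp
    | succ n ih =>
      calc v ^ (n + 1) * A * v ^ (n + 1) = v ^ n * (v * A * v) * v ^ n := by
            rw [pow_succ]; nth_rewrite 2 [← pow_succ]; rw [pow_succ']; simp only [mul_assoc]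
        _ = v ^ n * (j * j * j) * A * v ^ n := by rw [e1]; simp only [mul_assoc]
        _ = (j * j * j) * (v ^ n * A * v ^ n) := by rw [← (c3.pow_right n).eq]; simp only [mul_assoc]
        _ = _ := by rw [ih, pow_succ' (j * j * j)]; simp only [mul_assoc]
  have := e2 4
  rw [v4, one_mul, mul_one, eq_comm, mul_eq_right] at this
  rw [← this]; simp only [pow_succ, pow_zero, one_mul, mul_assoc]

theorem bjb (h : IsCS u v b) : b * (u * v) ^ 2 * b = v * ((u * v) ^ 2)⁻¹ := by
  have e := h.buvu
  have c := h.vbc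
  have cv := h.jv
  have e1 : b * u * v * u = b * ((u * v) ^ 2 * v⁻¹) := by rw [← h.uvu]; group
  rw [e1] at e
  generalize (u * v) ^ 2 = j at *
  have e2 : (b * (j * v⁻¹)) ^ 2 * v = b * j * (v⁻¹ * b) * j := by rw [pow_two]; group
  rw [e2, c.inv_left.eq] at e
  have e3 : b * j * (b * v⁻¹) * j = b * j * b * (j * v⁻¹) := by
    rw [cv.inv_right.eq]; simp only [mul_assoc]
  rw [e3, mul_eq_one_iff_eq_inv] at e
  rw [e]; group

/-- The braid relation between `b` and `u`. -/
theorem bub (h : IsCS u v b) : b * u * b = u * b * u := by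
  have e1 : b * (u * v) * b = (u * v)⁻¹ * b⁻¹ * (u * v)⁻¹ := by
    have := h.buv
    have e : (b * u * v) ^ 3 = (b * (u * v) * b) * ((u * v) * b * (u * v)) := by
      rw [pow_succ, pow_two]; group
    rw [e, mul_eq_one_iff_eq_inv] at this
    rw [this]; group
  have e2 := h.bjb
  have e3 : b⁻¹ * (u * v)⁻¹ * b⁻¹ = (u * v) * v * ((u * v) ^ 2)⁻¹ * b⁻¹ * (u * v)⁻¹ := by
    have : b * (u * v) ^ 2 * b = b * (u * v) * b * (b⁻¹ * (u * v) * b) := by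
      rw [pow_two]; group
    rw [this, e1] at e2
    have e4 : b⁻¹ * (u * v)⁻¹ * b⁻¹ =
      (u * v) * ((u * v)⁻¹ * b⁻¹ * (u * v)⁻¹ * (b⁻¹ * (u * v) * b)) * b⁻¹ * (u * v)⁻¹ := by group
    rw [e4, e2]; group
  have e4 : b * (u * v) * b = (u * v) * b * (u * v) ^ 2 * v⁻¹ * (u * v)⁻¹ := by
    have : b * (u * v) * b = (b⁻¹ * (u * v)⁻¹ * b⁻¹)⁻¹ := by group
    rw [this, e3]; group
  have e5 : b * u * b = b * (u * v) * b * v⁻¹ := by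
    calc b * u * b = b * (u * v) * (v⁻¹ * b) := by group
      _ = _ := by rw [h.vbc.inv_left.eq]; simp only [mul_assoc]
  have e6 : v⁻¹ * u⁻¹ * v⁻¹ = ((u * v) ^ 2)⁻¹ * u := by
    have : v⁻¹ * u⁻¹ * v⁻¹ = (v * u * v)⁻¹ := by group
    rw [this, h.vuv, h.ju.inv_right.eq]; group
  rw [e5, e4]
  have cu := h.ju
  have cv := h.jv
  have e7 := h.vuv
  calc u * v * b * (u * v) ^ 2 * v⁻¹ * (u * v)⁻¹ * v⁻¹
      = u * v * b * (u * v) ^ 2 * v⁻¹ * (v⁻¹ * u⁻¹ * v⁻¹) := by group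
    _ = u * v * b * ((u * v) ^ 2 * (v⁻¹ * ((u * v) ^ 2)⁻¹)) * u := by rw [e6]; group
    _ = u * v * b * v⁻¹ * u := by rw [cv.inv_inv.eq.symm]; group
    _ = u * (b * v) * v⁻¹ * u := by rw [← h.vb]; simp only [mul_assoc]
    _ = _ := by group

/-- The double coset of `b` with respect to `⟨u, v⟩` is closed under inversion. -/
theorem binv (h : IsCS u v b) : b * b = (u * v) ^ 2 * b * v⁻¹ * (u * v) ^ 2 := by
  have e := h.bjb
  have cv := h.jv
  have c := h.vbc
  rw [h.bb]
  generalize (u * v) ^ 2 = j at *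
  have : b⁻¹ = j * b * ((b * j * b)⁻¹) := by group
  rw [this, e, mul_inv_rev, inv_inv, cv.inv_right.eq]
  group

/-- `u` commutes with `bu⁻¹b`. -/
theorem q_comm (h : IsCS u v b) : Commute (b * u⁻¹ * b) u ∧ b⁻¹ * u * b⁻¹ = u * (b * u⁻¹ * b) := by
  have e := h.bub
  have b2 := h.bb
  have u2 := h.uu
  have e1 : b * u⁻¹ * b⁻¹ = u⁻¹ * b⁻¹ * u := by
    have : b * u⁻¹ * b⁻¹ = u⁻¹ * b⁻¹ * (b * u * b) * u⁻¹ * b⁻¹ := by group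
    rw [this, e]; group
  have e1' : b⁻¹ * u⁻¹ * b = u * b⁻¹ * u⁻¹ := by
    have : u * b⁻¹ * u⁻¹ = b⁻¹ * u⁻¹ * (u * b * u) * b⁻¹ * u⁻¹ := by group
    rw [this, ← e]; group
  have e2 : b * u⁻¹ * b = u⁻¹ * (b⁻¹ * u * b⁻¹) := by
    calc b * u⁻¹ * b = b * u⁻¹ * b⁻¹ * (b * b) := by group
      _ = _ := by rw [e1, b2]; simp only [mul_assoc]
  have e3 : b * u⁻¹ * b = (b⁻¹ * u * b⁻¹) * u⁻¹ := by
    calc b * u⁻¹ * b = (b * b) * (b⁻¹ * u⁻¹ * b) := by group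
      _ = _ := by rw [e1', b2]; simp only [mul_assoc]
  refine ⟨?_, by rw [e2]; group⟩
  rw [Commute, SemiconjBy]
  nth_rewrite 1 [e3]
  rw [e2]; group

theorem buB (h : IsCS u v b) : b * u * b⁻¹ = u⁻¹ * b * u := by
  have : b * u * b⁻¹ = u⁻¹ * (u * b * u) * b⁻¹ := by group
  rw [this, ← h.bub]; group

theorem jb (h : IsCS u v b) : (u * v) ^ 2 * b = b⁻¹ * (v * ((u * v) ^ 2)⁻¹) := by
  rw [← h.bjb]; group

theorem bj (h : IsCS u v b) : b * (u * v) ^ 2 = (v * ((u * v) ^ 2)⁻¹) * b⁻¹ := by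
  rw [← h.bjb]; group

theorem bjjb (h : IsCS u v b) : b * (u * v) ^ 2 * (u * v) ^ 2 * b =
    v * ((u * v) ^ 2)⁻¹ * b * (v * ((u * v) ^ 2)⁻¹) := by
  have : b * (u * v) ^ 2 * (u * v) ^ 2 * b = (b * (u * v) ^ 2) * ((u * v) ^ 2 * b) := by group
  rw [this, h.bj, h.jb]
  have e : b⁻¹ * b⁻¹ = b := by rw [← h.bb, mul_assoc, ← mul_assoc b b b, h.bb, inv_mul_cancel, mul_one]
  calc _ = v * ((u * v) ^ 2)⁻¹ * (b⁻¹ * b⁻¹) * (v * ((u * v) ^ 2)⁻¹) := by simp only [mul_assoc]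
    _ = _ := by rw [e]

theorem buJb (h : IsCS u v b) : b * (u * ((u * v) ^ 2)⁻¹) * b = v⁻¹ * (b * u⁻¹ * b) * v⁻¹ := by
  have e : u * ((u * v) ^ 2)⁻¹ = v⁻¹ * u⁻¹ * v⁻¹ := by
    have : v⁻¹ * u⁻¹ * v⁻¹ = (v * u * v)⁻¹ := by group
    rw [this, h.vuv]; group
  rw [e]
  have c := h.vbc.inv_left.eq
  calc b * (v⁻¹ * u⁻¹ * v⁻¹) * b = (b * v⁻¹) * u⁻¹ * (v⁻¹ * b) := by simp only [mul_assoc]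
    _ = v⁻¹ * b * u⁻¹ * (v⁻¹ * b) := by rw [← c]
    _ = _ := by nth_rewrite 2 [c]; simp only [mul_assoc]

theorem bujb (h : IsCS u v b) : b * (u * (u * v) ^ 2) * b = u⁻¹ * b * (u * v * ((u * v) ^ 2)⁻¹) := by
  calc b * (u * (u * v) ^ 2) * b = b * u * ((u * v) ^ 2 * b) := by simp only [mul_assoc]
    _ = b * u * (b⁻¹ * v) * ((u * v) ^ 2)⁻¹ := by rw [h.jb]; simp only [mul_assoc]
    _ = b * u * b⁻¹ * (v * ((u * v) ^ 2)⁻¹) := by simp only [mul_assoc]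
    _ = _ := by rw [h.buB]; simp only [mul_assoc]

theorem bujjb (h : IsCS u v b) : b * (u * (u * v) ^ 2 * (u * v) ^ 2) * b =
    v * ((u * v) ^ 2)⁻¹ * u * (b * u⁻¹ * b) * (v * ((u * v) ^ 2)⁻¹) := by
  calc b * (u * (u * v) ^ 2 * (u * v) ^ 2) * b = b * (u * (u * v) ^ 2) * ((u * v) ^ 2 * b) := by
        simp only [mul_assoc]
    _ = (b * (u * v) ^ 2) * u * ((u * v) ^ 2 * b) := by rw [← h.ju.eq]; simp only [mul_assoc]
    _ = (v * ((u * v) ^ 2)⁻¹) * (b⁻¹ * u * b⁻¹) * (v * ((u * v) ^ 2)⁻¹) := by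
        rw [h.bj, h.jb]; simp only [mul_assoc]
    _ = _ := by rw [h.q_comm.2]; simp only [mul_assoc]

theorem bq (h : IsCS u v b) : b * (b * u⁻¹ * b) = u * ((u * v) ^ 2 * b * v⁻¹ * (u * v) ^ 2) * u⁻¹ := by
  have e1' : b⁻¹ * u⁻¹ * b = u * b⁻¹ * u⁻¹ := by
    have : u * b⁻¹ * u⁻¹ = b⁻¹ * u⁻¹ * (u * b * u) * b⁻¹ * u⁻¹ := by group
    rw [this, ← h.bub]; group
  rw [← h.binv, h.bb, ← e1', ← h.bb]; simp only [mul_assoc]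

theorem buvq (h : IsCS u v b) : b * (u * v) * (b * u⁻¹ * b) = ((u * v) ^ 2)⁻¹ * u⁻¹ * b * u⁻¹ := by
  have e : u * v * u⁻¹ = (u * v) ^ 2 * (v⁻¹ * u) := by
    rw [← h.uu, ← mul_assoc, ← mul_assoc, h.uvu, mul_assoc]
  have e1 : b⁻¹ * u * b = u * b * u⁻¹ := by
    have : u * b * u⁻¹ = b⁻¹ * (b * u * b) * u⁻¹ := by group
    rw [this, h.bub]; group
  calc b * (u * v) * (b * u⁻¹ * b) = b * u * (v * b) * u⁻¹ * b := by simp only [mul_assoc]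
    _ = (b * u * b) * v * u⁻¹ * b := by rw [h.vb]; simp only [mul_assoc]
    _ = u * b * (u * v * u⁻¹) * b := by rw [h.bub]; simp only [mul_assoc]
    _ = u * (b * (u * v) ^ 2) * v⁻¹ * u * b := by rw [e]; simp only [mul_assoc]
    _ = u * (v * ((u * v) ^ 2)⁻¹ * (b⁻¹ * v⁻¹)) * u * b := by rw [h.bj]; simp only [mul_assoc]
    _ = u * ((v * ((u * v) ^ 2)⁻¹) * v⁻¹) * (b⁻¹ * u * b) := by
        rw [← h.vbc.inv_inv.eq]; simp only [mul_assoc]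
    _ = u * ((u * v) ^ 2)⁻¹ * (u * b * u⁻¹) := by rw [← h.jv.inv_left.eq, e1]; group
    _ = ((u * v) ^ 2)⁻¹ * (u * u) * b * u⁻¹ := by
        rw [← h.ju.inv_left.eq]; simp only [mul_assoc]
    _ = _ := by rw [h.uu]

end IsCS
end Relations

/-! ### Normal forms in `⟨u, v⟩` and codes for three double cosets -/

section Words
variable {G : Type*} [Group G]

/-- Normal forms `(i, q, a)` for the elements `tᵢ v^q j^a` of `⟨u, v⟩`, where `t₀, …, t₅` are
`1, u, vu, v²u, v³u, uv³u`: these represent the six cosets of `⟨v, j⟩`. -/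
abbrev NF : Type := ℕ × ℕ × ℕ

/-- The coset representatives `tᵢ`. -/
def tt (u v : G) : ℕ → G
  | 0 => 1
  | 1 => u
  | 2 => v * u
  | 3 => v ^ 2 * u
  | 4 => v ^ 3 * u
  | _ => u * v ^ 3 * u

/-- The element with a given normal form. -/
def ev (u v : G) (x : NF) : G := tt u v x.1 * v ^ x.2.1 * ((u * v) ^ 2) ^ x.2.2

/-- Left multiplication by `u` on normal forms. -/
def lu : NF → NF
  | (0, q, a) => (1, q, a)
  | (1, q, a) => (2, (q + 1) % 4, (a + 11) % 12)
  | (2, q, a) => (0, (q + 3) % 4, (a + 1) % 12)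
  | (3, q, a) => (4, (q + 3) % 4, (a + 2) % 12)
  | (4, q, a) => (5, q, a)
  | (_, q, a) => (3, (q + 1) % 4, (a + 10) % 12)

/-- Left multiplication by `v` on normal forms. -/
def lv : NF → NF
  | (0, q, a) => (0, (q + 1) % 4, a)
  | (1, q, a) => (2, q, a)
  | (2, q, a) => (3, q, a)
  | (3, q, a) => (4, q, a)
  | (4, q, a) => (1, q, a)
  | (_, q, a) => (5, (q + 3) % 4, (a + 3) % 12)

/-- Left multiplication by `v ^ n` on normal forms. -/
def lvp : ℕ → NF → NF
  | 0, y => y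
  | n + 1, y => lv (lvp n y)

/-- Left multiplication by `tᵢ` on normal forms. -/
def lt : ℕ → NF → NF
  | 0, y => y
  | 1, y => lu y
  | 2, y => lv (lu y)
  | 3, y => lv (lv (lu y))
  | 4, y => lv (lv (lv (lu y)))
  | _, y => lu (lv (lv (lv (lu y))))

/-- Multiplication of normal forms. -/
def mulN (x y : NF) : NF := lt x.1 (lvp x.2.1 (y.1, y.2.1, (x.2.2 + y.2.2) % 12))

/-- Normal forms of the inverses of the `tᵢ`. -/
def tinv : ℕ → NF
  | 0 => (0, 0, 0)
  | 1 => (2, 1, 11)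
  | 2 => mulN (2, 1, 11) (0, 3, 0)
  | 3 => mulN (2, 1, 11) (0, 2, 0)
  | 4 => mulN (2, 1, 11) (0, 1, 0)
  | _ => mulN (2, 1, 11) (lv (2, 1, 11))

/-- Inversion of normal forms. -/
def invN (x : NF) : NF := mulN (0, 3 * x.2.1 % 4, 11 * x.2.2 % 12) (tinv x.1)

/-- Codes `(s, x, y)` for the elements `x · σ_s · y` with `x, y ∈ ⟨u, v⟩` and
`σ₀, σ₁, σ₂ = 1, b, bu⁻¹b`. -/
abbrev St : Type := ℕ × NF × NF

/-- The double coset representatives `σ_s`. -/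
def sg (u b : G) : ℕ → G
  | 0 => 1
  | 1 => b
  | _ => b * u⁻¹ * b

/-- The element with a given code. -/
def evS (u v b : G) (s : St) : G := ev u v s.2.1 * sg u b s.1 * ev u v s.2.2

/-- The code of `b · x · b · y`, for `x = (i, q, a)`, whenever that element lies in one of the three
double cosets. -/
def lbP (i q a : ℕ) (y : NF) : Option St :=
  if i = 0 then
    if a = 0 then some (1, (0, 0, 1), mulN (0, 3, 1) (lvp q y))
    else if a = 1 then some (0, (0, 1, 11), lvp q y)
    else if a = 2 then some (1, (0, 1, 11), mulN (0, 1, 11) (lvp q y))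
    else none
  else if i < 5 then
    if a = 11 then some (2, (0, (i + 2) % 4, 0), mulN (0, 3, 0) (lvp q y))
    else if a = 0 then some (1, (i, 0, 0), lu (lvp q y))
    else if a = 1 then some (1, mulN (0, i - 1, 0) (2, 1, 11), mulN (1, 1, 11) (lvp q y))
    else if a = 2 then some (2, mulN (0, i % 4, 11) (1, 0, 0), mulN (0, 1, 11) (lvp q y))
    else none
  else none

/-- The code of `b · x · bu⁻¹b · y`, for `x = (i, q, a)`, whenever that element lies in one of the
three double cosets. -/
def lbQ (i q a : ℕ) (y : NF) : Option St :=
  if i = 0 then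
    if a = 0 then some (1, mulN (0, q, 0) (1, 0, 1), mulN (0, 3, 1) (mulN (2, 1, 11) y))
    else if a = 1 then some (1, mulN (0, (q + 1) % 4, 11) (2, 1, 11), y)
    else none
  else if i < 5 then
    if q = 0 ∧ a = 0 then some (1, mulN (0, i - 1, 0) (1, 0, 1), mulN (0, 3, 1) y)
    else if q = 1 ∧ a = 11 then
      some (1, mulN (0, (i + 2) % 4, 0) (1, 0, 1), mulN (0, 3, 1) (lu y))
    else if q = 1 ∧ a = 0 then some (1, mulN (0, i - 1, 11) (2, 1, 11), mulN (2, 1, 11) y)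
    else if q = 0 ∧ a = 1 then some (1, mulN (0, i % 4, 11) (2, 1, 11), lu y)
    else none
  else none

/-- Partial left multiplication by `b` on codes. -/
def lb : St → Option St
  | (0, x, y) => some (1, (0, 0, 0), mulN x y)
  | (1, (i, q, a), y) => lbP i q a y
  | (_, (i, q, a), y) => lbQ i q a y

/-- Left multiplication by a normal form on codes. -/
def lk (x : NF) (s : St) : St := (s.1, mulN x s.2.1, s.2.2)

/-- Partial left multiplication by `σ_s` on codes. -/
def lsg : ℕ → St → Option St
  | 0, t => some t
  | 1, t => lb t
  | _, t => (lb t).bind fun t' => lb (lk (2, 1, 11) t')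

/-- Partial multiplication of codes. -/
def mulS (s t : St) : Option St := (lsg s.1 (lk s.2.2 t)).map (lk s.2.1)

variable {u v b : G}

theorem v_mod (h : IsCS u v b) (n : ℕ) : v ^ (n % 4) = v ^ n := (pow_eq_pow_mod n h.v4).symm

theorem j_mod (h : IsCS u v b) (n : ℕ) : ((u * v) ^ 2) ^ (n % 12) = ((u * v) ^ 2) ^ n :=
  (pow_eq_pow_mod n h.j12).symm

theorem ev_lu (h : IsCS u v b) (x : NF) : ev u v (lu x) = u * ev u v x := by
  have cu := h.ju
  have cv := h.jv
  have j12 := h.j12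
  have v4 := h.v4
  have uu := h.uu
  have uvu := h.uvu
  have vuv := h.vuv
  have uvvu := h.uvvu
  have v3 : v⁻¹ = v ^ 3 := h.v3.symm
  have hj : ((u * v) ^ 2) ^ 11 = ((u * v) ^ 2)⁻¹ := by
    rw [eq_inv_iff_mul_eq_one, ← pow_succ, j12]
  have vm := v_mod h
  have jm := j_mod h
  obtain ⟨i, q, a⟩ := x
  rcases i with _ | _ | _ | _ | _ | i <;> simp only [lu, ev, tt, zero_add, Nat.reduceAdd, vm, jm, pow_add] <;>
    generalize (u * v) ^ 2 = j at *
  · simp [mul_assoc]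
  · have e : v * u * v = j * (u * u) := by rw [uu, vuv]
    have c : Commute (j ^ 11) (v * u * (v ^ q * v)) :=
      (((cv.mul_right cu).mul_right ((cv.pow_right q).mul_right cv))).pow_left 11
    calc v * u * (v ^ q * v ^ 1) * (j ^ a * j ^ 11) = (v * u * (v ^ q * v)) * j ^ 11 * j ^ a := by
          rw [pow_one, pow_mul_comm j a 11]; simp only [mul_assoc]
      _ = j ^ 11 * ((v * u * v) * v ^ q) * j ^ a := by
          rw [← c.eq, ← pow_succ v q, pow_succ' v q]; simp only [mul_assoc]
      _ = _ := by rw [e, hj]; group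
  · have c : Commute j (v ^ q * v ^ 3) := (cv.pow_right q).mul_right (cv.pow_right 3)
    calc 1 * (v ^ q * v ^ 3) * (j ^ a * j ^ 1) = (v ^ q * v ^ 3) * j * j ^ a := by
          rw [one_mul, pow_one, ← pow_succ j a, pow_succ' j a]; simp only [mul_assoc]
      _ = (j * v ^ 3) * v ^ q * j ^ a := by
          rw [← c.eq, pow_mul_comm v q 3]; simp only [mul_assoc]
      _ = _ := by rw [← v3, ← uvu]; simp only [mul_assoc]
  · have c : Commute (j * j) (v ^ 3 * u * (v ^ q * v ^ 3)) :=
      ((cv.pow_right 3).mul_right cu).mul_right ((cv.pow_right q).mul_right (cv.pow_right 3)) |>.mul_left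
      (((cv.pow_right 3).mul_right cu).mul_right ((cv.pow_right q).mul_right (cv.pow_right 3)))
    calc v ^ 3 * u * (v ^ q * v ^ 3) * (j ^ a * j ^ 2) = (v ^ 3 * u * (v ^ q * v ^ 3)) * (j * j) * j ^ a := by
          rw [pow_mul_comm j a 2, pow_two]; simp only [mul_assoc]
      _ = (j * j * (v ^ 3 * u * v ^ 3)) * v ^ q * j ^ a := by
          rw [← c.eq, pow_mul_comm v q 3]; simp only [mul_assoc]
      _ = _ := by rw [← v3, ← uvvu]; simp only [mul_assoc]
  · simp only [mul_assoc]
  · have e : u * (u * v ^ 3 * u) = v ^ 2 * u * v * j ^ 10 := by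
      have e1 : u * u = v * u * v * j ^ 11 := by
        rw [uu, vuv, hj, cu.inv_right.eq, mul_inv_cancel_right]
      have c1 : Commute (j ^ 11) (v ^ 3 * u) := ((cv.pow_right 3).mul_right cu).pow_left 11
      have c2 : Commute (j ^ 11) (v ^ 2 * u * v) := (((cv.pow_right 2).mul_right cu).mul_right cv).pow_left 11
      calc u * (u * v ^ 3 * u) = (u * u) * (v ^ 3 * u) := by simp only [mul_assoc]
        _ = v * u * v * (v ^ 3 * u) * j ^ 11 := by rw [e1, mul_assoc, c1.eq]; simp only [mul_assoc]
        _ = v * (u * u) * j ^ 11 := by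
            rw [show v * u * v * (v ^ 3 * u) = v * u * (v * v ^ 3) * u by simp only [mul_assoc], ← pow_succ', v4]
            simp only [mul_assoc, one_mul]
        _ = v ^ 2 * u * v * (j ^ 11 * j ^ 11) := by rw [e1, pow_two]; simp only [mul_assoc]
        _ = _ := by rw [← pow_add, show 11 + 11 = 12 + 10 from rfl, pow_add, j12, one_mul]
    have c : Commute (j ^ 10) (v ^ q) := (cv.pow_right q).pow_left 10
    calc v ^ 2 * u * (v ^ q * v ^ 1) * (j ^ a * j ^ 10) = v ^ 2 * u * v * (v ^ q * j ^ 10) * j ^ a := by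
          rw [pow_mul_comm v q 1, pow_mul_comm j a 10, pow_one]; simp only [mul_assoc]
      _ = u * (u * v ^ 3 * u) * v ^ q * j ^ a := by rw [← c.eq, e]; simp only [mul_assoc]
      _ = _ := by simp only [mul_assoc]

theorem ev_lv (h : IsCS u v b) (x : NF) : ev u v (lv x) = v * ev u v x := by
  have cv := h.jv
  have cu := h.ju
  have v4 := h.v4
  have vA := h.vA
  have v3 : v⁻¹ = v ^ 3 := h.v3.symm
  rw [v3] at vA
  have vm := v_mod h
  have jm := j_mod h
  obtain ⟨i, q, a⟩ := x
  rcases i with _ | _ | _ | _ | _ | i <;> simp only [lv, ev, tt, zero_add, Nat.reduceAdd, vm, jm, pow_add] <;>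
    generalize (u * v) ^ 2 = j at *
  · rw [← pow_add, pow_succ']; simp only [mul_assoc, one_mul]
  · simp only [mul_assoc]
  · rw [pow_two]; simp only [mul_assoc]
  · rw [pow_succ' v 2]; simp only [mul_assoc]
  · rw [← mul_assoc v, ← mul_assoc v, ← mul_assoc v, ← pow_succ' v 3, v4, one_mul]
  · have c : Commute (j ^ 3) (v ^ q) := (cv.pow_right q).pow_left 3
    have c' : Commute (j ^ 3) (u * v ^ 3 * u * v ^ 3) :=
      (((cu.mul_right (cv.pow_right 3)).mul_right cu).mul_right (cv.pow_right 3)).pow_left 3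
    calc u * v ^ 3 * u * (v ^ q * v ^ 3) * (j ^ a * j ^ 3) = (u * v ^ 3 * u * v ^ 3) * (v ^ q * j ^ 3) * j ^ a := by
          rw [pow_mul_comm v q 3, pow_mul_comm j a 3]; simp only [mul_assoc]
      _ = j * j * j * (u * v ^ 3 * u * v ^ 3) * v ^ q * j ^ a := by
          rw [← c.eq, ← mul_assoc (u * v ^ 3 * u * v ^ 3), ← c'.eq, pow_succ, pow_two]
      _ = _ := by rw [← vA]; simp only [mul_assoc]

end Words

/-! ### Soundness of the computation with codes -/

section Engine
variable {G : Type*} [Group G] {u v b : G}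

theorem v_three (h : IsCS u v b) : v ^ 3 = v⁻¹ := h.v3

theorem j_eleven (h : IsCS u v b) : ((u * v) ^ 2) ^ 11 = ((u * v) ^ 2)⁻¹ := by
  rw [eq_inv_iff_mul_eq_one, ← pow_succ, h.j12]

theorem ev_lvp (h : IsCS u v b) (n : ℕ) (y : NF) : ev u v (lvp n y) = v ^ n * ev u v y := by
  induction n with
  | zero => simp [lvp]
  | succ n ih => rw [lvp, ev_lv h, ih, pow_succ', mul_assoc]

theorem ev_lt (h : IsCS u v b) (i : ℕ) (y : NF) : ev u v (lt i y) = tt u v i * ev u v y := by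
  rcases i with _ | _ | _ | _ | _ | i <;>
    simp only [lt, tt, zero_add, Nat.reduceAdd, ev_lu h, ev_lv h, one_mul, pow_succ, pow_zero,
      mul_assoc]

theorem j_tt (h : IsCS u v b) (i : ℕ) : Commute ((u * v) ^ 2) (tt u v i) := by
  have cu := h.ju
  have cv := h.jv
  rcases i with _ | _ | _ | _ | _ | i <;> simp only [tt]
  · exact Commute.one_right _
  · exact cu
  · exact cv.mul_right cu
  · exact (cv.pow_right _).mul_right cu
  · exact (cv.pow_right _).mul_right cu
  · exact (cu.mul_right (cv.pow_right _)).mul_right cu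

theorem ev_mulN (h : IsCS u v b) (x y : NF) : ev u v (mulN x y) = ev u v x * ev u v y := by
  obtain ⟨i, q, a⟩ := x
  obtain ⟨i', q', a'⟩ := y
  have c : Commute (((u * v) ^ 2) ^ a) (tt u v i' * v ^ q') :=
    ((j_tt h i').mul_right (h.jv.pow_right q')).pow_left a
  rw [mulN, ev_lt h, ev_lvp h]
  simp only [ev, j_mod h, pow_add]
  calc _ = tt u v i * v ^ q * ((tt u v i' * v ^ q') * ((u * v) ^ 2) ^ a) * ((u * v) ^ 2) ^ a' := by
        simp only [mul_assoc]
    _ = _ := by rw [← c.eq]; simp only [mul_assoc]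

theorem ev_zero (q a : ℕ) : ev u v (0, q, a) = v ^ q * ((u * v) ^ 2) ^ a := by
  simp [ev, tt]

theorem ev_succ (p q a : ℕ) (hp : p < 4) :
    ev u v (p + 1, q, a) = v ^ p * u * v ^ q * ((u * v) ^ 2) ^ a := by
  interval_cases p <;> simp [ev, tt]

theorem ev_uinv (h : IsCS u v b) : ev u v (2, 1, 11) = u⁻¹ := by
  have := h.vuv
  rw [show (2, 1, 11) = ((1 + 1, 1, 11) : NF) from rfl, ev_succ 1 1 11 (by norm_num), pow_one,
    this, j_eleven h, h.ju.inv_right.eq, mul_inv_cancel_right]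

theorem ev_invN (h : IsCS u v b) (x : NF) : ev u v (invN x) = (ev u v x)⁻¹ := by
  have e : ∀ i, ev u v (tinv i) = (tt u v i)⁻¹ := by
    have v1 : v ^ 3 = v⁻¹ := h.v3
    have v2 : v ^ 2 = (v ^ 2)⁻¹ := by rw [eq_inv_iff_mul_eq_one, ← pow_add, h.v4]
    intro i
    rcases i with _ | _ | _ | _ | _ | i
    · simp [tinv, tt, ev]
    · exact ev_uinv h
    all_goals
      simp only [tinv, tt, zero_add, Nat.reduceAdd, ev_mulN h, ev_lv h, ev_uinv h, ev_zero, pow_zero, mul_one,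
        pow_one, mul_inv_rev, v1, inv_inv, mul_assoc]
    rw [← v2]
  obtain ⟨i, q, a⟩ := x
  have hv : v ^ (3 * q) = (v ^ q)⁻¹ := by
    rw [eq_inv_iff_mul_eq_one, ← pow_add, show 3 * q + q = 4 * q by ring, pow_mul, h.v4, one_pow]
  have hj : ((u * v) ^ 2) ^ (11 * a) = (((u * v) ^ 2) ^ a)⁻¹ := by
    rw [eq_inv_iff_mul_eq_one, ← pow_add, show 11 * a + a = 12 * a by ring, pow_mul, h.j12, one_pow]
  rw [invN, ev_mulN h, e, ev_zero, v_mod h, j_mod h, hv, hj, ev, mul_inv_rev, mul_inv_rev, ← mul_assoc]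
  congr 1
  exact ((h.jv.pow_left a).pow_right q).inv_inv.eq.symm

theorem evS_lk (h : IsCS u v b) (x : NF) (s : St) : evS u v b (lk x s) = ev u v x * evS u v b s := by
  simp only [evS, lk, ev_mulN h, mul_assoc]

theorem lbP_sound (h : IsCS u v b) {i q a : ℕ} {y : NF} {s : St} (hs : lbP i q a y = some s) :
    evS u v b s = b * (ev u v (i, q, a) * b * ev u v y) := by
  have v3 := h.v3
  have j11 := j_eleven h
  have cq : ∀ n : ℕ, v ^ n * b = b * v ^ n := fun n => (h.vbc.pow_left n).eq
  have cj : v ^ q * ((u * v) ^ 2) ^ a = ((u * v) ^ 2) ^ a * v ^ q := ((h.jv.pow_left a).pow_right q).eq.symm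
  have binv := h.binv
  have bjb := h.bjb
  have bjjb := h.bjjb
  have bub := h.bub
  have buJb := h.buJb
  have bujb := h.bujb
  have bujjb := h.bujjb
  unfold lbP at hs
  split_ifs at hs with h0 h1 h2 h3 h4 h5 h6 h7 h8
  · obtain rfl := Option.some.inj hs
    subst h0 h1
    have key : b * (ev u v (0, q, 0) * b * ev u v y) = b * b * (v ^ q * ev u v y) := by
      rw [ev_zero, pow_zero, mul_one, cq]; simp only [mul_assoc]
    rw [key, binv]
    simp only [evS, sg, ev_mulN h, ev_lvp h, ev_zero, pow_zero, pow_one, v3, one_mul, mul_assoc]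
  · obtain rfl := Option.some.inj hs
    subst h0 h2
    have key : b * (ev u v (0, q, 1) * b * ev u v y) = b * (u * v) ^ 2 * b * (v ^ q * ev u v y) := by
      rw [ev_zero, cj, pow_one, mul_assoc _ _ b, cq]; simp only [mul_assoc]
    rw [key, bjb]
    simp only [evS, sg, ev_lvp h, ev_zero, pow_one, j11, mul_one, mul_assoc]
  · obtain rfl := Option.some.inj hs
    subst h0 h3
    have key : b * (ev u v (0, q, 2) * b * ev u v y) =
        b * (u * v) ^ 2 * (u * v) ^ 2 * b * (v ^ q * ev u v y) := by
      rw [ev_zero, cj, mul_assoc _ _ b, cq, pow_succ _ 1, pow_one]; simp only [mul_assoc]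
    rw [key, bjjb]
    simp only [evS, sg, ev_mulN h, ev_lvp h, ev_zero, pow_one, j11, mul_assoc]
  all_goals
    obtain ⟨p, rfl⟩ : ∃ p, i = p + 1 := ⟨i - 1, by omega⟩
    have hp : p < 4 := by omega
    obtain rfl := Option.some.inj hs
    have key : b * (ev u v (p + 1, q, a) * b * ev u v y) =
        v ^ p * (b * (u * ((u * v) ^ 2) ^ a) * b) * (v ^ q * ev u v y) := by
      rw [ev_succ p q a hp]
      calc _ = (b * v ^ p) * u * (v ^ q * ((u * v) ^ 2) ^ a) * b * ev u v y := by simp only [mul_assoc]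
        _ = (v ^ p * b) * u * ((u * v) ^ 2) ^ a * (v ^ q * b) * ev u v y := by
            rw [cq, cj]; simp only [mul_assoc]
        _ = _ := by rw [cq q]; simp only [mul_assoc]
    rw [key]
  · subst h5
    rw [j11, buJb]
    simp only [evS, sg, ev_mulN h, ev_lvp h, ev_zero, v_mod h, pow_zero, mul_one, v3, mul_assoc]
    rw [show p + 1 + 2 = p + 3 from rfl, pow_add, v3, mul_assoc]
  · subst h6
    rw [pow_zero, mul_one, bub]
    simp only [evS, sg, ev_lu h, ev_lvp h, ev_succ p 0 0 hp, pow_zero, mul_one, mul_assoc]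
  · subst h7
    rw [pow_one, bujb]
    simp only [evS, sg, ev_mulN h, ev_lvp h, ev_zero, ev_uinv h, Nat.add_sub_cancel, pow_zero, mul_one,
      mul_assoc]
    rw [show (1, 1, 11) = ((0 + 1, 1, 11) : NF) from rfl, ev_succ 0 1 11 (by norm_num), j11]
    simp only [pow_zero, one_mul, pow_one, mul_assoc]
  · subst h8
    have e2 : ((u * v) ^ 2) ^ 2 = (u * v) ^ 2 * (u * v) ^ 2 := pow_two _
    rw [e2, ← mul_assoc u, bujjb]
    have e1 : ev u v (1, 0, 0) = u := by simp [ev, tt]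
    simp only [evS, sg, ev_mulN h, ev_lvp h, ev_zero, v_mod h, e1, j11, pow_one, pow_add, mul_assoc]

theorem lbQ_sound (h : IsCS u v b) {i q a : ℕ} {y : NF} {s : St} (hs : lbQ i q a y = some s) :
    evS u v b s = b * (ev u v (i, q, a) * (b * u⁻¹ * b) * ev u v y) := by
  have v3 := h.v3
  have j11 := j_eleven h
  have cq : ∀ n : ℕ, b * v ^ n = v ^ n * b := fun n => (h.vbc.pow_left n).eq.symm
  have bq := h.bq
  have buvq := h.buvq
  have bj := h.bj
  have qu := h.q_comm.1.eq
  have e1 : ev u v (1, 0, 1) = u * (u * v) ^ 2 := by simp [ev, tt]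
  have bjq : b * (u * v) ^ 2 * (b * u⁻¹ * b) = v * ((u * v) ^ 2)⁻¹ * u⁻¹ * b := by
    rw [bj]; group
  unfold lbQ at hs
  split_ifs at hs with h0 h1 h2 h3 h4 h5 h6 h7
  · obtain rfl := Option.some.inj hs
    subst h0 h1
    have key : b * (ev u v (0, q, 0) * (b * u⁻¹ * b) * ev u v y) =
        v ^ q * (b * (b * u⁻¹ * b)) * ev u v y := by
      rw [ev_zero, pow_zero, mul_one, ← mul_assoc, ← mul_assoc, cq]; simp only [mul_assoc]
    rw [key, bq]
    simp only [evS, sg, ev_mulN h, ev_uinv h, e1, ev_zero, pow_zero, pow_one, v3, mul_one, mul_assoc]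
  · obtain rfl := Option.some.inj hs
    subst h0 h2
    have key : b * (ev u v (0, q, 1) * (b * u⁻¹ * b) * ev u v y) =
        v ^ q * (b * (u * v) ^ 2 * (b * u⁻¹ * b)) * ev u v y := by
      rw [ev_zero, pow_one]; simp only [← mul_assoc]; rw [cq]
    rw [key, bjq]
    simp only [evS, sg, ev_mulN h, ev_uinv h, ev_zero, v_mod h, j11, pow_add, pow_one, mul_assoc]
  all_goals
    obtain ⟨p, rfl⟩ : ∃ p, i = p + 1 := ⟨i - 1, by omega⟩
    have hp : p < 4 := by omega
    obtain rfl := Option.some.inj hs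
    have key : b * (ev u v (p + 1, q, a) * (b * u⁻¹ * b) * ev u v y) =
        v ^ p * (b * (u * (v ^ q * ((u * v) ^ 2) ^ a)) * (b * u⁻¹ * b)) * ev u v y := by
      rw [ev_succ p q a hp]
      calc _ = (b * v ^ p) * u * (v ^ q * ((u * v) ^ 2) ^ a) * (b * u⁻¹ * b) * ev u v y := by
            simp only [mul_assoc]
        _ = _ := by rw [cq]; simp only [mul_assoc]
    rw [key]
  · obtain ⟨rfl, rfl⟩ := h4
    have e : b * (u * (v ^ 0 * ((u * v) ^ 2) ^ 0)) * (b * u⁻¹ * b) = b * (b * u⁻¹ * b) * u := by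
      rw [pow_zero, pow_zero, mul_one, mul_one, mul_assoc, ← qu]; simp only [mul_assoc]
    rw [e, bq]
    simp only [evS, sg, ev_mulN h, e1, ev_zero, Nat.add_sub_cancel, pow_zero, pow_one, v3, mul_one,
      mul_assoc, inv_mul_cancel_left]
  · obtain ⟨rfl, rfl⟩ := h5
    have e : b * (u * (v ^ 1 * ((u * v) ^ 2) ^ 11)) * (b * u⁻¹ * b) = v⁻¹ * (b * (b * u⁻¹ * b)) * u⁻¹ := by
      have : u * (v ^ 1 * ((u * v) ^ 2) ^ 11) = v⁻¹ * u⁻¹ := by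
        rw [j11, pow_one, pow_two]; group
      have c2 : u⁻¹ * (b * u⁻¹ * b) = (b * u⁻¹ * b) * u⁻¹ := h.q_comm.1.inv_right.eq.symm
      rw [this]
      calc _ = (b * v⁻¹) * (u⁻¹ * (b * u⁻¹ * b)) := by simp only [mul_assoc]
        _ = _ := by rw [c2, ← h.vbc.inv_left.eq]; simp only [mul_assoc]
    rw [e, bq]
    have u2 : u⁻¹ * u⁻¹ = u := by rw [← h.uu, mul_assoc, ← mul_assoc u u u, h.uu, inv_mul_cancel, mul_one]
    simp only [evS, sg, ev_mulN h, ev_lu h, e1, ev_zero, v_mod h, pow_zero, pow_one, v3, mul_one, mul_assoc]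
    rw [show p + 1 + 2 = p + 3 from rfl, pow_add, v3, ← mul_assoc u⁻¹ u⁻¹, u2]
    simp only [mul_assoc]
  · obtain ⟨rfl, rfl⟩ := h6
    rw [pow_one, pow_zero, mul_one, buvq]
    simp only [evS, sg, ev_mulN h, ev_uinv h, ev_zero, Nat.add_sub_cancel, j11, mul_assoc]
  · obtain ⟨rfl, rfl⟩ := h7
    have e : b * (u * (v ^ 0 * ((u * v) ^ 2) ^ 1)) * (b * u⁻¹ * b) =
        b * (u * v) ^ 2 * (b * u⁻¹ * b) * u := by
      rw [pow_zero, pow_one, one_mul, ← h.ju.eq, mul_assoc _ _ u, qu]; simp only [mul_assoc]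
    rw [e, bjq]
    simp only [evS, sg, ev_mulN h, ev_lu h, ev_uinv h, ev_zero, v_mod h, j11, pow_add, pow_one, mul_assoc]

theorem lb_sound (h : IsCS u v b) {s t : St} (hs : lb s = some t) :
    evS u v b t = b * evS u v b s := by
  obtain ⟨n, ⟨i, q, a⟩, y⟩ := s
  rcases n with _ | _ | n
  · obtain rfl := Option.some.inj hs
    simp only [evS, sg, ev_mulN h, mul_one]
    simp [ev, tt, mul_assoc]
  · exact lbP_sound h hs
  · exact lbQ_sound h hs

theorem lsg_sound (h : IsCS u v b) {n : ℕ} {s t : St} (hs : lsg n s = some t) :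
    evS u v b t = sg u b n * evS u v b s := by
  rcases n with _ | _ | n
  · obtain rfl := Option.some.inj hs
    simp [sg]
  · exact lb_sound h hs
  · obtain ⟨r, h1, h2⟩ := Option.bind_eq_some_iff.1 hs
    rw [lb_sound h h2, evS_lk h, lb_sound h h1, ev_uinv h]
    simp only [sg, mul_assoc]

theorem mulS_sound (h : IsCS u v b) {s t r : St} (hs : mulS s t = some r) :
    evS u v b r = evS u v b s * evS u v b t := by
  obtain ⟨r', h1, rfl⟩ := Option.map_eq_some_iff.1 hs
  rw [evS_lk h, lsg_sound h h1, evS_lk h]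
  simp only [evS, mul_assoc]

end Engine

/-! ### The ring `ℤ[ζ₁₂]` -/

section Cyclotomic

/-- Elements `x₀ + x₁ζ + x₂ζ² + x₃ζ³` of `ℤ[ζ]`, `ζ = e^{iπ/6}`, for computation. -/
@[ext] structure Cy where
  x0 : ℤ
  x1 : ℤ
  x2 : ℤ
  x3 : ℤ
deriving DecidableEq

namespace Cy

def add (x y : Cy) : Cy := ⟨x.x0 + y.x0, x.x1 + y.x1, x.x2 + y.x2, x.x3 + y.x3⟩

/-- Multiplication, using `ζ⁴ = ζ² - 1`. -/
def mul (x y : Cy) : Cy :=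
  ⟨x.x0 * y.x0 - (x.x1 * y.x3 + x.x2 * y.x2 + x.x3 * y.x1) - x.x3 * y.x3,
   x.x0 * y.x1 + x.x1 * y.x0 - (x.x2 * y.x3 + x.x3 * y.x2),
   x.x0 * y.x2 + x.x1 * y.x1 + x.x2 * y.x0 + (x.x1 * y.x3 + x.x2 * y.x2 + x.x3 * y.x1),
   x.x0 * y.x3 + x.x1 * y.x2 + x.x2 * y.x1 + x.x3 * y.x0 + (x.x2 * y.x3 + x.x3 * y.x2)⟩

/-- Complex conjugation. -/
def conj (x : Cy) : Cy := ⟨x.x0 + x.x2, x.x1, -x.x2, -x.x1 - x.x3⟩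

end Cy

/-- The primitive twelfth root of unity `ζ = e^{iπ/6}`. -/
noncomputable def zt : ℂ := ⟨√3 / 2, 1 / 2⟩

theorem s3 : √3 * √3 = (3 : ℝ) := Real.mul_self_sqrt (by norm_num)

theorem zt_sq : zt ^ 2 = ⟨1 / 2, √3 / 2⟩ := by
  have := s3
  rw [pow_two]
  apply Complex.ext <;> simp [zt] <;> linarith

theorem zt_cube : zt ^ 3 = Complex.I := by
  have := s3
  rw [pow_succ, zt_sq]
  apply Complex.ext <;> simp [zt] <;> linarith

theorem zt_four : zt ^ 4 = zt ^ 2 - 1 := by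
  rw [pow_succ, zt_cube, zt_sq]
  apply Complex.ext <;> simp [zt]; norm_num

theorem zt_conj : (starRingEnd ℂ) zt = zt - zt ^ 3 := by
  rw [zt_cube]
  apply Complex.ext <;> simp [zt]; norm_num

theorem zt_norm : ‖zt‖ = 1 := by
  have h : Complex.normSq zt = 1 := by
    have := s3
    simp only [Complex.normSq_apply, zt]; linarith
  rw [Complex.norm_def, h, Real.sqrt_one]

/-- The complex number represented by an element of `Cy`. -/
noncomputable def toC (x : Cy) : ℂ := x.x0 + x.x1 * zt + x.x2 * zt ^ 2 + x.x3 * zt ^ 3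

theorem toC_add (x y : Cy) : toC (x.add y) = toC x + toC y := by
  simp only [toC, Cy.add]; push_cast; ring

theorem toC_mul (x y : Cy) : toC (x.mul y) = toC x * toC y := by
  have h := zt_four
  simp only [toC, Cy.mul]; push_cast
  linear_combination (-(x.x1 * y.x3 + x.x2 * y.x2 + x.x3 * y.x1 : ℂ)
    - (x.x2 * y.x3 + x.x3 * y.x2 : ℂ) * zt - x.x3 * y.x3 * (zt ^ 2 + 1)) * h

theorem toC_conj (x : Cy) : toC x.conj = (starRingEnd ℂ) (toC x) := by
  have h := zt_four
  simp only [toC, Cy.conj, map_add, map_mul, map_pow, map_intCast, zt_conj]; push_cast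
  have e2 : (zt - zt ^ 3) ^ 2 = 1 - zt ^ 2 := by linear_combination (zt ^ 2 - 1) * h
  have e3 : (zt - zt ^ 3) ^ 3 = - zt ^ 3 := by
    rw [pow_succ, e2]; linear_combination (zt) * h
  rw [e2, e3]; ring

theorem toC_re (x : Cy) : (toC x).re = x.x0 + x.x1 * √3 / 2 + x.x2 / 2 := by
  simp only [toC, zt_cube, zt_sq]; simp [zt]; ring

/-- The value `2 Re x`, in the form `m + n√3`. -/
def re2 (x : Cy) : ℤ × ℤ := (2 * x.x0 + x.x2, x.x1)

theorem re2_eq (x : Cy) : 2 * (toC x).re = (re2 x).1 + (re2 x).2 * √3 := by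
  rw [toC_re]; simp only [re2]; push_cast; ring

theorem two_normSq (x : Cy) :
    2 * Complex.normSq (toC x) = (re2 (x.mul x.conj)).1 + (re2 (x.mul x.conj)).2 * √3 := by
  rw [← re2_eq, toC_mul, toC_conj, Complex.mul_conj, Complex.ofReal_re]

/-- A sufficient test for `m + n√3 > 0`. -/
def posT (m n : ℤ) : Bool := (0 < m && 3 * n * n < m * m) || (0 < n && m * m < 3 * n * n)

theorem posT_sound {m n : ℤ} (h : posT m n = true) : 0 < (m : ℝ) + n * √3 := by
  have h3 := s3
  have h0 : 0 < √3 := by positivity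
  simp only [posT, Bool.or_eq_true, Bool.and_eq_true, decide_eq_true_eq] at h
  rcases h with ⟨h1, h2⟩ | ⟨h1, h2⟩
  · have h1 : (0 : ℝ) < m := by exact_mod_cast h1
    have h2 : (3 * n * n : ℝ) < m * m := by exact_mod_cast h2
    have : |n * √3| < m := by
      apply abs_lt_of_sq_lt_sq _ h1.le
      nlinarith
    linarith [(abs_lt.1 this).1]
  · have h1 : (0 : ℝ) < n := by exact_mod_cast h1
    have h2 : (m * m : ℝ) < 3 * n * n := by exact_mod_cast h2
    have : |(m : ℝ)| < n * √3 := by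
      apply abs_lt_of_sq_lt_sq _ (by positivity)
      nlinarith
    linarith [(abs_lt.1 this).1]

end Cyclotomic

/-! ### The projective representation -/

section Representation
open Matrix

/-- Complex `3 × 3` matrices. -/
abbrev Mat : Type := Matrix (Fin 3) (Fin 3) ℂ

/-- `3 × 3` matrices over `ℤ[ζ]`, for computation. -/
abbrev M3 : Type := Fin 3 → Fin 3 → Cy

/-- The matrix product. -/
def mulM (A B : M3) : M3 := fun i k =>
  (((A i 0).mul (B 0 k)).add ((A i 1).mul (B 1 k))).add ((A i 2).mul (B 2 k))

/-- The conjugate transpose. -/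
def ctM (A : M3) : M3 := fun i k => (A k i).conj

/-- The complex matrix represented by an element of `M3`. -/
noncomputable def toM (A : M3) : Mat := Matrix.of fun i k => toC (A i k)

theorem toM_mul (A B : M3) : toM (mulM A B) = toM A * toM B := by
  ext i k
  simp [toM, mulM, Matrix.mul_apply, Fin.sum_univ_three, toC_add, toC_mul]

theorem toM_ct (A : M3) : toM (ctM A) = (toM A)ᴴ := by
  ext i k
  simp [toM, ctM, toC_conj]

/-- The scalar matrix `x`. -/
def scM (x : Cy) : M3 := fun i k => if i = k then x else ⟨0, 0, 0, 0⟩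

theorem toM_sc (x : Cy) : toM (scM x) = toC x • (1 : Mat) := by
  ext i k
  by_cases h : i = k <;> simp [toM, scM, h, toC]

/-- The matrix with the given entries, row by row. -/
def mkM (a b c d e f g h i : Cy) : M3 := ![![a, b, c], ![d, e, f], ![g, h, i]]

/-- Twice the matrix of `u`. -/
def mU : M3 := mkM ⟨0, 1, 1, -1⟩ ⟨0, 1, 1, -1⟩ ⟨0, 0, 0, 0⟩ ⟨0, 1, -1, -1⟩ ⟨0, -1, 1, 1⟩ ⟨0, 0, 0, 0⟩
  ⟨0, 0, 0, 0⟩ ⟨0, 0, 0, 0⟩ ⟨2, 0, 0, 0⟩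

/-- Twice the matrix of `u⁻¹`. -/
def mUi : M3 := mkM ⟨1, 1, -1, 0⟩ ⟨-1, 1, 1, 0⟩ ⟨0, 0, 0, 0⟩ ⟨1, 1, -1, 0⟩ ⟨1, -1, -1, 0⟩ ⟨0, 0, 0, 0⟩
  ⟨0, 0, 0, 0⟩ ⟨0, 0, 0, 0⟩ ⟨2, 0, 0, 0⟩

/-- Twice the matrix of `v`. -/
def mV : M3 := mkM ⟨2, 0, 0, 0⟩ ⟨0, 0, 0, 0⟩ ⟨0, 0, 0, 0⟩ ⟨0, 0, 0, 0⟩ ⟨0, 0, 0, 2⟩ ⟨0, 0, 0, 0⟩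
  ⟨0, 0, 0, 0⟩ ⟨0, 0, 0, 0⟩ ⟨2, 0, 0, 0⟩

/-- Twice the matrix of `v⁻¹`. -/
def mVi : M3 := mkM ⟨2, 0, 0, 0⟩ ⟨0, 0, 0, 0⟩ ⟨0, 0, 0, 0⟩ ⟨0, 0, 0, 0⟩ ⟨0, 0, 0, -2⟩ ⟨0, 0, 0, 0⟩
  ⟨0, 0, 0, 0⟩ ⟨0, 0, 0, 0⟩ ⟨2, 0, 0, 0⟩

/-- Twice the matrix of `b`. -/
def mB : M3 := mkM ⟨-2, -2, 2, 2⟩ ⟨0, 0, 0, 0⟩ ⟨0, 2, 0, -2⟩ ⟨0, 0, 0, 0⟩ ⟨2, 0, 0, 0⟩ ⟨0, 0, 0, 0⟩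
  ⟨-4, -2, 2, 2⟩ ⟨0, 0, 0, 0⟩ ⟨2, 2, 0, -2⟩

/-- Twice the matrix of `b⁻¹`. -/
def mBi : M3 := mkM ⟨0, -2, -2, 0⟩ ⟨0, 0, 0, 0⟩ ⟨0, 2, 0, 0⟩ ⟨0, 0, 0, 0⟩ ⟨2, 0, 0, 0⟩ ⟨0, 0, 0, 0⟩
  ⟨-2, -2, -2, 0⟩ ⟨0, 0, 0, 0⟩ ⟨2, 2, 0, 0⟩

/-- The diagonal Hermitian form `α|z₀|² + α|z₁|² - |z₂|²`, `α = 1 + √3`. -/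
def mD : M3 := mkM ⟨1, 2, 0, -1⟩ ⟨0, 0, 0, 0⟩ ⟨0, 0, 0, 0⟩ ⟨0, 0, 0, 0⟩ ⟨1, 2, 0, -1⟩ ⟨0, 0, 0, 0⟩
  ⟨0, 0, 0, 0⟩ ⟨0, 0, 0, 0⟩ ⟨-1, 0, 0, 0⟩

theorem half_mul {A B : M3} {c : Cy} (h : mulM A B = scM c) (hc : c = ⟨4, 0, 0, 0⟩) :
    ((1 / 2 : ℂ) • toM A) * ((1 / 2 : ℂ) • toM B) = 1 := by
  subst hc
  rw [smul_mul_smul_comm, ← toM_mul, h, toM_sc, smul_smul]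
  norm_num [toC]

/-- The invertible matrix with twice its entries and twice those of its inverse given. -/
noncomputable def mkU (A B : M3) (h1 : mulM A B = scM ⟨4, 0, 0, 0⟩) (h2 : mulM B A = scM ⟨4, 0, 0, 0⟩) :
    Matˣ := ⟨(1 / 2 : ℂ) • toM A, (1 / 2 : ℂ) • toM B, half_mul h1 rfl, half_mul h2 rfl⟩

/-- The matrix of `u`. -/
noncomputable def rU : Matˣ := mkU mU mUi (by decide +kernel) (by decide +kernel)
/-- The matrix of `v`. -/
noncomputable def rV : Matˣ := mkU mV mVi (by decide +kernel) (by decide +kernel)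
/-- The matrix of `b`. -/
noncomputable def rB : Matˣ := mkU mB mBi (by decide +kernel) (by decide +kernel)

/-- The matrices of the three generators. -/
noncomputable def rgen : CSgen → Matˣ
  | .u => rU
  | .v => rV
  | .b => rB

/-- The representation of the free group by matrices preserving the form `mD`. -/
noncomputable def rho : FreeGroup CSgen →* Matˣ := FreeGroup.lift rgen

/-- Invertible matrices preserving the form `mD`. -/
noncomputable def UH : Subgroup Matˣ where
  carrier := {M | (M : Mat)ᴴ * toM mD * M = toM mD}
  one_mem' := by simp
  mul_mem' := by
    intro M N hM hN
    have hM : (M : Mat)ᴴ * toM mD * M = toM mD := hM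
    have hN : (N : Mat)ᴴ * toM mD * N = toM mD := hN
    change ((M * N : Matˣ) : Mat)ᴴ * toM mD * ((M * N : Matˣ) : Mat) = toM mD
    rw [Units.val_mul, conjTranspose_mul]
    calc _ = (N : Mat)ᴴ * ((M : Mat)ᴴ * toM mD * M) * N := by simp only [Matrix.mul_assoc]
      _ = _ := by rw [hM, hN]
  inv_mem' := by
    intro M hM
    have hM : (M : Mat)ᴴ * toM mD * M = toM mD := hM
    change ((M⁻¹ : Matˣ) : Mat)ᴴ * toM mD * ((M⁻¹ : Matˣ) : Mat) = toM mD
    have e1 : (M : Mat) * ((M⁻¹ : Matˣ) : Mat) = 1 := M.mul_inv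
    have e2 : ((M⁻¹ : Matˣ) : Mat)ᴴ * (M : Mat)ᴴ = 1 := by rw [← conjTranspose_mul, e1, conjTranspose_one]
    calc _ = ((M⁻¹ : Matˣ) : Mat)ᴴ * ((M : Mat)ᴴ * toM mD * M) * ((M⁻¹ : Matˣ) : Mat) := by rw [hM]
      _ = (((M⁻¹ : Matˣ) : Mat)ᴴ * (M : Mat)ᴴ) * toM mD * ((M : Mat) * ((M⁻¹ : Matˣ) : Mat)) := by
          simp only [Matrix.mul_assoc]
      _ = _ := by rw [e1, e2, Matrix.one_mul, Matrix.mul_one]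

theorem mkU_mem {A B : M3} (h1 h2) (h : mulM (mulM (ctM A) mD) A = mulM (scM ⟨4, 0, 0, 0⟩) mD) :
    mkU A B h1 h2 ∈ UH := by
  change ((1 / 2 : ℂ) • toM A)ᴴ * toM mD * ((1 / 2 : ℂ) • toM A) = toM mD
  have h := congrArg toM h
  rw [toM_mul, toM_mul, toM_mul, toM_ct, toM_sc] at h
  rw [conjTranspose_smul, smul_mul_assoc, smul_mul_assoc, mul_smul_comm, h, smul_mul_assoc, Matrix.one_mul,
    smul_smul, smul_smul]
  norm_num [toC]

theorem rho_mem (w : FreeGroup CSgen) : rho w ∈ UH := by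
  have : (rho : FreeGroup CSgen →* Matˣ).range ≤ UH := by
    apply FreeGroup.range_lift_le
    rintro _ ⟨g, rfl⟩
    cases g
    · exact mkU_mem (A := mU) (B := mUi) (by decide +kernel) (by decide +kernel)
        (by decide +kernel)
    · exact mkU_mem (A := mV) (B := mVi) (by decide +kernel) (by decide +kernel)
        (by decide +kernel)
    · exact mkU_mem (A := mB) (B := mBi) (by decide +kernel) (by decide +kernel)
        (by decide +kernel)
  exact this ⟨w, rfl⟩

/-- Scalar matrices of modulus one. -/
noncomputable def scG : Subgroup Matˣ where
  carrier := {M | ∃ c : ℂ, ‖c‖ = 1 ∧ (M : Mat) = c • (1 : Mat)}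
  one_mem' := ⟨1, by simp, by simp⟩
  mul_mem' := by
    rintro M N ⟨c, hc, h⟩ ⟨d, hd, h'⟩
    exact ⟨c * d, by simp [hc, hd], by rw [Units.val_mul, h, h', smul_mul_smul_comm, one_mul]⟩
  inv_mem' := by
    rintro M ⟨c, hc, h⟩
    refine ⟨c⁻¹, by simp [hc], ?_⟩
    have c0 : c ≠ 0 := by rintro rfl; simp at hc
    have e : (M : Mat) * (c⁻¹ • (1 : Mat)) = 1 := by
      rw [h, smul_mul_smul_comm, one_mul, mul_inv_cancel₀ c0, one_smul]
    exact (Units.inv_eq_of_mul_eq_one_right e)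

instance : scG.Normal where
  conj_mem := by
    rintro M ⟨c, hc, h⟩ N
    refine ⟨c, hc, ?_⟩
    rw [Units.val_mul, Units.val_mul, h, mul_smul_comm, mul_one, smul_mul_assoc, Units.mul_inv]

/-- `2ⁿM` has entries in `ℤ[ζ]`, given by `A`. -/
def Rp (M : Matˣ) (n : ℕ) (A : M3) : Prop := (M : Mat) = ((1 / 2 : ℂ) ^ n) • toM A

theorem Rp.mul {M N : Matˣ} {n m : ℕ} {A B : M3} (h : Rp M n A) (h' : Rp N m B) :
    Rp (M * N) (n + m) (mulM A B) := by
  unfold Rp at *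
  rw [Units.val_mul, h, h', smul_mul_smul_comm, toM_mul, pow_add]

theorem Rp.reduce {M : Matˣ} {n : ℕ} (k : ℕ) {A B : M3} (h : Rp M (n + k) A)
    (h' : A = mulM (scM ⟨2 ^ k, 0, 0, 0⟩) B) : Rp M n B := by
  unfold Rp at *
  rw [h, h', toM_mul, toM_sc, smul_mul_assoc, one_mul, smul_smul, pow_add]
  congr 1
  simp [toC]

theorem Rp.eq {M N : Matˣ} {n : ℕ} {A B : M3} (h : Rp M n A) (h' : Rp N n B) (hAB : A = B) : M = N :=
  Units.ext (by rw [h, h', hAB])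

theorem Rp.scG {M : Matˣ} {n : ℕ} {A : M3} (h : Rp M n A) (c : Cy) (hA : A = scM c)
    (hc : ‖toC c‖ = 2 ^ n) : M ∈ scG := by
  refine ⟨(1 / 2) ^ n * toC c, ?_, ?_⟩
  · rw [norm_mul, hc]; simp
  · rw [h, hA, toM_sc, smul_smul]

theorem rpU : Rp rU 1 mU := by simp [Rp, rU, mkU]
theorem rpUi : Rp rU⁻¹ 1 mUi := by rw [Rp, pow_one]; rfl
theorem rpV : Rp rV 1 mV := by simp [Rp, rV, mkU]
theorem rpB : Rp rB 1 mB := by simp [Rp, rB, mkU]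

@[simp] theorem rho_u : rho (FreeGroup.of CSgen.u) = rU := FreeGroup.lift_apply_of
@[simp] theorem rho_v : rho (FreeGroup.of CSgen.v) = rV := FreeGroup.lift_apply_of
@[simp] theorem rho_b : rho (FreeGroup.of CSgen.b) = rB := FreeGroup.lift_apply_of

theorem three_mul (M : Matˣ) : M ^ 3 = M * M * M := by rw [pow_succ, pow_two]

/-- Twice the matrix of `buv`. -/
def mBUV : M3 := mkM ⟨-2, -1, 1, 1⟩ ⟨0, -1, -1, -1⟩ ⟨0, 2, 0, -2⟩ ⟨0, 1, -1, -1⟩ ⟨0, -1, -1, 1⟩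
  ⟨0, 0, 0, 0⟩ ⟨-2, -2, 0, 2⟩ ⟨0, 0, -2, -2⟩ ⟨2, 2, 0, -2⟩

/-- Twice the matrix of `buvu`. -/
def mBUVU : M3 := mkM ⟨-2, -2, 0, 2⟩ ⟨0, 0, 0, 0⟩ ⟨0, 2, 0, -2⟩ ⟨0, 0, 0, 0⟩ ⟨2, 0, -2, 0⟩
  ⟨0, 0, 0, 0⟩ ⟨-2, -4, 0, 2⟩ ⟨0, 0, 0, 0⟩ ⟨2, 2, 0, -2⟩

/-- The relators act by scalars of modulus one, so the group acts projectively. The relators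
`(buv)³` and `(buvu)²v` act by `ζ⁻¹`; the others act trivially. -/
theorem rho_rels : csRels ⊆ (scG.comap rho : Set (FreeGroup CSgen)) := by
  have hbuv : Rp (rB * rU * rV) 1 mBUV := ((rpB.mul rpU).mul rpV).reduce 2 (by decide +kernel)
  have hbuvu : Rp (rB * rU * rV * rU) 1 mBUVU := (hbuv.mul rpU).reduce 1 (by decide +kernel)
  have nz : ‖toC ⟨0, 1, 0, -1⟩‖ = 1 := by
    have : toC ⟨0, 1, 0, -1⟩ = (starRingEnd ℂ) zt := by rw [zt_conj]; simp [toC]; ring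
    rw [this, RCLike.norm_conj, zt_norm]
  have nz8 : ‖toC ⟨0, 8, 0, -8⟩‖ = 2 ^ 3 := by
    have : toC ⟨0, 8, 0, -8⟩ = 8 * toC ⟨0, 1, 0, -1⟩ := by simp [toC]; ring
    rw [this, norm_mul, nz]; norm_num
  have n2 : ∀ n : ℕ, ‖toC ⟨2 ^ n, 0, 0, 0⟩‖ = 2 ^ n := by intro n; simp [toC]
  intro w hw
  change rho w ∈ scG
  simp only [csRels, Set.mem_insert_iff, Set.mem_singleton_iff] at hw
  rcases hw with rfl | rfl | rfl | rfl | rfl | rfl | rfl <;>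
    simp only [map_mul, map_pow, map_inv, rho_u, rho_v, rho_b]
  · rw [three_mul]
    exact ((rpU.mul rpU).mul rpU).scG _ (by decide +kernel) (n2 3)
  · rw [pow_succ, three_mul]
    exact (((rpV.mul rpV).mul rpV).mul rpV).scG _ (by decide +kernel) (n2 4)
  · rw [three_mul]
    exact ((rpB.mul rpB).mul rpB).scG _ (by decide +kernel) (n2 3)
  · have : (rU * rV) ^ 2 = (rV * rU) ^ 2 := by
      rw [pow_two, pow_two]
      exact ((rpU.mul rpV).mul (rpU.mul rpV)).eq ((rpV.mul rpU).mul (rpV.mul rpU)) (by decide +kernel)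
    rw [this, mul_inv_cancel]
    exact scG.one_mem
  · have : rV * rB = rB * rV := (rpV.mul rpB).eq (rpB.mul rpV) (by decide +kernel)
    rw [this, mul_inv_cancel]
    exact scG.one_mem
  · rw [three_mul]
    exact ((hbuv.mul hbuv).mul hbuv).scG ⟨0, 8, 0, -8⟩ (by decide +kernel) nz8
  · rw [pow_two]
    exact ((hbuvu.mul hbuvu).mul rpV).scG ⟨0, 8, 0, -8⟩ (by decide +kernel) nz8

/-- The quotient map from the free group. -/
def pr : FreeGroup CSgen →* CS := PresentedGroup.mk csRels

/-- Words representing the same group element have proportional matrices. -/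
theorem rho_proj {w w' : FreeGroup CSgen} (h : pr w = pr w') :
    ∃ c : ℂ, ‖c‖ = 1 ∧ (rho w : Mat) = c • (rho w' : Mat) := by
  have h1 : w⁻¹ * w' ∈ Subgroup.normalClosure csRels := QuotientGroup.eq.1 h
  have h2 := Subgroup.normalClosure_le_normal (N := scG.comap rho) rho_rels h1
  obtain ⟨c, hc, e⟩ := scG.inv_mem (show rho (w⁻¹ * w') ∈ scG from h2)
  refine ⟨c, hc, ?_⟩
  have : rho w = rho w' * (rho (w⁻¹ * w'))⁻¹ := by simp
  rw [this, Units.val_mul, e, mul_smul_comm, mul_one]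

end Representation

/-! ### The invariant Hermitian form -/

section Form
open Matrix Complex

/-- The weight `α = 1 + √3` of the form `α|z₀|² + α|z₁|² - |z₂|²`. -/
noncomputable def al : ℝ := 1 + √3

theorem al_pos : 0 < al := by unfold al; positivity

theorem al_bounds : 2.73205 < al ∧ al < 2.73206 := by
  unfold al
  constructor
  · have : (1.73205 : ℝ) < √3 := Real.lt_sqrt_of_sq_lt (by norm_num)
    linarith
  · have : √3 < (1.73206 : ℝ) := (Real.sqrt_lt' (by norm_num)).2 (by norm_num)
    linarith

theorem toC_al : toC ⟨1, 2, 0, -1⟩ = (al : ℂ) := by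
  apply Complex.ext
  · rw [toC_re]; simp [al]
  · simp only [toC, zt_cube, zt_sq]; simp [zt]

/-- The Hermitian form, conjugate-linear in the first variable. -/
noncomputable def hB (x y : Fin 3 → ℂ) : ℂ := star x ⬝ᵥ (toM mD *ᵥ y)

theorem hB_apply (x y : Fin 3 → ℂ) : hB x y =
    al * (starRingEnd ℂ (x 0) * y 0 + starRingEnd ℂ (x 1) * y 1) - starRingEnd ℂ (x 2) * y 2 := by
  have h0 : toC ⟨0, 0, 0, 0⟩ = 0 := by simp [toC]
  have h1 : toC ⟨-1, 0, 0, 0⟩ = -1 := by simp [toC]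
  simp [hB, dotProduct, mulVec, Fin.sum_univ_three, toM, mD, mkM, toC_al, h0, h1]
  ring

/-- The negative `|z₂|² - α|z₀|² - α|z₁|²` of the form. -/
noncomputable def hN (z : Fin 3 → ℂ) : ℝ := normSq (z 2) - al * (normSq (z 0) + normSq (z 1))

theorem hB_self (z : Fin 3 → ℂ) : hB z z = -(hN z : ℂ) := by
  rw [hB_apply, hN]
  push_cast
  simp only [Complex.normSq_eq_conj_mul_self]
  ring

/-- The action of words on vectors. -/
noncomputable def act (w : FreeGroup CSgen) (z : Fin 3 → ℂ) : Fin 3 → ℂ := (rho w : Mat) *ᵥ z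

theorem act_mul (w w' : FreeGroup CSgen) (z : Fin 3 → ℂ) : act (w * w') z = act w (act w' z) := by
  simp [act]

theorem act_one (z : Fin 3 → ℂ) : act 1 z = z := by simp [act]

theorem act_inv_act (w : FreeGroup CSgen) (z : Fin 3 → ℂ) : act w⁻¹ (act w z) = z := by
  rw [← act_mul, inv_mul_cancel, act_one]

theorem act_act_inv (w : FreeGroup CSgen) (z : Fin 3 → ℂ) : act w (act w⁻¹ z) = z := by
  rw [← act_mul, mul_inv_cancel, act_one]

theorem act_smul (w : FreeGroup CSgen) (c : ℂ) (z : Fin 3 → ℂ) : act w (c • z) = c • act w z := by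
  simp [act, mulVec_smul]

theorem act_proj {w w' : FreeGroup CSgen} (h : pr w = pr w') :
    ∃ c : ℂ, ‖c‖ = 1 ∧ ∀ z, act w z = c • act w' z := by
  obtain ⟨c, hc, e⟩ := rho_proj h
  exact ⟨c, hc, fun z => by rw [act, e, smul_mulVec]; rfl⟩

theorem hB_act (w : FreeGroup CSgen) (x y : Fin 3 → ℂ) : hB (act w x) (act w y) = hB x y := by
  have h : (rho w : Mat)ᴴ * toM mD * (rho w : Mat) = toM mD := rho_mem w
  calc hB (act w x) (act w y) = star x ⬝ᵥ (((rho w : Mat)ᴴ * toM mD * (rho w : Mat)) *ᵥ y) := by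
        simp only [hB, act, star_mulVec, ← dotProduct_mulVec, mulVec_mulVec, Matrix.mul_assoc]
    _ = _ := by rw [h]; rfl

theorem hN_act (w : FreeGroup CSgen) (z : Fin 3 → ℂ) : hN (act w z) = hN z := by
  have := hB_act w z z
  rw [hB_self, hB_self, neg_inj] at this
  exact_mod_cast this

theorem hN_smul (c : ℂ) (z : Fin 3 → ℂ) : hN (c • z) = normSq c * hN z := by
  simp [hN]; ring

/-- The function `N_w(z) = |(ρ(w)⁻¹z)₂|²`. Relative to `hN z` it measures the distance from the
point `z` of the ball to the translate by `w` of its centre. -/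
noncomputable def Nn (w : FreeGroup CSgen) (z : Fin 3 → ℂ) : ℝ := normSq (act w⁻¹ z 2)

theorem Nn_one (z : Fin 3 → ℂ) : Nn 1 z = normSq (z 2) := by simp [Nn, act_one]

theorem Nn_act (g w : FreeGroup CSgen) (z : Fin 3 → ℂ) : Nn (g * w) (act g z) = Nn w z := by
  rw [Nn, _root_.mul_inv_rev, act_mul, act_inv_act, Nn]

theorem Nn_smul (w : FreeGroup CSgen) (c : ℂ) (z : Fin 3 → ℂ) : Nn w (c • z) = normSq c * Nn w z := by
  simp [Nn, act_smul]

theorem Nn_congr {w w' : FreeGroup CSgen} (h : pr w = pr w') (z : Fin 3 → ℂ) : Nn w z = Nn w' z := by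
  have h' : pr w⁻¹ = pr w'⁻¹ := by rw [map_inv, map_inv, h]
  obtain ⟨c, hc, e⟩ := act_proj h'
  rw [Nn, e, Nn]
  simp [normSq_eq_norm_sq, hc]

/-- The centre of the ball. -/
def e2 : Fin 3 → ℂ := ![0, 0, 1]

theorem hN_e2 : hN e2 = 1 := by simp [hN, e2]

theorem hB_e2 (z : Fin 3 → ℂ) : hB e2 z = -z 2 := by simp [hB_apply, e2]

theorem act_e2 (w : FreeGroup CSgen) : act w e2 2 = (rho w : Mat) 2 2 := by
  simp [act, e2, mulVec, dotProduct, Fin.sum_univ_three]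

/-- The Cauchy–Schwarz inequality in `ℂ²`. -/
theorem cs2 (a b c d : ℂ) :
    normSq (a * b + c * d) ≤ (normSq a + normSq c) * (normSq b + normSq d) := by
  have h : 0 ≤ normSq (a * starRingEnd ℂ d - c * starRingEnd ℂ b) := normSq_nonneg _
  simp only [normSq_apply, mul_re, mul_im, add_re, add_im, sub_re, sub_im, conj_re, conj_im] at *
  linarith

/-- The inequality `|p - q|² ≤ (1 + ε)|p|² + (1 + ε⁻¹)|q|²` with `ε = 7/16`. -/
theorem young (p q : ℂ) : normSq (p - q) ≤ 23 / 16 * normSq p + 23 / 7 * normSq q := by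
  simp only [normSq_apply, sub_re, sub_im]
  nlinarith [sq_nonneg (7 * p.re + 16 * q.re), sq_nonneg (7 * p.im + 16 * q.im)]

theorem hN_act_e2 (w : FreeGroup CSgen) : normSq ((rho w : Mat) 2 2) =
    1 + al * (normSq (act w e2 0) + normSq (act w e2 1)) := by
  have := hN_act w e2
  rw [hN_e2, hN, act_e2] at this
  linarith

/-- If a point is close to two translates of the centre, these are close to each other. -/
theorem triangle {g : FreeGroup CSgen} {z : Fin 3 → ℂ} (hz : 0 < hN z)
    (h1 : normSq (z 2) < 2.1 * hN z) (h2 : Nn g z < 2.1 * hN z) :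
    normSq ((rho g : Mat) 2 2) < 11 := by
  set x := act g e2 with hx
  have hX := hN_act_e2 g
  have e : act g⁻¹ z 2 = - hB x z := by
    have := hB_act g e2 (act g⁻¹ z)
    rw [act_act_inv, hB_e2] at this
    rw [this, neg_neg]
  have hx2 : x 2 = (rho g : Mat) 2 2 := act_e2 g
  rw [← hx] at hX
  rw [Nn, e, normSq_neg, hB_apply] at h2
  set P : ℂ := al * (starRingEnd ℂ (x 0) * z 0 + starRingEnd ℂ (x 1) * z 1) with hP
  set Q : ℂ := starRingEnd ℂ (x 2) * z 2 with hQ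
  have y := young P (P - Q)
  rw [sub_sub_cancel] at y
  have hQ' : normSq Q = normSq ((rho g : Mat) 2 2) * normSq (z 2) := by
    rw [hQ, normSq_mul, normSq_conj, hx2]
  have hP' : normSq P ≤ (al * (normSq (x 0) + normSq (x 1))) * (al * (normSq (z 0) + normSq (z 1))) := by
    have := cs2 (starRingEnd ℂ (x 0)) (z 0) (starRingEnd ℂ (x 1)) (z 1)
    rw [normSq_conj, normSq_conj] at this
    rw [hP, normSq_mul, normSq_ofReal]
    nlinarith [al_pos, mul_pos al_pos al_pos]
  have hd : normSq (z 2) = hN z + al * (normSq (z 0) + normSq (z 1)) := by rw [hN]; ring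
  have hd0 : 0 ≤ al * (normSq (z 0) + normSq (z 1)) :=
    mul_nonneg al_pos.le (add_nonneg (normSq_nonneg _) (normSq_nonneg _))
  generalize al * (normSq (z 0) + normSq (z 1)) = d at *
  rw [show al * (normSq (x 0) + normSq (x 1)) = normSq ((rho g : Mat) 2 2) - 1 by linarith] at hP'
  generalize normSq ((rho g : Mat) 2 2) = X at *
  generalize hN z = h at *
  rw [hd] at h1 hQ'
  by_contra! hc
  nlinarith [mul_nonneg (sub_nonneg.2 hc) (show 0 ≤ h - 7 / 16 * d by linarith)]

end Form

/-! ### The complex two-ball and metric balls in it -/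

section Ball
open Matrix Complex

/-- The space `ℂ²` with its Euclidean norm. -/
abbrev E2 : Type := EuclideanSpace ℂ (Fin 2)

/-- The complex two-ball `α|t|² < 1`. -/
abbrev Ball : Type := {t : E2 // al * ‖t‖ ^ 2 < 1}

/-- The vector `(t₀, t₁, 1)` over a point `t` of the ball. -/
def vec (t : E2) : Fin 3 → ℂ := ![t 0, t 1, 1]

theorem norm_E2 (t : E2) : ‖t‖ ^ 2 = normSq (t 0) + normSq (t 1) := by
  rw [EuclideanSpace.norm_sq_eq, Fin.sum_univ_two, normSq_eq_norm_sq, normSq_eq_norm_sq]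

theorem hN_vec (t : E2) : hN (vec t) = 1 - al * ‖t‖ ^ 2 := by
  rw [norm_E2]; simp [hN, vec]

theorem hN_vec_pos (t : Ball) : 0 < hN (vec t) := by rw [hN_vec]; linarith [t.2]

/-- The affine function of `t` whose squared modulus is `N_w`. -/
noncomputable def lin (w : FreeGroup CSgen) (t : E2) : ℂ := act w⁻¹ (vec t) 2

theorem lin_apply (w : FreeGroup CSgen) (t : E2) :
    lin w t = (rho w⁻¹ : Mat) 2 0 * t 0 + (rho w⁻¹ : Mat) 2 1 * t 1 + (rho w⁻¹ : Mat) 2 2 := by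
  simp [lin, act, vec, mulVec, dotProduct, Fin.sum_univ_three]

theorem Nn_lin (w : FreeGroup CSgen) (t : E2) : Nn w (vec t) = ‖lin w t‖ ^ 2 := by
  rw [Nn, normSq_eq_norm_sq, lin]

/-- The closed metric ball around the translate by `w` of the centre: the squared hyperbolic cosine
`N_w(z) / hN z` of the distance is at most `2`. -/
def clB (w : FreeGroup CSgen) : Set Ball := {t | Nn w (vec t) ≤ 2 * hN (vec t)}
/-- The slightly larger open metric ball around the translate by `w` of the centre, with the bound
`2.1` in place of `2`. -/
def opB (w : FreeGroup CSgen) : Set Ball := {t | Nn w (vec t) < 2.1 * hN (vec t)}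

theorem clB_sub (w : FreeGroup CSgen) : clB w ⊆ opB w := by
  intro t ht
  have h1 : Nn w (vec t) ≤ 2 * hN (vec t) := ht
  have h2 := hN_vec_pos t
  change Nn w (vec t) < 2.1 * hN (vec t)
  linarith

theorem lin_cont (w : FreeGroup CSgen) : Continuous (lin w) := by
  have : lin w = fun t : E2 => (rho w⁻¹ : Mat) 2 0 * t 0 + (rho w⁻¹ : Mat) 2 1 * t 1 + (rho w⁻¹ : Mat) 2 2 :=
    funext (lin_apply w)
  rw [this]; fun_prop

theorem opB_open (w : FreeGroup CSgen) : IsOpen (opB w) := by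
  have : opB w = {t : Ball | ‖lin w t‖ ^ 2 < 2.1 * (1 - al * ‖(t : E2)‖ ^ 2)} := by
    ext t; simp only [opB, Nn_lin, hN_vec]
  rw [this]
  have := lin_cont w
  apply isOpen_lt <;> fun_prop

theorem sq_convex {V : Type*} [NormedAddCommGroup V] [NormedSpace ℝ V] (p q : V) {a c : ℝ} (ha : 0 ≤ a)
    (hc : 0 ≤ c) (h : a + c = 1) : ‖a • p + c • q‖ ^ 2 ≤ a * ‖p‖ ^ 2 + c * ‖q‖ ^ 2 := by
  have h1 : ‖a • p + c • q‖ ≤ a * ‖p‖ + c * ‖q‖ := by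
    refine (norm_add_le _ _).trans ?_
    rw [norm_smul, norm_smul, Real.norm_of_nonneg ha, Real.norm_of_nonneg hc]
  have h2 : ‖a • p + c • q‖ ^ 2 ≤ (a * ‖p‖ + c * ‖q‖) ^ 2 := pow_le_pow_left₀ (norm_nonneg _) h1 2
  obtain rfl : c = 1 - a := by linarith
  nlinarith [mul_nonneg (mul_nonneg ha hc) (sq_nonneg (‖p‖ - ‖q‖))]

theorem ball_convex : Convex ℝ {t : E2 | al * ‖t‖ ^ 2 < 1} := by
  intro p hp q hq a c ha hc h
  have hp : al * ‖p‖ ^ 2 < 1 := hp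
  have hq : al * ‖q‖ ^ 2 < 1 := hq
  have := sq_convex p q ha hc h
  change al * ‖a • p + c • q‖ ^ 2 < 1
  obtain rfl : c = 1 - a := by linarith
  rcases ha.eq_or_lt with rfl | ha
  · simpa using hq
  · nlinarith [al_pos]

/-- Convexity holds because `N_w(vec t)` is a convex and `hN (vec t)` a concave function of `t`.
-/
theorem opB_convex (w : FreeGroup CSgen) : Convex ℝ {t : E2 | Nn w (vec t) < 2.1 * hN (vec t)} := by
  intro p hp q hq a c ha hc h
  have hp : Nn w (vec p) < 2.1 * hN (vec p) := hp
  have hq : Nn w (vec q) < 2.1 * hN (vec q) := hq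
  change Nn w (vec (a • p + c • q)) < 2.1 * hN (vec (a • p + c • q))
  rw [Nn_lin, hN_vec] at *
  have e : lin w (a • p + c • q) = a • lin w p + c • lin w q := by
    obtain rfl : c = 1 - a := by linarith
    simp only [lin_apply, PiLp.add_apply, PiLp.smul_apply, real_smul]
    push_cast
    ring
  rw [e]
  have h1 := sq_convex p q ha hc h
  have h2 := sq_convex (lin w p) (lin w q) ha hc h
  obtain rfl : c = 1 - a := by linarith
  rcases ha.eq_or_lt with rfl | ha
  · simpa using hq
  · nlinarith [al_pos]

theorem opB_conn (w : FreeGroup CSgen) : IsPreconnected (opB w) := by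
  have hi : Topology.IsInducing (Subtype.val : Ball → E2) := Topology.IsInducing.subtypeVal
  rw [← hi.isPreconnected_image]
  have : Subtype.val '' opB w = {t : E2 | al * ‖t‖ ^ 2 < 1} ∩ {t : E2 | Nn w (vec t) < 2.1 * hN (vec t)} := by
    ext t
    constructor
    · rintro ⟨t, ht, rfl⟩
      exact ⟨t.2, ht⟩
    · rintro ⟨h1, h2⟩
      exact ⟨⟨t, h1⟩, h2, rfl⟩
  rw [this]
  exact (ball_convex.inter (opB_convex w)).isPreconnected

theorem ball_open : IsOpen {t : E2 | al * ‖t‖ ^ 2 < 1} := by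
  apply isOpen_lt <;> fun_prop

instance : LocallyPathConnectedSpace Ball := ball_open.locallyPathConnectedSpace

instance : SimplyConnectedSpace Ball := by
  have : ContractibleSpace {t : E2 // t ∈ {t : E2 | al * ‖t‖ ^ 2 < 1}} :=
    ball_convex.contractibleSpace ⟨0, by simp⟩
  have : ContractibleSpace Ball := this
  infer_instance

/-- The third row of `ρ(w)⁻¹`, from its values on `ρ(w)e₂`. -/
theorem row_bound (w : FreeGroup CSgen) :
    normSq ((rho w⁻¹ : Mat) 2 0) + normSq ((rho w⁻¹ : Mat) 2 1) ≤ al * normSq ((rho w⁻¹ : Mat) 2 2) := by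
  have hr : ∀ k : Fin 3, hB (act w e2) (Pi.single k 1) = - (rho w⁻¹ : Mat) 2 k := by
    intro k
    have := hB_act w e2 (act w⁻¹ (Pi.single k 1))
    rw [act_act_inv, hB_e2] at this
    rw [this]
    simp [act]
  generalize (rho w⁻¹ : Mat) = M at *
  have h0 := hr 0
  have h1 := hr 1
  have h2 := hr 2
  simp [hB_apply] at h0 h1 h2
  have e := hN_act_e2 w
  rw [← act_e2] at e
  rw [← neg_eq_iff_eq_neg.2 h0, ← neg_eq_iff_eq_neg.2 h1, ← h2]
  simp only [normSq_neg, normSq_mul, normSq_conj, normSq_ofReal]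
  rw [e]
  nlinarith [al_pos, mul_pos al_pos al_pos]

/-- Uniform distortion: near `x`, all the functions `|lin w|` are comparable. -/
theorem lin_dist (w : FreeGroup CSgen) (x y : E2) (hx : al * ‖x‖ ^ 2 < 1)
    (hxy : √al * ‖y - x‖ ≤ 0.01 * (1 - √al * ‖x‖)) : ‖lin w y - lin w x‖ ≤ 0.01 * ‖lin w x‖ := by
  have hb := row_bound w
  set a0 := (rho w⁻¹ : Mat) 2 0 with ha0
  set a1 := (rho w⁻¹ : Mat) 2 1 with ha1
  set c := (rho w⁻¹ : Mat) 2 2 with hc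
  have sal : √al * √al = al := Real.mul_self_sqrt al_pos.le
  have s0 : 0 ≤ √al := Real.sqrt_nonneg _
  have hs : √al * ‖x‖ < 1 := by
    by_contra! h
    nlinarith [norm_nonneg x]
  have bd : ∀ t : E2, ‖a0 * t 0 + a1 * t 1‖ ≤ ‖c‖ * (√al * ‖t‖) := by
    intro t
    apply abs_le_of_sq_le_sq' _ (by positivity) |>.2
    have := cs2 a0 (t 0) a1 (t 1)
    rw [← norm_E2, normSq_eq_norm_sq (a0 * t 0 + a1 * t 1)] at this
    calc _ ≤ _ := this
      _ ≤ (al * normSq c) * ‖t‖ ^ 2 := by gcongr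
      _ = _ := by rw [normSq_eq_norm_sq]; linear_combination (-(‖c‖ ^ 2 * ‖t‖ ^ 2)) * sal
  have e1 : lin w y - lin w x = a0 * (y - x) 0 + a1 * (y - x) 1 := by
    simp only [lin_apply, PiLp.sub_apply]; ring
  have e2' : ‖c‖ - ‖a0 * x 0 + a1 * x 1‖ ≤ ‖lin w x‖ := by
    rw [lin_apply, ← ha0, ← ha1, ← hc, add_comm _ c]
    exact norm_sub_le_norm_add _ _
  rw [e1]
  have h1 := bd (y - x)
  have h2 := bd x
  have h3 : ‖c‖ * (√al * ‖y - x‖) ≤ ‖c‖ * (0.01 * (1 - √al * ‖x‖)) := by gcongr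
  nlinarith

/-- Every point has a neighbourhood adapted to all the translates at once, as `nerve` requires. It
exists because the ratio `N_w / hN` varies near `x` by a factor that is close to `1` uniformly in
`w`. -/
theorem ball_nbhd (x : Ball) : ∃ W, IsOpen W ∧ x ∈ W ∧
    ∀ w, (x ∈ clB w → W ⊆ opB w) ∧ ∀ y ∈ W, y ∈ clB w → x ∈ opB w := by
  have sal : √al * √al = al := Real.mul_self_sqrt al_pos.le
  have s0 : 0 ≤ √al := Real.sqrt_nonneg _
  have hx0 := hN_vec_pos x
  have hs : √al * ‖(x : E2)‖ < 1 := by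
    by_contra! h
    nlinarith [norm_nonneg (x : E2), x.2]
  refine ⟨{y : Ball | √al * ‖(y : E2) - x‖ < 0.01 * (1 - √al * ‖(x : E2)‖)} ∩
    ({y : Ball | hN (vec y) < 1.01 * hN (vec x)} ∩ {y : Ball | 0.99 * hN (vec x) < hN (vec y)}),
    ?_, ?_, ?_⟩
  · simp only [hN_vec]
    refine IsOpen.inter (isOpen_lt (by fun_prop) (by fun_prop))
      (IsOpen.inter (isOpen_lt (by fun_prop) (by fun_prop)) (isOpen_lt (by fun_prop) (by fun_prop)))
  · refine ⟨?_, ?_, ?_⟩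
    · change √al * ‖(x : E2) - x‖ < 0.01 * (1 - √al * ‖(x : E2)‖)
      rw [sub_self, norm_zero, mul_zero]; linarith
    · change hN (vec x) < 1.01 * hN (vec x); linarith
    · change 0.99 * hN (vec x) < hN (vec x); linarith
  · intro w
    have key : ∀ y : Ball, √al * ‖(y : E2) - x‖ < 0.01 * (1 - √al * ‖(x : E2)‖) →
        ‖lin w y‖ ≤ 1.01 * ‖lin w x‖ ∧ 0.99 * ‖lin w x‖ ≤ ‖lin w y‖ := by
      intro y hy
      have h := lin_dist w x y x.2 hy.le
      have h1 := norm_sub_norm_le (lin w y) (lin w x)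
      have h2 := norm_sub_norm_le (lin w x) (lin w y)
      rw [norm_sub_rev] at h2
      constructor <;> linarith
    constructor
    · rintro hx y ⟨h1, h2, h3⟩
      have hx : Nn w (vec x) ≤ 2 * hN (vec x) := hx
      have h3 : 0.99 * hN (vec x) < hN (vec y) := h3
      change Nn w (vec y) < 2.1 * hN (vec y)
      rw [Nn_lin] at *
      nlinarith [(key y h1).1, norm_nonneg (lin w y), norm_nonneg (lin w x)]
    · rintro y ⟨h1, h2, h3⟩ hy
      have hy : Nn w (vec y) ≤ 2 * hN (vec y) := hy
      have h2 : hN (vec y) < 1.01 * hN (vec x) := h2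
      change Nn w (vec x) < 2.1 * hN (vec x)
      rw [Nn_lin] at *
      nlinarith [(key y h1).2, norm_nonneg (lin w y), norm_nonneg (lin w x)]

end Ball

/-! ### The index relation of the cover -/

section Cover
open Matrix Complex

theorem isCS : IsCS gu gv gb := by
  have h : ∀ r ∈ csRels, pr r = 1 := fun r hr => PresentedGroup.one_of_mem hr
  have hr : ∀ r, r ∈ csRels → pr r = 1 := h
  refine ⟨?_, ?_, ?_, ?_, ?_, ?_, ?_⟩
  · exact h _ (by simp [csRels])
  · exact h (FreeGroup.of CSgen.v ^ 4) (by simp [csRels])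
  · exact h (FreeGroup.of CSgen.b ^ 3) (by simp [csRels])
  · exact mul_inv_eq_one.1 (h ((FreeGroup.of CSgen.u * FreeGroup.of CSgen.v) ^ 2 *
      ((FreeGroup.of CSgen.v * FreeGroup.of CSgen.u) ^ 2)⁻¹) (by simp [csRels]))
  · exact mul_inv_eq_one.1 (h (FreeGroup.of CSgen.v * FreeGroup.of CSgen.b *
      (FreeGroup.of CSgen.b * FreeGroup.of CSgen.v)⁻¹) (by simp [csRels]))
  · exact h ((FreeGroup.of CSgen.b * FreeGroup.of CSgen.u * FreeGroup.of CSgen.v) ^ 3) (by simp [csRels])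
  · exact h ((FreeGroup.of CSgen.b * FreeGroup.of CSgen.u * FreeGroup.of CSgen.v * FreeGroup.of CSgen.u) ^ 2 *
      FreeGroup.of CSgen.v) (by simp [csRels])

/-- The stabiliser `⟨u, v⟩` of the centre. -/
def K : Subgroup CS where
  carrier := {g | ∃ x, ev gu gv x = g}
  one_mem' := ⟨(0, 0, 0), by simp [ev, tt]⟩
  mul_mem' := by
    rintro _ _ ⟨x, rfl⟩ ⟨y, rfl⟩
    exact ⟨mulN x y, ev_mulN isCS x y⟩
  inv_mem' := by
    rintro _ ⟨x, rfl⟩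
    exact ⟨invN x, ev_invN isCS x⟩

theorem u_mem : gu ∈ K := ⟨(1, 0, 0), by simp [ev, tt]⟩
theorem v_mem : gv ∈ K := ⟨(0, 1, 0), by simp [ev, tt]⟩

/-- The union of the three double cosets of `1`, `b` and `bu⁻¹b` with respect to `K`. -/
def Sset : Set CS := {g | ∃ s, evS gu gv gb s = g}

theorem Sset_mk {k k' : CS} (hk : k ∈ K) (hk' : k' ∈ K) (n : ℕ) : k * sg gu gb n * k' ∈ Sset := by
  obtain ⟨x, rfl⟩ := hk
  obtain ⟨y, rfl⟩ := hk'
  exact ⟨(n, x, y), rfl⟩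

theorem K_sub {k : CS} (hk : k ∈ K) : k ∈ Sset := by
  have := Sset_mk hk K.one_mem 0
  simpa [sg] using this

theorem Kb_sub {k : CS} (hk : k ∈ K) : k * gb ∈ Sset := by
  have := Sset_mk hk K.one_mem 1
  simpa [sg] using this

theorem Sset_inv {g : CS} (hg : g ∈ Sset) : g⁻¹ ∈ Sset := by
  obtain ⟨⟨n, x, y⟩, rfl⟩ := hg
  have hx : (ev gu gv x)⁻¹ ∈ K := K.inv_mem ⟨x, rfl⟩
  have hy : (ev gu gv y)⁻¹ ∈ K := K.inv_mem ⟨y, rfl⟩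
  have hj : (gu * gv) ^ 2 ∈ K := K.pow_mem (K.mul_mem u_mem v_mem) 2
  rcases n with _ | _ | n
  · have := K_sub (K.mul_mem hy hx)
    simpa [evS, sg] using this
  · have e := isCS.binv
    rw [isCS.bb] at e
    have := Sset_mk (K.mul_mem hy hj) (K.mul_mem (K.mul_mem (K.inv_mem v_mem) hj) hx) 1
    convert! this using 1
    simp only [evS, sg, _root_.mul_inv_rev, e, mul_assoc, zero_add]
  · have e := isCS.q_comm.2
    have := Sset_mk (K.mul_mem hy u_mem) hx 2
    convert! this using 1
    have e' : (gb * gu⁻¹ * gb)⁻¹ = gu * (gb * gu⁻¹ * gb) := by rw [← e]; group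
    simp only [evS, sg]
    rw [_root_.mul_inv_rev, _root_.mul_inv_rev, e']
    simp only [mul_assoc]

/-- The relation between indices of the cover. -/
def Rr (w w' : FreeGroup CSgen) : Prop := pr (w⁻¹ * w') ∈ Sset

theorem Rr_refl (w : FreeGroup CSgen) : Rr w w := by
  rw [Rr, inv_mul_cancel, map_one]; exact K_sub K.one_mem

theorem Rr_symm {w w' : FreeGroup CSgen} (h : Rr w w') : Rr w' w := by
  have := Sset_inv h
  rwa [← map_inv, _root_.mul_inv_rev, inv_inv] at this

/-- The prefactor of the matrix of `u`. -/
noncomputable def pu : ℂ := 1 / 2 * toC ⟨0, 1, 1, -1⟩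

theorem pu_sq : normSq pu = 1 / 2 := by
  have h := two_normSq ⟨0, 1, 1, -1⟩
  have e : re2 ((⟨0, 1, 1, -1⟩ : Cy).mul (Cy.conj ⟨0, 1, 1, -1⟩)) = (4, 0) := by decide +kernel
  rw [e] at h
  simp at h
  rw [pu, normSq_mul, show normSq (toC ⟨0, 1, 1, -1⟩) = 2 by linarith]
  norm_num [normSq_apply]

theorem toC_I : toC ⟨0, 0, 0, 1⟩ = I := by simp [toC, zt_cube]

theorem act_u (z : Fin 3 → ℂ) : act (FreeGroup.of .u) z 0 = pu * (z 0 + z 1) ∧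
    act (FreeGroup.of .u) z 1 = pu * (-I * z 0 + I * z 1) ∧ act (FreeGroup.of .u) z 2 = z 2 := by
  have h0 : toC ⟨0, 0, 0, 0⟩ = 0 := by simp [toC]
  have h2 : toC ⟨2, 0, 0, 0⟩ = 2 := by simp [toC]
  have h3 : toC ⟨0, -1, 1, 1⟩ = I * toC ⟨0, 1, 1, -1⟩ := by rw [← toC_I, ← toC_mul]; rfl
  have h4 : toC ⟨0, 1, -1, -1⟩ = -I * toC ⟨0, 1, 1, -1⟩ := by
    have : toC ⟨0, 0, 0, -1⟩ = -I := by simp [toC, zt_cube]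
    rw [← this, ← toC_mul]; rfl
  refine ⟨?_, ?_, ?_⟩ <;>
    simp [act, mulVec, dotProduct, Fin.sum_univ_three, rU, mkU, toM, mU, mkM, h0, h2, h3, h4, pu] <;> ring

theorem act_v (z : Fin 3 → ℂ) : act (FreeGroup.of .v) z 0 = z 0 ∧
    act (FreeGroup.of .v) z 1 = I * z 1 ∧ act (FreeGroup.of .v) z 2 = z 2 := by
  have h0 : toC ⟨0, 0, 0, 0⟩ = 0 := by simp [toC]
  have h2 : toC ⟨2, 0, 0, 0⟩ = 2 := by simp [toC]
  have h3 : toC ⟨0, 0, 0, 2⟩ = 2 * I := by simp [toC, zt_cube]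
  refine ⟨?_, ?_, ?_⟩ <;>
    simp [act, mulVec, dotProduct, Fin.sum_univ_three, rV, mkU, toM, mV, mkM, h0, h2, h3]

/-- The word for `j`. -/
def wj : FreeGroup CSgen := (FreeGroup.of .u * FreeGroup.of .v) ^ 2

theorem act_j (z : Fin 3 → ℂ) : act wj z 0 = zt * z 0 ∧ act wj z 1 = zt * z 1 ∧ act wj z 2 = z 2 := by
  have e : 2 * (pu * pu) = zt := by
    have h2 : toC ⟨0, 2, 0, 0⟩ = 2 * zt := by simp [toC]
    have h3 : ((⟨0, 1, 1, -1⟩ : Cy).mul ⟨0, 1, 1, -1⟩) = ⟨0, 2, 0, 0⟩ := by decide +kernel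
    have h4 := congrArg toC h3
    rw [toC_mul, h2] at h4
    rw [pu]; linear_combination (1 / 2) * h4
  simp only [wj, pow_two, act_mul, (act_u _).1, (act_u _).2.1, (act_u _).2.2, (act_v _).1, (act_v _).2.1,
    (act_v _).2.2, and_true]
  have hI := I_mul_I
  constructor
  · linear_combination z 0 * e + (-pu * pu * z 0 + pu * pu * I * z 1) * hI
  · linear_combination z 1 * e + (pu * pu * z 1 * (-2+I*I) + -pu * pu * I * z 0) * hI

end Cover

/-! ### Neighbouring metric balls -/

section Covering
open Matrix Complex

theorem exists_pt {z : Fin 3 → ℂ} (hz : 0 < hN z) :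
    ∃ t : Ball, ∃ c : ℂ, 0 < normSq c ∧ vec t = c • z := by
  have h0 : z 2 ≠ 0 := by
    intro h
    have := al_pos
    have h1 := normSq_nonneg (z 0)
    have h2 := normSq_nonneg (z 1)
    rw [hN, h, map_zero] at hz
    nlinarith
  have e : vec (WithLp.toLp 2 ![(z 2)⁻¹ * z 0, (z 2)⁻¹ * z 1]) = (z 2)⁻¹ • z := by
    ext i; fin_cases i <;> simp [vec, h0]
  have hc : 0 < normSq (z 2)⁻¹ := normSq_pos.2 (inv_ne_zero h0)
  refine ⟨⟨WithLp.toLp 2 ![(z 2)⁻¹ * z 0, (z 2)⁻¹ * z 1], ?_⟩, (z 2)⁻¹, hc, e⟩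
  have h1 : 0 < hN ((z 2)⁻¹ • z) := by rw [hN_smul]; positivity
  rw [← e, hN_vec] at h1
  linarith

theorem mem_opB {t : Ball} {c : ℂ} {z : Fin 3 → ℂ} (hc : 0 < normSq c) (h : vec t = c • z)
    (w : FreeGroup CSgen) : t ∈ opB w ↔ Nn w z < 2.1 * hN z := by
  change Nn w (vec t) < 2.1 * hN (vec t) ↔ _
  rw [h, Nn_smul, hN_smul, mul_left_comm, mul_lt_mul_iff_right₀ hc]

/-- Indices joined by a generator have overlapping balls. -/
theorem step_ne (i : FreeGroup CSgen) (x : CSgen) :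
    (opB i ∩ opB (i * FreeGroup.of x)).Nonempty := by
  have key : ∃ p : Fin 3 → ℂ, 0 < hN p ∧ normSq (p 2) < 2.1 * hN p ∧ Nn (FreeGroup.of x) p < 2.1 * hN p := by
    have huv : ∀ x, act (FreeGroup.of x) e2 2 = 1 → ∃ p : Fin 3 → ℂ, 0 < hN p ∧
        normSq (p 2) < 2.1 * hN p ∧ Nn (FreeGroup.of x) p < 2.1 * hN p := by
      intro x hx
      refine ⟨act (FreeGroup.of x) e2, ?_, ?_, ?_⟩
      · rw [hN_act, hN_e2]; norm_num
      · rw [hN_act, hN_e2, hx]; norm_num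
      · have := Nn_act (FreeGroup.of x) 1 e2
        rw [mul_one] at this
        have e : e2 2 = 1 := rfl
        rw [this, hN_act, hN_e2, Nn_one, e]; norm_num
    cases x
    · exact huv _ (by rw [(act_u _).2.2]; simp [e2])
    · exact huv _ (by rw [(act_v _).2.2]; simp [e2])
    · -- `b` fixes the point `(1, 0, α)`
      have hb : act (FreeGroup.of .b) ![1, 0, (al : ℂ)] = ![1, 0, (al : ℂ)] := by
        have h := zt_four
        have : (al : ℂ) = 1 + 2 * zt - zt ^ 3 := by rw [← toC_al]; simp [toC]; ring
        ext i
        fin_cases i <;>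
          simp [act, mulVec, dotProduct, Fin.sum_univ_three, rB, mkU, toM, mB, mkM, toC, this]
        · linear_combination (zt ^ 2 - 2) * h
        · linear_combination (zt ^ 2 - 2) * h
      have hNp : hN ![1, 0, (al : ℂ)] = al * al - al := by simp [hN, normSq_ofReal]
      have h1 := al_bounds.1
      have h2 : normSq (al : ℂ) < 2.1 * (al * al - al) := by rw [normSq_ofReal]; nlinarith
      refine ⟨![1, 0, (al : ℂ)], ?_, ?_, ?_⟩
      · rw [hNp]; nlinarith
      · rw [hNp]; exact h2
      · have := Nn_act (FreeGroup.of .b) 1 ![1, 0, (al : ℂ)]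
        rw [mul_one, hb] at this
        rw [this, hNp, Nn_one]; exact h2
  obtain ⟨p, h0, h1, h2⟩ := key
  obtain ⟨t, c, hc, e⟩ := exists_pt (z := act i p) (by rwa [hN_act])
  refine ⟨t, (mem_opB hc e i).2 ?_, (mem_opB hc e _).2 ?_⟩
  · have := Nn_act i 1 p
    rw [mul_one] at this
    rw [this, hN_act, Nn_one]; exact h1
  · rw [Nn_act, hN_act]; exact h2

theorem b_mem : gb ∈ Sset := by simpa using Kb_sub K.one_mem

/-- Any two indices are joined by a chain of related indices with overlapping balls, since the
generators lie in `Sset` and move the ball around the centre to an overlapping one. -/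
theorem cover_conn (i k : FreeGroup CSgen) :
    Relation.ReflTransGen (fun i k => Rr i k ∧ (opB i ∩ opB k).Nonempty) i k := by
  have hs : ∀ i x, Rr i (i * FreeGroup.of x) := by
    intro i x
    rw [Rr, inv_mul_cancel_left]
    cases x
    · exact K_sub u_mem
    · exact K_sub v_mem
    · exact b_mem
  have key : ∀ w i, Relation.ReflTransGen (fun i k => Rr i k ∧ (opB i ∩ opB k).Nonempty) i (i * w) := by
    intro w
    induction w using FreeGroup.induction_on with
    | C1 => intro i; rw [mul_one]
    | of x => intro i; exact .single ⟨hs i x, step_ne i x⟩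
    | inv_of x _ =>
      intro i
      refine .single ⟨Rr_symm ?_, ?_⟩
      · have := hs (i * (FreeGroup.of x)⁻¹) x
        rwa [inv_mul_cancel_right] at this
      · have := step_ne (i * (FreeGroup.of x)⁻¹) x
        rwa [inv_mul_cancel_right, Set.inter_comm] at this
    | mul x y hx hy => intro i; rw [← mul_assoc]; exact (hx i).trans (hy _)
  have := key (i⁻¹ * k) i
  rwa [mul_inv_cancel_left] at this

theorem zt_exp : zt = exp ((Real.pi / 6 : ℝ) * I) := by
  apply Complex.ext
  · rw [exp_ofReal_mul_I_re, Real.cos_pi_div_six]; rfl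
  · rw [exp_ofReal_mul_I_im, Real.sin_pi_div_six]; rfl

/-- Every complex number is rotated by a power of `ζ` to an angle of at most `π/12`. -/
theorem rot (p : ℂ) : ∃ n : ℕ, Real.cos (Real.pi / 12) * ‖p‖ ≤ (zt ^ n * p).re := by
  have hpi := Real.pi_pos
  set m : ℤ := round (p.arg / (Real.pi / 6)) with hm
  have h1 := abs_sub_round (p.arg / (Real.pi / 6))
  rw [← hm] at h1
  have h2 : |p.arg - m * (Real.pi / 6)| ≤ Real.pi / 12 := by
    have : p.arg - m * (Real.pi / 6) = (p.arg / (Real.pi / 6) - m) * (Real.pi / 6) := by field_simp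
    rw [this, abs_mul, abs_of_pos (show 0 < Real.pi / 6 by positivity)]
    nlinarith
  refine ⟨(11 * m % 12).toNat, ?_⟩
  obtain ⟨q, hq⟩ : ∃ q : ℤ, 11 * m % 12 = - m + 12 * q := ⟨m - 11 * m / 12, by omega⟩
  have hn : ((11 * m % 12).toNat : ℤ) = - m + 12 * q := by rw [Int.toNat_of_nonneg (by omega), hq]
  have h12 : zt ^ (12 * q) = 1 := by
    rw [_root_.zpow_mul, show zt ^ (12 : ℤ) = (zt ^ 3) ^ 4 by rw [← pow_mul]; rfl, zt_cube, I_pow_four, _root_.one_zpow]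
  have z0 : zt ≠ 0 := by rw [zt_exp]; exact exp_ne_zero _
  have e : zt ^ (11 * m % 12).toNat = exp ((-(m * (Real.pi / 6)) : ℝ) * I) := by
    rw [← zpow_natCast, hn, zpow_add₀ z0, h12, mul_one, zt_exp, ← exp_int_mul]
    congr 1; push_cast; ring
  rw [e]
  nth_rewrite 2 [← norm_mul_exp_arg_mul_I p]
  rw [mul_left_comm, ← exp_add, re_ofReal_mul, ← add_mul, ← ofReal_add, exp_ofReal_mul_I_re, mul_comm]
  apply mul_le_mul_of_nonneg_left _ (norm_nonneg p)
  rw [← Real.cos_abs (-_ + _)]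
  apply Real.cos_le_cos_of_nonneg_of_le_pi (abs_nonneg _) (by linarith)
  rwa [neg_add_eq_sub]

theorem cos_twelfth : 2 * Real.cos (Real.pi / 12) ^ 2 = 1 + √3 / 2 := by
  rw [Real.cos_sq, show 2 * (Real.pi / 12) = Real.pi / 6 by ring, Real.cos_pi_div_six]; ring

/-- The three coordinates `|z₀|² - |z₁|²`, `2 Re z₀z̄₁`, `2 Im z₀z̄₁` lie on a sphere of radius
`|z₀|² + |z₁|²`; hence one of them is, up to sign, at least `1/√3` times the radius. An element of `K` turns that
coordinate into `|z₀|² - |z₁|²`, with positive sign. -/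
theorem bloch (z : Fin 3 → ℂ) : ∃ k : FreeGroup CSgen, pr k ∈ K ∧ act k z 2 = z 2 ∧
    (3 + √3) / 6 * (normSq (z 0) + normSq (z 1)) ≤ normSq (act k z 0) := by
  have hu : pr (FreeGroup.of .u) ∈ K := u_mem
  have hv : pr (FreeGroup.of .v) ∈ K := v_mem
  have h3 := s3
  have h30 : 0 ≤ √3 := Real.sqrt_nonneg 3
  have e0 : ∀ z, act (FreeGroup.of .u) z 0 = pu * (z 0 + z 1) := fun z => (act_u z).1
  have e1 : ∀ z, act (FreeGroup.of .u) z 1 = pu * (-I * z 0 + I * z 1) := fun z => (act_u z).2.1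
  have e2 : ∀ z, act (FreeGroup.of .u) z 2 = z 2 := fun z => (act_u z).2.2
  have f0 : ∀ z, act (FreeGroup.of .v) z 0 = z 0 := fun z => (act_v z).1
  have f1 : ∀ z, act (FreeGroup.of .v) z 1 = I * z 1 := fun z => (act_v z).2.1
  have f2 : ∀ z, act (FreeGroup.of .v) z 2 = z 2 := fun z => (act_v z).2.2
  set S := normSq (z 0) + normSq (z 1) with hS
  have hS0 : 0 ≤ S := add_nonneg (normSq_nonneg _) (normSq_nonneg _)
  set x := normSq (z 0) - normSq (z 1) with hx
  set y := 2 * ((z 0).re * (z 1).re + (z 0).im * (z 1).im) with hy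
  set w := 2 * ((z 0).im * (z 1).re - (z 0).re * (z 1).im) with hw
  have hsph : x ^ 2 + y ^ 2 + w ^ 2 = S ^ 2 := by
    simp only [hx, hy, hw, hS, normSq_apply]; ring
  have c1 : normSq (act 1 z 0) = (S + x) / 2 := by rw [act_one, hS, hx]; ring
  have c2 : normSq (act (FreeGroup.of .u * FreeGroup.of .v ^ 3 * FreeGroup.of .u) z 0) = (S - x) / 2 := by
    simp only [pow_succ, pow_zero, one_mul, act_mul, e0, e1, f0, f1]
    have : pu * (pu * (z 0 + z 1) + I * (I * (I * (pu * (-I * z 0 + I * z 1))))) = 2 * pu * pu * z 1 := by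
      linear_combination (pu * pu * (-z 0 + z 1) * (I * I - 1)) * I_mul_I
    rw [this]
    simp only [normSq_mul, pu_sq]
    rw [hS, hx]; norm_num [normSq_apply]
  have c3 : normSq (act (FreeGroup.of .u) z 0) = (S + y) / 2 := by
    simp only [e0, normSq_mul, pu_sq]
    simp only [hS, hy, normSq_apply, add_re, add_im]; ring
  have c4 : normSq (act (FreeGroup.of .u * FreeGroup.of .v) z 0) = (S + w) / 2 := by
    simp only [act_mul, e0, f0, f1, normSq_mul, pu_sq]
    simp only [hS, hw, normSq_apply, add_re, add_im, mul_re, mul_im, I_re, I_im]; ring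
  have c5 : normSq (act (FreeGroup.of .u * FreeGroup.of .v ^ 2) z 0) = (S - y) / 2 := by
    simp only [pow_two, act_mul, e0, f0, f1, normSq_mul, pu_sq]
    simp only [hS, hy, normSq_apply, add_re, add_im, mul_re, mul_im, I_re, I_im]; ring
  have c6 : normSq (act (FreeGroup.of .u * FreeGroup.of .v ^ 3) z 0) = (S - w) / 2 := by
    simp only [pow_succ, pow_zero, one_mul, act_mul, e0, f0, f1, normSq_mul, pu_sq]
    simp only [hS, hw, normSq_apply, add_re, add_im, mul_re, mul_im, I_re, I_im]; ring
  by_contra hcon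
  push Not at hcon
  have d1 := hcon 1 (by rw [map_one]; exact K.one_mem) (by rw [act_one])
  have d2 := hcon (FreeGroup.of .u * FreeGroup.of .v ^ 3 * FreeGroup.of .u)
    (by simp only [map_mul, map_pow]; exact K.mul_mem (K.mul_mem hu (K.pow_mem hv 3)) hu)
    (by simp only [pow_succ, pow_zero, one_mul, act_mul, e2, f2])
  have d3 := hcon _ hu (e2 z)
  have d4 := hcon (FreeGroup.of .u * FreeGroup.of .v)
    (by simp only [map_mul]; exact K.mul_mem hu hv) (by simp only [act_mul, e2, f2])
  have d5 := hcon (FreeGroup.of .u * FreeGroup.of .v ^ 2)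
    (by simp only [map_mul, map_pow]; exact K.mul_mem hu (K.pow_mem hv 2))
    (by simp only [pow_two, act_mul, e2, f2])
  have d6 := hcon (FreeGroup.of .u * FreeGroup.of .v ^ 3)
    (by simp only [map_mul, map_pow]; exact K.mul_mem hu (K.pow_mem hv 3))
    (by simp only [pow_succ, pow_zero, one_mul, act_mul, e2, f2])
  rw [c1] at d1
  rw [c2] at d2
  rw [c3] at d3
  rw [c4] at d4
  rw [c5] at d5
  rw [c6] at d6
  have hsq : ∀ r : ℝ, r < √3 / 3 * S → -(√3 / 3 * S) < r → r ^ 2 < S ^ 2 / 3 := by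
    intro r h1 h2
    have := sq_lt_sq' h2 h1
    calc r ^ 2 < (√3 / 3 * S) ^ 2 := this
      _ = (√3 * √3) * S ^ 2 / 9 := by ring
      _ = _ := by rw [h3]; ring
  have g1 := hsq x (by linarith) (by linarith)
  have g2 := hsq y (by linarith) (by linarith)
  have g3 := hsq w (by linarith) (by linarith)
  linarith

theorem act_b_inv (z : Fin 3 → ℂ) :
    act (FreeGroup.of .b)⁻¹ z 2 = -zt * (al * z 0 - (1 + (starRingEnd ℂ) zt) * z 2) := by
  have h := zt_four
  have e : (al : ℂ) = 1 + 2 * zt - zt ^ 3 := by rw [← toC_al]; simp [toC]; ring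
  have e' : ((rho (FreeGroup.of CSgen.b)⁻¹ : Matˣ) : Mat) = (1 / 2 : ℂ) • toM mBi := by
    rw [map_inv, rho_b]; rfl
  rw [act, e', zt_conj, e]
  simp [mulVec, dotProduct, Fin.sum_univ_three, toM, mBi, mkM, toC]
  linear_combination (-z 0 + z 2) * h

theorem act_jpow (n : ℕ) (z : Fin 3 → ℂ) : act (wj ^ n) z 0 = zt ^ n * z 0 ∧ act (wj ^ n) z 2 = z 2 := by
  induction n with
  | zero => simp [act_one]
  | succ n ih =>
    rw [pow_succ', act_mul]
    refine ⟨?_, ?_⟩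
    · rw [(act_j _).1, ih.1]; ring
    · rw [(act_j _).2.2, ih.2]

/-- The numerical estimate behind `core_vec`: here `σ ≈ α‖p‖` lies in `[1.037, 1.2]`. -/
theorem core_num {σ s : ℝ} (hs : 1.73205 < s) (h0 : 0 ≤ σ) (hlow : 1.077 ≤ σ ^ 2) (hup : σ ^ 2 ≤ 1.4311) :
    σ ^ 2 - (2 + s) * σ + (2 + s) ≤ 0.94 := by
  have hl : 1.0377 ≤ σ := by nlinarith
  have hu : σ ≤ 1.2 := by nlinarith
  have a1 : (σ - 1.0377) * (σ - 1.2) ≤ 0 :=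
    mul_nonpos_of_nonneg_of_nonpos (by linarith) (by linarith)
  have a2 : 3.73205 * (σ - 1) ≤ (2 + s) * (σ - 1) :=
    mul_le_mul_of_nonneg_right (by linarith) (by linarith)
  linarith

/-- A point of the open ball around the centre lies in a closed ball around a neighbouring
translate of the centre. -/
theorem core_vec {z : Fin 3 → ℂ} (hz2 : z 2 = 1) (h1 : normSq (z 2) < 2.1 * hN z) :
    ∃ g : FreeGroup CSgen, pr g ∈ Sset ∧ Nn g z ≤ 2 * hN z := by
  by_cases hc : normSq (z 2) ≤ 2 * hN z
  · exact ⟨1, by rw [map_one]; exact K_sub K.one_mem, by rwa [Nn_one]⟩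
  obtain ⟨k, hk, k2, hk0⟩ := bloch z
  have h3 := s3
  have hal := al_bounds
  set y := act k z with hy
  obtain ⟨n, hn⟩ := rot (y 0 * (1 + zt))
  refine ⟨(wj ^ n * k)⁻¹ * FreeGroup.of .b, ?_, ?_⟩
  · rw [map_mul, map_inv]
    refine Kb_sub (K.inv_mem ?_)
    rw [map_mul, map_pow]
    refine K.mul_mem (K.pow_mem ?_ n) hk
    rw [wj, map_pow, map_mul]
    exact K.pow_mem (K.mul_mem u_mem v_mem) 2
  have hSN : hN y = hN z := hN_act k z
  rw [hz2] at k2 h1 hc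
  set p := zt ^ n * y 0 with hp
  have hpn : ‖p‖ = ‖y 0‖ := by rw [hp, norm_mul, norm_pow, zt_norm, one_pow, one_mul]
  have hN1 : Nn ((wj ^ n * k)⁻¹ * FreeGroup.of .b) z = normSq (al * p - (1 + (starRingEnd ℂ) zt)) := by
    rw [Nn, _root_.mul_inv_rev, inv_inv, act_mul, act_mul, act_b_inv, (act_jpow n _).1, (act_jpow n _).2,
      ← hy, k2, ← hp, normSq_mul, normSq_neg, normSq_eq_norm_sq zt, zt_norm]
    simp
  have hexp : normSq (al * p - (1 + (starRingEnd ℂ) zt)) =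
      (al * ‖p‖) ^ 2 - 2 * al * (p * (1 + zt)).re + (2 + √3) := by
    have hpp : ‖p‖ ^ 2 = p.re * p.re + p.im * p.im := by rw [← normSq_eq_norm_sq, normSq_apply]
    rw [mul_pow, hpp]
    simp only [normSq_apply, sub_re, sub_im, mul_re, mul_im, add_re, add_im, ofReal_re, ofReal_im, one_re,
      one_im, conj_re, conj_im, zt]
    linear_combination (1 / 4) * h3
  have hcos := cos_twelfth
  have hcp : 0 ≤ Real.cos (Real.pi / 12) := Real.cos_nonneg_of_neg_pi_div_two_le_of_le
    (by linarith [Real.pi_pos]) (by linarith [Real.pi_pos])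
  have hn1 : ‖(1 : ℂ) + zt‖ = 2 * Real.cos (Real.pi / 12) := by
    rw [← sq_eq_sq₀ (norm_nonneg _) (by positivity), ← normSq_eq_norm_sq, mul_pow]
    have : normSq (1 + zt) = 2 + √3 := by
      simp only [normSq_apply, add_re, add_im, one_re, one_im, zt]; linear_combination (1 / 4) * h3
    rw [this]; linarith
  have hre : (2 + √3) * ‖p‖ ≤ 2 * (p * (1 + zt)).re := by
    rw [norm_mul, hn1, ← mul_assoc (zt ^ n), ← hp, ← hpn] at hn
    have : (2 + √3) * ‖p‖ = 2 * (Real.cos (Real.pi / 12) * (‖p‖ * (2 * Real.cos (Real.pi / 12)))) := by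
      linear_combination (-2 * ‖p‖) * hcos
    rw [this]; linarith
  rw [hN1, hexp]
  -- with `σ = α‖p‖` the value is at most `σ² - (2 + √3)σ + (2 + √3)`, and `1.038 ≤ σ ≤ 1.197`
  have hs3 : 1.73205 < √3 ∧ √3 < 1.73206 := by
    simp only [al] at hal; constructor <;> linarith [hal.1, hal.2]
  have hzN : hN z = 1 - al * (normSq (z 0) + normSq (z 1)) := by rw [hN, hz2, map_one]
  have hyN : hN y = 1 - al * (normSq (y 0) + normSq (y 1)) := by rw [hN, k2, map_one]
  have hy0 : normSq (y 0) = ‖p‖ ^ 2 := by rw [hpn, normSq_eq_norm_sq]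
  rw [hy0] at hk0 hyN
  rw [map_one] at h1 hc
  set σ := al * ‖p‖ with hσ
  have hσ0 : 0 ≤ σ := mul_nonneg al_pos.le (norm_nonneg _)
  have hlow : 1.077 ≤ σ ^ 2 := by
    have a1 : 1 / 2 < al * (normSq (z 0) + normSq (z 1)) := by linarith
    have a2 : σ ^ 2 = al * (al * ‖p‖ ^ 2) := by rw [hσ]; ring
    have a3 : 0.788675 * (1 / 2) ≤ al * ‖p‖ ^ 2 := by
      have : al * ((3 + √3) / 6 * (normSq (z 0) + normSq (z 1))) ≤ al * ‖p‖ ^ 2 :=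
        mul_le_mul_of_nonneg_left hk0 al_pos.le
      have h4 : 0.788675 * (1 / 2) ≤ (3 + √3) / 6 * (al * (normSq (z 0) + normSq (z 1))) :=
        mul_le_mul (by linarith) a1.le (by norm_num) (by linarith)
      linarith
    rw [a2]
    have := mul_le_mul hal.1.le a3 (by norm_num) al_pos.le
    linarith
  have hup : σ ^ 2 ≤ 1.4311 := by
    have a2 : σ ^ 2 = al * (al * ‖p‖ ^ 2) := by rw [hσ]; ring
    have a3 : al * ‖p‖ ^ 2 ≤ 0.52381 := by
      have := normSq_nonneg (y 1)
      have := mul_nonneg al_pos.le this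
      linarith
    have a4 : 0 ≤ al * ‖p‖ ^ 2 := mul_nonneg al_pos.le (by positivity)
    rw [a2]
    have := mul_le_mul hal.2.le a3 a4 (by norm_num)
    linarith
  have hal2 : 2 * al * (p * (1 + zt)).re ≥ (2 + √3) * σ := by
    have := mul_le_mul_of_nonneg_left hre al_pos.le
    rw [hσ]; linarith
  have := core_num hs3.1 hσ0 hlow hup
  linarith

end Covering

/-! ### Matrices of normal forms and of the double coset representatives -/

section Matrices
open Matrix Complex

/-- Powers of `ζ`. -/
def zp : ℕ → Cy
  | 0 => ⟨1, 0, 0, 0⟩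
  | n + 1 => Cy.mul ⟨0, 1, 0, 0⟩ (zp n)

theorem toC_zp (n : ℕ) : toC (zp n) = zt ^ n := by
  induction n with
  | zero => simp [zp, toC]
  | succ n ih => rw [zp, toC_mul, ih, pow_succ']; simp [toC]

/-- The diagonal of the matrix of `v^q j^a`. -/
def dg (q a : ℕ) : Fin 3 → Cy := ![zp a, zp (3 * q + a), ⟨1, 0, 0, 0⟩]

/-- Twice the matrix of `tᵢ`. -/
def mT : ℕ → M3
  | 0 => scM ⟨2, 0, 0, 0⟩
  | 1 => mU
  | 2 => mkM ⟨0, 1, 1, -1⟩ ⟨0, 1, 1, -1⟩ ⟨0, 0, 0, 0⟩ ⟨0, 1, 1, -1⟩ ⟨0, -1, -1, 1⟩ ⟨0, 0, 0, 0⟩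
      ⟨0, 0, 0, 0⟩ ⟨0, 0, 0, 0⟩ ⟨2, 0, 0, 0⟩
  | 3 => mkM ⟨0, 1, 1, -1⟩ ⟨0, 1, 1, -1⟩ ⟨0, 0, 0, 0⟩ ⟨0, -1, 1, 1⟩ ⟨0, 1, -1, -1⟩ ⟨0, 0, 0, 0⟩
      ⟨0, 0, 0, 0⟩ ⟨0, 0, 0, 0⟩ ⟨2, 0, 0, 0⟩
  | 4 => mkM ⟨0, 1, 1, -1⟩ ⟨0, 1, 1, -1⟩ ⟨0, 0, 0, 0⟩ ⟨0, -1, -1, 1⟩ ⟨0, 1, 1, -1⟩ ⟨0, 0, 0, 0⟩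
      ⟨0, 0, 0, 0⟩ ⟨0, 0, 0, 0⟩ ⟨2, 0, 0, 0⟩
  | _ => mkM ⟨0, 0, 0, 0⟩ ⟨0, 2, 0, 0⟩ ⟨0, 0, 0, 0⟩ ⟨2, 0, -2, 0⟩ ⟨0, 0, 0, 0⟩ ⟨0, 0, 0, 0⟩
      ⟨0, 0, 0, 0⟩ ⟨0, 0, 0, 0⟩ ⟨2, 0, 0, 0⟩

/-- Twice the matrix of a normal form. -/
def mN (x : NF) : M3 := fun r c => (mT x.1 r c).mul (dg x.2.1 x.2.2 c)

/-- Twice the matrix of `bu⁻¹b`. -/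
def mQ : M3 := mkM ⟨-1, -3, -1, 2⟩ ⟨-1, -1, -1, 0⟩ ⟨1, 2, 0, -1⟩ ⟨-1, -1, 1, 2⟩ ⟨1, -1, -1, 0⟩ ⟨1, 0, 0, -1⟩
  ⟨-4, -4, 0, 2⟩ ⟨0, -2, -2, 0⟩ ⟨2, 4, 0, -2⟩

/-- Twice the matrix of `σ_n`. -/
def mS : ℕ → M3
  | 0 => scM ⟨2, 0, 0, 0⟩
  | 1 => mB
  | _ => mQ

theorem rpOne : Rp 1 1 (scM ⟨2, 0, 0, 0⟩) := by
  rw [Rp, toM_sc, smul_smul]; simp [toC]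

theorem rpT (i : ℕ) : Rp (tt rU rV i) 1 (mT i) := by
  rcases i with _ | _ | _ | _ | _ | i
  · exact rpOne
  · exact rpU
  · exact (rpV.mul rpU).reduce 1 (by decide +kernel)
  · change Rp (rV ^ 2 * rU) 1 _
    rw [pow_two]
    exact ((rpV.mul rpV).mul rpU).reduce 2 (by decide +kernel)
  · change Rp (rV ^ 3 * rU) 1 _
    rw [three_mul]
    exact (((rpV.mul rpV).mul rpV).mul rpU).reduce 3 (by decide +kernel)
  · change Rp (rU * rV ^ 3 * rU) 1 (mT 5)
    rw [three_mul]
    exact ((rpU.mul ((rpV.mul rpV).mul rpV)).mul rpU).reduce 4 (by decide +kernel)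

theorem rpS (n : ℕ) : Rp (sg rU rB n) 1 (mS n) := by
  rcases n with _ | _ | n
  · exact rpOne
  · exact rpB
  · change Rp (rB * rU⁻¹ * rB) 1 mQ
    exact ((rpB.mul rpUi).mul rpB).reduce 2 (by decide +kernel)

theorem val_v : (rV : Mat) = diagonal ![1, I, 1] := by
  ext r c
  fin_cases r <;> fin_cases c <;> simp [rV, mkU, toM, mV, mkM, toC, zt_cube]

theorem val_j : (((rU * rV) ^ 2 : Matˣ) : Mat) = diagonal ![zt, zt, 1] := by
  have h : Rp ((rU * rV) ^ 2) 0 (mkM ⟨0, 1, 0, 0⟩ ⟨0, 0, 0, 0⟩ ⟨0, 0, 0, 0⟩ ⟨0, 0, 0, 0⟩ ⟨0, 1, 0, 0⟩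
      ⟨0, 0, 0, 0⟩ ⟨0, 0, 0, 0⟩ ⟨0, 0, 0, 0⟩ ⟨1, 0, 0, 0⟩) := by
    rw [pow_two]
    exact ((rpU.mul rpV).mul (rpU.mul rpV)).reduce 4 (by decide +kernel)
  rw [h]
  ext r c
  fin_cases r <;> fin_cases c <;> simp [toM, mkM, toC]

theorem rpN (x : NF) : Rp (ev rU rV x) 1 (mN x) := by
  obtain ⟨i, q, a⟩ := x
  have hT : ((tt rU rV i : Matˣ) : Mat) = ((1 / 2 : ℂ) ^ 1) • toM (mT i) := rpT i
  have e : toM (mN (i, q, a)) = toM (mT i) * diagonal fun c => toC (dg q a c) := by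
    ext r c
    rw [mul_diagonal]
    simp [toM, mN, toC_mul]
  have e2 : diagonal (fun c => toC (dg q a c)) = ((rV : Mat) ^ q) * (((rU * rV) ^ 2 : Matˣ) : Mat) ^ a := by
    rw [val_v, val_j, diagonal_pow, diagonal_pow, diagonal_mul_diagonal]
    congr 1
    ext c
    fin_cases c
    · simp [dg, toC_zp]
    · simp [dg, toC_zp, pow_add, pow_mul, zt_cube]
    · simp [dg, toC]
  rw [Rp, e, e2, ← smul_mul_assoc, ← hT]
  simp only [ev, Units.val_mul, Units.val_pow_eq_pow_val, Matrix.mul_assoc]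

theorem map_ev {G H : Type*} [Group G] [Group H] (f : G →* H) (u v : G) (x : NF) :
    f (ev u v x) = ev (f u) (f v) x := by
  obtain ⟨i, q, a⟩ := x
  rcases i with _ | _ | _ | _ | _ | i <;> simp [ev, tt]

theorem map_sg {G H : Type*} [Group G] [Group H] (f : G →* H) (u b : G) (n : ℕ) :
    f (sg u b n) = sg (f u) (f b) n := by
  rcases n with _ | _ | n <;> simp [sg]

/-- The word in the free group with a given normal form. -/
def wN (x : NF) : FreeGroup CSgen := ev (FreeGroup.of .u) (FreeGroup.of .v) x

/-- The word for `σ_n` in the free group. -/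
def wS (n : ℕ) : FreeGroup CSgen := sg (FreeGroup.of .u) (FreeGroup.of .b) n

theorem pr_wN (x : NF) : pr (wN x) = ev gu gv x := map_ev pr _ _ x
theorem pr_wS (n : ℕ) : pr (wS n) = sg gu gb n := map_sg pr _ _ n
theorem rho_wN (x : NF) : rho (wN x) = ev rU rV x := by rw [wN, map_ev, rho_u, rho_v]
theorem rho_wS (n : ℕ) : rho (wS n) = sg rU rB n := by rw [wS, map_sg, rho_u, rho_b]

/-- Normalisation of the exponents. -/
def nrm (x : NF) : NF := (min x.1 5, x.2.1 % 4, x.2.2 % 12)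

theorem ev_nrm (x : NF) : ev gu gv (nrm x) = ev gu gv x := by
  obtain ⟨i, q, a⟩ := x
  simp only [ev, nrm, v_mod isCS, j_mod isCS]
  rcases i with _ | _ | _ | _ | _ | i <;> simp [tt]

/-- All normal forms with reduced exponents. -/
def allN : List NF := (List.range 6).flatMap fun i => (List.range 4).flatMap fun q =>
  (List.range 12).map fun a => (i, q, a)

theorem nrm_mem (x : NF) : nrm x ∈ allN := by
  obtain ⟨i, q, a⟩ := x
  have h1 : min i 5 < 6 := by omega
  have h2 := Nat.mod_lt q (show 4 > 0 by norm_num)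
  have h3 := Nat.mod_lt a (show 12 > 0 by norm_num)
  simp only [allN, nrm, List.mem_flatMap, List.mem_map, List.mem_range]
  exact ⟨_, h1, _, h2, _, h3, rfl⟩

/-- Eight times the lower right entry of the matrix of `σ_n x σ_m`. -/
def hgt (n : ℕ) (x : NF) (m : ℕ) : Cy := mulM (mulM (mS n) (mN x)) (mS m) 2 2

/-- Whether the code of `σ_n x σ_m` can be computed, so that this element lies in one of the three
double cosets, or else the lower right entry of its matrix has squared modulus greater than `11`;
here `1408 = 2 · 64 · 11`. -/
def closT (n m : ℕ) (x : NF) : Bool :=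
  (lsg n (lk x (m, (0, 0, 0), (0, 0, 0)))).isSome ||
  (let h := hgt n x m
   let p := re2 (h.mul h.conj)
   posT (p.1 - 1408) p.2)

theorem closT_1 : ∀ m ∈ [1, 2], ∀ x ∈ allN, closT 1 m x = true := by decide +kernel

/-- For `n = 2` the element `x` may first be multiplied on the left by a power of `u`, which
commutes with `σ₂ = bu⁻¹b`. -/
theorem closT_2 : ∀ m ∈ [1, 2], ∀ x ∈ allN,
    (closT 2 m x || closT 2 m (lu x) || closT 2 m (lu (lu x))) = true := by decide +kernel

end Matrices

/-! ### The covering theorem -/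

section Closure
open Matrix Complex

theorem Sset_K {k k' g : CS} (hk : k ∈ K) (hk' : k' ∈ K) (hg : g ∈ Sset) : k * g * k' ∈ Sset := by
  obtain ⟨⟨n, x, y⟩, rfl⟩ := hg
  have := Sset_mk (K.mul_mem hk ⟨x, rfl⟩) (K.mul_mem (⟨y, rfl⟩ : ev gu gv y ∈ K) hk') n
  simpa only [evS, mul_assoc] using this

/-- The elements of `K` fix the centre and the last coordinate. -/
theorem act_wN (x : NF) : (∀ z, act (wN x) z 2 = z 2) ∧ act (wN x) e2 = e2 := by
  let M : Submonoid (FreeGroup CSgen) :=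
    { carrier := {w | (∀ z, act w z 2 = z 2) ∧ act w e2 = e2}
      one_mem' := ⟨fun z => by rw [act_one], act_one _⟩
      mul_mem' := by
        intro w w' h h'
        have h1 : (∀ z, act w z 2 = z 2) ∧ act w e2 = e2 := h
        have h2 : (∀ z, act w' z 2 = z 2) ∧ act w' e2 = e2 := h'
        exact ⟨fun z => by rw [act_mul, h1.1, h2.1], by rw [act_mul, h2.2, h1.2]⟩ }
  have hu : FreeGroup.of .u ∈ M := by
    refine ⟨fun z => (act_u z).2.2, ?_⟩
    ext i; fin_cases i
    · exact (act_u _).1.trans (by simp [e2])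
    · exact (act_u _).2.1.trans (by simp [e2])
    · exact (act_u _).2.2
  have hv : FreeGroup.of .v ∈ M := by
    refine ⟨fun z => (act_v z).2.2, ?_⟩
    ext i; fin_cases i
    · exact (act_v _).1
    · exact (act_v _).2.1.trans (by simp [e2])
    · exact (act_v _).2.2
  have ht : ∀ i, tt (FreeGroup.of CSgen.u) (FreeGroup.of CSgen.v) i ∈ M := by
    intro i
    rcases i with _ | _ | _ | _ | _ | i
    · exact M.one_mem
    · exact hu
    · exact M.mul_mem hv hu
    · exact M.mul_mem (M.pow_mem hv 2) hu
    · exact M.mul_mem (M.pow_mem hv 3) hu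
    · exact M.mul_mem (M.mul_mem hu (M.pow_mem hv 3)) hu
  exact M.mul_mem (M.mul_mem (ht _) (M.pow_mem hv _)) (M.pow_mem (M.pow_mem (M.mul_mem hu hv) 2) _)

/-- The lower right entry is constant on double cosets with respect to `K`. -/
theorem height_K (x y : NF) (w : FreeGroup CSgen) :
    (rho (wN x * w * wN y) : Mat) 2 2 = (rho w : Mat) 2 2 := by
  rw [← act_e2, act_mul, act_mul, (act_wN y).2, (act_wN x).1, act_e2]

/-- The meaning of `closT`. -/
theorem clos_aux {n m : ℕ} {x : NF} (h : closT n m x = true)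
    (h2 : normSq ((rho (wS n * wN x * wS m) : Mat) 2 2) < 11) : sg gu gb n * ev gu gv x * sg gu gb m ∈ Sset := by
  simp only [closT, Bool.or_eq_true] at h
  rcases h with h | h
  · obtain ⟨r, hr⟩ := Option.isSome_iff_exists.1 h
    refine ⟨r, ?_⟩
    rw [lsg_sound isCS hr, evS_lk isCS]
    simp [evS, ev, tt, mul_assoc]
  · exfalso
    have h3 := posT_sound h
    push_cast at h3
    have h4 := two_normSq (hgt n x m)
    have h5 : Rp (rho (wS n * wN x * wS m)) (1 + 1 + 1) (mulM (mulM (mS n) (mN x)) (mS m)) := by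
      rw [map_mul, map_mul, rho_wS, rho_wN, rho_wS]
      exact ((rpS n).mul (rpN x)).mul (rpS m)
    have h6 : (rho (wS n * wN x * wS m) : Mat) 2 2 = (1 / 2) ^ 3 * toC (hgt n x m) := by
      rw [h5]; rfl
    have h7 : normSq ((1 / 2 : ℂ) ^ 3) = 1 / 64 := by rw [map_pow]; norm_num [normSq_apply]
    rw [h6, normSq_mul, h7] at h2
    linarith

/-- Left multiplication of `x` by `u` changes neither side of the implication `clos_sg`, as `u`
commutes with `σ₂`. -/
theorem clos_lu {m : ℕ} {x : NF}
    (h : normSq ((rho (wS 2 * wN (lu x) * wS m) : Mat) 2 2) < 11 →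
      sg gu gb 2 * ev gu gv (lu x) * sg gu gb m ∈ Sset)
    (h2 : normSq ((rho (wS 2 * wN x * wS m) : Mat) 2 2) < 11) :
    sg gu gb 2 * ev gu gv x * sg gu gb m ∈ Sset := by
  have e : sg gu gb 2 * ev gu gv (lu x) * sg gu gb m = gu * (sg gu gb 2 * ev gu gv x * sg gu gb m) := by
    have c : Commute (sg gu gb 2) gu := isCS.q_comm.1
    rw [ev_lu isCS, ← mul_assoc, c.eq]
    simp only [mul_assoc]
  have e' : pr (wS 2 * wN (lu x) * wS m) = pr (wN (1, 0, 0) * (wS 2 * wN x * wS m) * wN (0, 0, 0)) := by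
    simp only [map_mul, pr_wS, pr_wN]
    rw [e]; simp [ev, tt]
  obtain ⟨c, hc, e1⟩ := rho_proj e'
  have h3 := h (by
    rw [e1, Matrix.smul_apply, height_K, smul_eq_mul, normSq_mul, normSq_eq_norm_sq c, hc, one_pow, one_mul]
    exact h2)
  rw [e] at h3
  have := Sset_K (K.inv_mem u_mem) K.one_mem h3
  simpa using this

/-- The essential case of `Sset_mul`, with the outer factors from `K` removed. -/
theorem clos_sg {n m : ℕ} {x : NF} (hn : n ∈ [1, 2]) (hm : m ∈ [1, 2]) (hx : x ∈ allN)
    (h : normSq ((rho (wS n * wN x * wS m) : Mat) 2 2) < 11) : sg gu gb n * ev gu gv x * sg gu gb m ∈ Sset := by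
  simp only [List.mem_cons, List.not_mem_nil, or_false] at hn
  rcases hn with rfl | rfl
  · exact clos_aux (closT_1 m hm x hx) h
  · have := closT_2 m hm x hx
    simp only [Bool.or_eq_true] at this
    rcases this with (h1 | h1) | h1
    · exact clos_aux h1 h
    · exact clos_lu (clos_aux h1) h
    · exact clos_lu (clos_lu (clos_aux h1)) h

theorem sg_red (n : ℕ) : ∃ n' ∈ [0, 1, 2], ∀ {G : Type} [Group G] (u b : G), sg u b n = sg u b n' := by
  rcases n with _ | _ | n
  · exact ⟨0, by simp, fun u b => rfl⟩
  · exact ⟨1, by simp, fun u b => rfl⟩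
  · exact ⟨2, by simp, fun u b => rfl⟩

/-- Products of two elements of `Sset` with a small lower right entry are in `Sset`. -/
theorem Sset_mul {g g' : CS} (hg : g ∈ Sset) (hg' : g' ∈ Sset) {w : FreeGroup CSgen} (hw : pr w = g * g')
    (h : normSq ((rho w : Mat) 2 2) < 11) : g * g' ∈ Sset := by
  obtain ⟨⟨n, x, y⟩, rfl⟩ := hg
  obtain ⟨⟨m, x', y'⟩, rfl⟩ := hg'
  obtain ⟨n', hn, en⟩ := sg_red n
  obtain ⟨m', hm, em⟩ := sg_red m
  set k := nrm (mulN y x') with hk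
  have e : evS gu gv gb (n, x, y) * evS gu gv gb (m, x', y') =
      ev gu gv x * (sg gu gb n' * ev gu gv k * sg gu gb m') * ev gu gv y' := by
    rw [hk, ev_nrm, ev_mulN isCS]
    simp only [evS, en, em, mul_assoc]
  rw [e]
  refine Sset_K ⟨x, rfl⟩ ⟨y', rfl⟩ ?_
  by_cases hn0 : n' = 0
  · subst hn0
    have := Sset_mk (⟨k, rfl⟩ : ev gu gv k ∈ K) K.one_mem m'
    simpa [sg] using this
  by_cases hm0 : m' = 0
  · subst hm0
    have := Sset_mk K.one_mem (⟨k, rfl⟩ : ev gu gv k ∈ K) n'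
    simpa [sg] using this
  refine clos_sg (by simpa [hn0] using hn) (by simpa [hm0] using hm) (nrm_mem _) ?_
  have e' : pr w = pr (wN x * (wS n' * wN k * wS m') * wN y') := by
    rw [hw, e]; simp only [map_mul, pr_wS, pr_wN]
  obtain ⟨c, hc, e1⟩ := rho_proj e'
  rwa [e1, Matrix.smul_apply, height_K, smul_eq_mul, normSq_mul, normSq_eq_norm_sq c, hc, one_pow, one_mul] at h

/-- Transitivity of `Rr` over a point: by `triangle` two translates of the centre whose balls
share a point are so close that `Sset_mul` applies. -/
theorem cover_trans (i k l : FreeGroup CSgen) (x : Ball) (hi : x ∈ opB i) (hl : x ∈ opB l)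
    (hik : Rr i k) (hkl : Rr k l) : Rr i l := by
  have e : pr (i⁻¹ * l) = pr (i⁻¹ * k) * pr (k⁻¹ * l) := by rw [← map_mul]; congr 1; group
  rw [Rr, e]
  refine Sset_mul hik hkl e ?_
  have hi : Nn i (vec x) < 2.1 * hN (vec x) := hi
  have hl : Nn l (vec x) < 2.1 * hN (vec x) := hl
  have h1 := Nn_act i⁻¹ i (vec x)
  have h2 := Nn_act i⁻¹ l (vec x)
  rw [inv_mul_cancel, Nn_one] at h1
  apply triangle (z := act i⁻¹ (vec x)) <;> rw [hN_act]
  · exact hN_vec_pos x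
  · rw [h1]; exact hi
  · rw [h2]; exact hl

/-- `core_vec` moved to an arbitrary index. -/
theorem cover_core (i : FreeGroup CSgen) (x : Ball) (hi : x ∈ opB i) : ∃ k, Rr i k ∧ x ∈ clB k := by
  have hi : Nn i (vec x) < 2.1 * hN (vec x) := hi
  have h1 := Nn_act i⁻¹ i (vec x)
  rw [inv_mul_cancel, Nn_one] at h1
  set z := act i⁻¹ (vec x) with hz
  have hzN : hN z = hN (vec x) := hN_act _ _
  have hz0 : z 2 ≠ 0 := by
    intro h
    have h3 := hN_vec_pos x
    rw [← hzN, hN, h, map_zero] at h3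
    have := mul_nonneg al_pos.le (add_nonneg (normSq_nonneg (z 0)) (normSq_nonneg (z 1)))
    linarith
  have hc : 0 < normSq (z 2)⁻¹ := normSq_pos.2 (inv_ne_zero hz0)
  obtain ⟨g, hg, hgN⟩ := core_vec (z := (z 2)⁻¹ • z) (by simp [hz0]) (by
    rw [← Nn_one, Nn_smul, hN_smul, Nn_one, h1, hzN, mul_left_comm]
    exact mul_lt_mul_of_pos_left hi hc)
  refine ⟨i * g, ?_, ?_⟩
  · rw [Rr, inv_mul_cancel_left]; exact hg
  · rw [Nn_smul, hN_smul, mul_left_comm, mul_le_mul_iff_right₀ hc, hzN] at hgN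
    change Nn (i * g) (vec x) ≤ 2 * hN (vec x)
    have := Nn_act i g z
    rw [hz, act_act_inv, ← hz] at this
    rwa [this]

/-- The open balls around the translates of the centre cover the ball, and translates with
overlapping balls differ by an element of `Sset`. -/
theorem cover : (∀ x, ∃ i, x ∈ opB i) ∧ ∀ i k x, x ∈ opB i → x ∈ opB k → Rr i k := by
  let : TopologicalSpace (FreeGroup CSgen) := ⊥
  have : DiscreteTopology (FreeGroup CSgen) := ⟨rfl⟩
  refine nerve opB Rr clB Rr_refl (fun i k => Rr_symm)
    (fun i k l x hi _ hl hik hkl => cover_trans i k l x hi hl hik hkl) clB_sub opB_open opB_conn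
    cover_core ball_nbhd cover_conn ?_
  obtain ⟨t, ht, _⟩ := step_ne 1 .u
  exact ⟨1, t, ht⟩

end Closure

/-! ### Fixed points and discriminants of elements of finite order -/

section FixedPoint
open Matrix Complex Finset

theorem hB_smul_left (a : ℂ) (x y : Fin 3 → ℂ) : hB (a • x) y = starRingEnd ℂ a * hB x y := by
  simp only [hB_apply, Pi.smul_apply, smul_eq_mul, map_mul]; ring

theorem hB_smul_right (a : ℂ) (x y : Fin 3 → ℂ) : hB x (a • y) = a * hB x y := by
  simp only [hB_apply, Pi.smul_apply, smul_eq_mul]; ring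

theorem hB_sum_left {ι : Type} (s : Finset ι) (f : ι → Fin 3 → ℂ) (y : Fin 3 → ℂ) :
    hB (∑ i ∈ s, f i) y = ∑ i ∈ s, hB (f i) y := by
  simp only [hB, star_sum, sum_dotProduct]

theorem hB_sum_right {ι : Type} (s : Finset ι) (x : Fin 3 → ℂ) (f : ι → Fin 3 → ℂ) :
    hB x (∑ i ∈ s, f i) = ∑ i ∈ s, hB x (f i) := by
  simp only [hB, mulVec_sum, dotProduct_sum]

theorem act_sum {ι : Type} (w : FreeGroup CSgen) (s : Finset ι) (f : ι → Fin 3 → ℂ) :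
    act w (∑ i ∈ s, f i) = ∑ i ∈ s, act w (f i) := by
  simp only [act, mulVec_sum]

theorem act_pow {w : FreeGroup CSgen} {z : Fin 3 → ℂ} {l : ℂ} (h : act w z = l • z) (i : ℕ) :
    act (w ^ i) z = l ^ i • z := by
  induction i with
  | zero => simp [act_one]
  | succ i ih => rw [pow_succ, act_mul, h, act_smul, ih, smul_smul, pow_succ']

theorem conj_unit {c : ℂ} (hc : ‖c‖ = 1) : starRingEnd ℂ c * c = 1 := by
  rw [← Complex.normSq_eq_conj_mul_self, normSq_eq_norm_sq, hc]; norm_num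

/-- A word of finite order in the group fixes a point of the ball: one of the components of the centre
in the eigenspaces of its matrix is negative. -/
theorem exists_fixed {w : FreeGroup CSgen} (hw : IsOfFinOrder (pr w)) :
    ∃ (z : Fin 3 → ℂ) (l : ℂ), 0 < hN z ∧ ‖l‖ = 1 ∧ act w z = l • z := by
  obtain ⟨n, hn, e⟩ := isOfFinOrder_iff_pow_eq_one.1 hw
  obtain ⟨c, hc, hact⟩ := act_proj (w := w ^ n) (w' := 1) (by rw [map_pow, e, map_one])
  obtain ⟨m, hm⟩ := IsAlgClosed.exists_pow_nat_eq c hn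
  have hm1 : ‖m‖ = 1 := by
    have : ‖m‖ ^ n = 1 := by rw [← norm_pow, hm, hc]
    exact (pow_eq_one_iff_of_nonneg (norm_nonneg _) hn.ne').1 this
  have m0 : m ≠ 0 := by rintro rfl; simp at hm1
  obtain ⟨o, ho⟩ : ∃ o : ℂ, IsPrimitiveRoot o n :=
    ⟨_, Complex.isPrimitiveRoot_exp n hn.ne'⟩
  let x : ℕ → Fin 3 → ℂ := fun i => (m⁻¹) ^ i • act (w ^ i) e2
  have hx : ∀ i, act w (x i) = m • x (i + 1) := by
    intro i
    simp only [x]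
    rw [act_smul, ← act_mul, ← pow_succ', smul_smul, pow_succ m⁻¹ i]
    congr 1
    field_simp
  have hxn : x n = x 0 := by
    simp only [x, hact, act_one, pow_zero, smul_smul, inv_pow, hm]
    rw [inv_mul_cancel₀ (by rintro rfl; simp at hc), inv_one]
  have hx0 : x 0 = e2 := by simp [x, act_one]
  let z : ℕ → Fin 3 → ℂ := fun k => ∑ i ∈ range n, (o ^ k) ^ i • x i
  have hon : ∀ k, (o ^ k) ^ n = 1 := fun k => by rw [← pow_mul, mul_comm, pow_mul, ho.pow_eq_one, one_pow]
  have ho1 : ∀ k, ‖o ^ k‖ = 1 := fun k =>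
    (pow_eq_one_iff_of_nonneg (norm_nonneg _) hn.ne').1 (by rw [← norm_pow, hon, norm_one])
  have hz : ∀ k, act w (z k) = (m * (o ^ k)⁻¹) • z k := by
    intro k
    have o0 : o ^ k ≠ 0 := fun h => by have := ho1 k; simp [h] at this
    have h1 : ∑ i ∈ range n, (o ^ k) ^ (i + 1) • x (i + 1) = z k := by
      have a := Finset.sum_range_succ (fun i => (o ^ k) ^ i • x i) n
      rw [Finset.sum_range_succ', hon, hxn] at a
      simpa using a
    have h2 : act w (z k) = ∑ i ∈ range n, act w ((o ^ k) ^ i • x i) := act_sum _ _ _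
    rw [h2, ← h1, smul_sum]
    refine sum_congr rfl fun i _ => ?_
    rw [act_smul, hx, smul_smul (_ ^ i), smul_smul (m * _)]
    have : (o ^ k) ^ i * m = m * (o ^ k)⁻¹ * (o ^ k) ^ (i + 1) := by
      rw [pow_succ' (o ^ k) i]
      field_simp
    rw [this]
  have hself : ∀ k, hB (z k) (z k) = n * hB e2 (z k) := by
    intro k
    have o0 : o ^ k ≠ 0 := fun h => by have := ho1 k; simp [h] at this
    rw [show hB (z k) (z k) = hB (∑ i ∈ range n, (o ^ k) ^ i • x i) (z k) from rfl, hB_sum_left]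
    rw [Finset.sum_congr rfl (g := fun _ => hB e2 (z k)), sum_const, card_range, nsmul_eq_mul]
    intro i _
    have h1 := hB_act (w ^ i) e2 (z k)
    rw [act_pow (hz k), hB_smul_right] at h1
    rw [hB_smul_left]
    simp only [x]
    rw [hB_smul_left, ← h1, ← mul_assoc]
    have c1 : starRingEnd ℂ (o ^ k) = (o ^ k)⁻¹ := eq_inv_of_mul_eq_one_left (conj_unit (ho1 k))
    have c2 : starRingEnd ℂ m = m⁻¹ := eq_inv_of_mul_eq_one_left (conj_unit hm1)
    rw [map_pow (starRingEnd ℂ) (o ^ k) i, map_pow (starRingEnd ℂ) m⁻¹ i, map_inv₀, c1, c2, inv_inv, mul_pow, mul_comm ((o ^ k)⁻¹ ^ i)]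
  have hsum : ∑ k ∈ range n, hB e2 (z k) = -n := by
    rw [← hB_sum_right]
    have : ∑ k ∈ range n, z k = (n : ℂ) • e2 := by
      simp only [z]
      rw [Finset.sum_comm]
      rw [Finset.sum_eq_single_of_mem 0 (by simpa using hn)]
      · simp [hx0, Nat.cast_smul_eq_nsmul]
      · intro i hi hi0
        rw [← Finset.sum_smul]
        have h1 : o ^ i ≠ 1 := ho.pow_ne_one_of_pos_of_lt hi0 (by simpa using hi)
        have h2 : ∑ k ∈ range n, (o ^ k) ^ i = 0 := by
          have := mul_neg_geom_sum (o ^ i) n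
          rw [hon, sub_self] at this
          have h3 := (mul_eq_zero.1 this).resolve_left (sub_ne_zero.2 h1.symm)
          rw [← h3]
          exact sum_congr rfl fun k _ => by rw [← pow_mul, ← pow_mul, mul_comm]
        rw [h2, zero_smul]
    rw [this, hB_smul_right, hB_self, hN_e2]
    simp
  have hneg : ∃ k ∈ range n, (hB e2 (z k)).re < 0 := by
    by_contra! hcon
    have h1 := Finset.sum_nonneg hcon
    rw [← Complex.re_sum, hsum] at h1
    simp at h1
    omega
  obtain ⟨k, -, hk⟩ := hneg
  refine ⟨z k, m * (o ^ k)⁻¹, ?_, by rw [norm_mul, norm_inv, ho1, hm1]; simp, hz k⟩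
  have h1 := congrArg Complex.re (hself k)
  rw [hB_self] at h1
  simp at h1
  have hn' : (0 : ℝ) < n := by exact_mod_cast hn
  nlinarith

/-- Every element of finite order is conjugate into `Sset`: its fixed point lies in some translate, which the
element moves to an overlapping one. -/
theorem conj_Sset {g : CS} (hg : IsOfFinOrder g) : ∃ g' ∈ Sset, IsConj g g' := by
  obtain ⟨w, rfl⟩ : ∃ w, pr w = g := QuotientGroup.mk_surjective g
  obtain ⟨z, l, hz, hl, e⟩ := exists_fixed hg
  obtain ⟨t, c, hc, ht⟩ := exists_pt hz
  obtain ⟨i, hi⟩ := cover.1 t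
  have h2 : t ∈ opB (w * i) := by
    rw [mem_opB hc ht] at hi ⊢
    have h3 := Nn_act w i z
    rw [e, Nn_smul, normSq_eq_norm_sq, hl] at h3
    linarith
  refine ⟨_, cover.2 _ _ _ hi h2, isConj_iff.2 ⟨(pr i)⁻¹, ?_⟩⟩
  simp [mul_assoc]

/-- The discriminant of a monic cubic with unimodular roots, divided by the square of their product, is
nonpositive. -/
theorem disc_unit {p q r : ℂ} (hp : ‖p‖ = 1) (hq : ‖q‖ = 1) (hr : ‖r‖ = 1) :
    normSq (p + q + r) ^ 2 - 8 * ((p + q + r) ^ 3 * starRingEnd ℂ (p * q * r)).re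
      + 18 * normSq (p + q + r) - 27 ≤ 0 := by
  have key : normSq (p + q + r) ^ 2 - 8 * ((p + q + r) ^ 3 * starRingEnd ℂ (p * q * r)).re
      + 18 * normSq (p + q + r) - 27 = -(normSq (p - q) * normSq (q - r) * normSq (r - p)) := by
    have cp : starRingEnd ℂ p = p⁻¹ := eq_inv_of_mul_eq_one_left (conj_unit hp)
    have cq : starRingEnd ℂ q = q⁻¹ := eq_inv_of_mul_eq_one_left (conj_unit hq)
    have cr : starRingEnd ℂ r = r⁻¹ := eq_inv_of_mul_eq_one_left (conj_unit hr)
    have p0 : p ≠ 0 := by rintro rfl; simp at hp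
    have q0 : q ≠ 0 := by rintro rfl; simp at hq
    have r0 : r ≠ 0 := by rintro rfl; simp at hr
    have : ((normSq (p + q + r) ^ 2 - 8 * ((p + q + r) ^ 3 * starRingEnd ℂ (p * q * r)).re
      + 18 * normSq (p + q + r) - 27 : ℝ) : ℂ)
      = (-(normSq (p - q) * normSq (q - r) * normSq (r - p)) : ℝ) := by
      push_cast
      rw [Complex.re_eq_add_conj]
      simp only [Complex.normSq_eq_conj_mul_self, map_add, map_sub, map_mul, map_pow, cp, cq, cr, map_inv₀, inv_inv]
      field_simp
      ring
    exact_mod_cast this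
  rw [key]
  have := mul_nonneg (mul_nonneg (normSq_nonneg (p - q)) (normSq_nonneg (q - r))) (normSq_nonneg (r - p))
  linarith

/-- A matrix with a unimodular scalar power has unimodular eigenvalues, so the discriminant of its
characteristic polynomial satisfies the inequality of `disc_unit`. -/
theorem disc_fin {M : Mat} {n : ℕ} (hn : 0 < n) {c : ℂ} (hc : ‖c‖ = 1) (h : M ^ n = c • (1 : Mat)) :
    normSq M.trace ^ 2 - 8 * (M.trace ^ 3 * starRingEnd ℂ M.det).re + 18 * normSq M.trace - 27 ≤ 0 := by
  have hs : M.charpoly.roots.card = 3 := by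
    rw [IsAlgClosed.card_roots_eq_natDegree, M.charpoly_natDegree_eq_dim]; simp
  have hr : ∀ l ∈ M.charpoly.roots, ‖l‖ = 1 := by
    intro l hl
    have h1 := Polynomial.isRoot_of_mem_roots hl
    rw [Polynomial.IsRoot, Matrix.eval_charpoly] at h1
    obtain ⟨x, x0, hx⟩ := Matrix.exists_mulVec_eq_zero_iff.2 h1
    have hx : M *ᵥ x = l • x := by
      rw [sub_mulVec, sub_eq_zero] at hx
      rw [← hx]
      simp
    have hp : ∀ i : ℕ, M ^ i *ᵥ x = l ^ i • x := by
      intro i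
      induction i with
      | zero => simp
      | succ i ih => rw [pow_succ, ← mulVec_mulVec, hx, mulVec_smul, ih, smul_smul, pow_succ']
    have h2 := hp n
    rw [h, smul_mulVec, one_mulVec] at h2
    have h3 : c = l ^ n := smul_left_injective ℂ x0 h2
    exact (pow_eq_one_iff_of_nonneg (norm_nonneg _) hn.ne').1 (by rw [← norm_pow, ← h3, hc])
  rw [Matrix.trace_eq_sum_roots_charpoly, Matrix.det_eq_prod_roots_charpoly]
  obtain ⟨p, q, r, e⟩ := Multiset.card_eq_three.1 hs
  rw [e] at hr ⊢
  have := disc_unit (hr p (by simp)) (hr q (by simp)) (hr r (by simp))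
  simpa [add_assoc, mul_assoc] using this

end FixedPoint

/-! ### Elements of finite order in the three double cosets -/

section Classification
open Matrix Complex

/-- Conjugacy to a listed element or to the inverse of one. -/
def Good (g : CS) : Prop := ∃ t ∈ torsionReps, IsConj t g ∨ IsConj t⁻¹ g

theorem Good.conj {g g' : CS} (h : Good g) (c : IsConj g g') : Good g' := by
  obtain ⟨t, ht, h | h⟩ := h
  · exact ⟨t, ht, .inl (h.trans c)⟩
  · exact ⟨t, ht, .inr (h.trans c)⟩

theorem Good.inv {g : CS} (h : Good g⁻¹) : Good g := by
  have aux : ∀ {x y : CS}, IsConj x y → IsConj x⁻¹ y⁻¹ := by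
    intro x y h
    obtain ⟨c, rfl⟩ := isConj_iff.1 h
    exact isConj_iff.2 ⟨c, by group⟩
  obtain ⟨t, ht, h | h⟩ := h
  · exact ⟨t, ht, .inr (by simpa using aux h)⟩
  · exact ⟨t, ht, .inl (by simpa using aux h)⟩

/-- The element `σ_s k`. Every element of `Sset` is conjugate to one of these. -/
def el (s : ℕ) (k : NF) : CS := sg gu gb s * ev gu gv k

theorem isConj_mul_comm (x y : CS) : IsConj (x * y) (y * x) := isConj_iff.2 ⟨y, by group⟩

theorem conj_el (s : ℕ) (x y : NF) : IsConj (evS gu gv gb (s, x, y)) (el s (mulN y x)) := by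
  rw [evS, el, ev_mulN isCS, ← mul_assoc, mul_assoc]
  exact isConj_mul_comm _ _

theorem el_nrm (s : ℕ) (k : NF) : el s (nrm k) = el s k := by rw [el, ev_nrm, el]

/-- Elements of `⟨u, v⟩` commuting with `σ_s`; for `s = 0` they represent `⟨u, v⟩` modulo its
central subgroup `⟨j⟩`. -/
def cl : ℕ → List NF
  | 0 => (List.range 6).flatMap fun i => (List.range 4).map fun q => (i, q, 0)
  | 1 => (List.range 4).map fun q => (0, q, 0)
  | _ => [(0, 0, 0), (1, 0, 0), (2, 1, 11)]

theorem cl_comm {s : ℕ} {c : NF} (hc : c ∈ cl s) : Commute (ev gu gv c) (sg gu gb s) := by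
  rcases s with _ | _ | s
  · exact Commute.one_right _
  · simp only [cl, List.mem_map] at hc
    obtain ⟨q, -, rfl⟩ := hc
    rw [ev_zero, pow_zero, mul_one]
    exact Commute.pow_left isCS.vbc q
  · have h := isCS.q_comm.1
    simp only [cl, List.mem_cons, List.not_mem_nil, or_false] at hc
    rcases hc with rfl | rfl | rfl
    · simp [ev_zero]
    · simpa [ev, tt, sg] using h.symm
    · rw [ev_uinv isCS]
      exact h.symm.inv_left

/-- Conjugation in `⟨u, v⟩`. -/
def cjN (c k : NF) : NF := nrm (mulN (mulN c k) (invN c))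

theorem el_cj {s : ℕ} {c : NF} (hc : c ∈ cl s) (k : NF) : IsConj (el s (cjN c k)) (el s k) := by
  refine isConj_iff.2 ⟨(ev gu gv c)⁻¹, ?_⟩
  have h := (cl_comm hc).eq
  rw [cjN, el_nrm, el, ev_mulN isCS, ev_mulN isCS, ev_invN isCS, ← mul_assoc (sg _ _ _),
    ← mul_assoc (sg _ _ _), ← h, el]
  group

/-- An inverse of `σ_s k`, up to conjugation, is `σ_s k'` with `k'` given here. -/
def invK (s : ℕ) (k : NF) : NF :=
  match s with
  | 0 => invN k
  | 1 => mulN (0, 3, 2) (invN k)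
  | _ => mulN (invN k) (1, 0, 0)

theorem el_inv (s : ℕ) (k : NF) : IsConj (el s (invK s k)) (el s k)⁻¹ := by
  rw [el, el, _root_.mul_inv_rev]
  rcases s with _ | _ | s
  · simp only [invK, sg, ev_invN isCS, one_mul, inv_one, mul_one]
    exact IsConj.refl _
  · have e := isCS.binv
    rw [isCS.bb] at e
    have cj := isCS.jv
    simp only [zero_add, sg, invK, ev_mulN isCS, ev_invN isCS, ev_zero, v_three isCS, e]
    have h1 : gv⁻¹ * ((gu * gv) ^ 2) ^ 2 = gv⁻¹ * (gu * gv) ^ 2 * (gu * gv) ^ 2 := by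
      rw [pow_two ((gu * gv) ^ 2), mul_assoc]
    rw [h1]
    refine isConj_iff.2 ⟨(ev gu gv k)⁻¹ * (gu * gv) ^ 2, ?_⟩
    have h2 : (gu * gv) ^ 2 * (ev gu gv k)⁻¹ = (ev gu gv k)⁻¹ * (gu * gv) ^ 2 := by
      have : Commute ((gu * gv) ^ 2) (ev gu gv k) :=
        ((j_tt isCS _).mul_right (isCS.jv.pow_right _)).mul_right ((Commute.refl _).pow_right _)
      exact this.inv_right.eq
    rw [mul_assoc (gv⁻¹ * _), h2]
    group
  · have e := isCS.q_comm.2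
    have e' : (gb * gu⁻¹ * gb)⁻¹ = gu * (gb * gu⁻¹ * gb) := by rw [← e]; group
    have eu : ev gu gv (1, 0, 0) = gu := by simp [ev, tt]
    simp only [sg, invK, ev_mulN isCS, ev_invN isCS, eu]
    rw [e', ← mul_assoc (_⁻¹) gu]
    exact isConj_mul_comm _ _

/-- Conjugation of `σ_s k` by `bc`, up to conjugation in `⟨u, v⟩`. -/
def step (s : ℕ) (k c : NF) : Option (ℕ × NF) :=
  ((lb (lk c (s, (0, 0, 0), mulN k (invN c)))).bind fun t =>
    mulS t (1, (0, 0, 1), (0, 3, 1))).map fun t => (t.1, nrm (mulN t.2.2 t.2.1))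

theorem step_sound {s s' : ℕ} {k c k' : NF} (h : step s k c = some (s', k')) :
    IsConj (el s' k') (el s k) := by
  simp only [step, Option.map_eq_some_iff, Option.bind_eq_some_iff] at h
  obtain ⟨⟨r, x, y⟩, ⟨t, h1, h2⟩, h3⟩ := h
  obtain ⟨rfl, rfl⟩ := Prod.mk.inj h3
  have a1 := lb_sound isCS h1
  have a2 := mulS_sound isCS h2
  have e := isCS.binv
  rw [isCS.bb] at e
  have a3 : evS gu gv gb (1, (0, 0, 1), (0, 3, 1)) = gb⁻¹ := by
    rw [e]; simp [evS, ev_zero, sg, v_three isCS, mul_assoc]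
  rw [el_nrm]
  refine (conj_el r x y).symm.trans ?_
  rw [a2, a1, a3, evS_lk isCS, evS, ev_mulN isCS, ev_invN isCS, ev_zero]
  refine isConj_iff.2 ⟨(gb * ev gu gv c)⁻¹, ?_⟩
  simp only [el, pow_zero]
  group

/-- Membership of `(s, k)` in a list, in a form that evaluates quickly. -/
def inL (L : List (ℕ × NF)) (s : ℕ) (k : NF) : Bool :=
  L.any fun p => Nat.beq p.1 s && (Nat.beq p.2.1 k.1 && (Nat.beq p.2.2.1 k.2.1 && Nat.beq p.2.2.2 k.2.2))

theorem inL_sound {L : List (ℕ × NF)} {s : ℕ} {k : NF} (h : inL L s k = true) : (s, k) ∈ L := by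
  simp only [inL, List.any_eq_true, Bool.and_eq_true, Nat.beq_eq] at h
  obtain ⟨⟨s', i, q, a⟩, hp, rfl, rfl, rfl, rfl⟩ := h
  exact hp

/-- Whether `σ_s k` or its inverse is conjugate to a listed `σ_s k'` by an element of `cl s`. -/
def isIn (L : List (ℕ × NF)) (s : ℕ) (k : NF) : Bool :=
  (cl s).any fun c => inL L s (cjN c k) || inL L s (cjN c (invK s k))

theorem isIn_sound {L : List (ℕ × NF)} (hL : ∀ p ∈ L, Good (el p.1 p.2)) {s : ℕ} {k : NF}
    (h : isIn L s k = true) : Good (el s k) := by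
  simp only [isIn, List.any_eq_true, Bool.or_eq_true] at h
  obtain ⟨c, hc, h | h⟩ := h
  · exact (hL _ (inL_sound h)).conj (el_cj hc k)
  · exact (((hL _ (inL_sound h)).conj (el_cj hc _)).conj (el_inv s k)).inv

/-- Successive reduction of the entries `(s, k, c)` of a table to earlier ones, by conjugation by `bc`. -/
def chk : List (ℕ × NF) → List (ℕ × NF × NF) → Bool
  | _, [] => true
  | L, (s, k, c) :: r =>
    ((step s k c).any fun p => isIn L p.1 p.2) && chk ((s, k) :: L) r

theorem chk_sound : ∀ {T : List (ℕ × NF × NF)} {L : List (ℕ × NF)} (_ : ∀ p ∈ L, Good (el p.1 p.2))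
    (_ : chk L T = true), ∀ p ∈ T, Good (el p.1 p.2.1)
  | [], _, _, _ => by simp
  | (s, k, c) :: r, L, hL, h => by
    simp only [chk, Bool.and_eq_true, Option.any_eq_true_iff_get] at h
    obtain ⟨⟨h0, h1⟩, h2⟩ := h
    have h3 : Good (el s k) := (isIn_sound hL h1).conj (step_sound (c := c) (by simp))
    intro p hp
    rcases List.mem_cons.1 hp with rfl | hp
    · exact h3
    · refine chk_sound (L := (s, k) :: L) ?_ h2 p hp
      intro q hq
      rcases List.mem_cons.1 hq with rfl | hq
      · exact h3
      · exact hL q hq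

/-- The listed elements, in the form `σ_s k` and in the given order. -/
def base : List (ℕ × NF) :=
  [(0, 0, 2, 0), (0, 0, 0, 6), (2, 2, 1, 11), (0, 1, 0, 0), (0, 0, 0, 4), (0, 1, 0, 4), (1, 1, 1, 0),
   (0, 0, 1, 0), (0, 0, 0, 3), (0, 0, 1, 3), (0, 0, 2, 3), (1, 2, 1, 11), (0, 0, 0, 2), (0, 0, 2, 2),
   (0, 3, 0, 1), (0, 3, 0, 5), (1, 4, 1, 0), (1, 0, 2, 0), (0, 1, 1, 1), (1, 0, 0, 1), (1, 0, 1, 1),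
   (0, 0, 0, 1), (0, 0, 0, 5), (0, 1, 3, 2), (0, 1, 3, 3), (0, 1, 3, 6), (0, 1, 3, 11), (0, 0, 2, 1),
   (0, 1, 2, 0), (0, 1, 0, 1), (0, 1, 0, 3), (1, 0, 1, 0), (1, 0, 3, 0), (0, 1, 1, 0), (0, 2, 0, 2)]

theorem base_eq : base.map (fun p => el p.1 p.2) = torsionReps := by
  have v3 : gv ^ 3 = gv⁻¹ := v_three isCS
  have ej : (gu * gv) ^ 2 = gj := rfl
  have j11 : gj ^ 11 = gj⁻¹ := j_eleven isCS
  have uv : gv * gu * gv = gj * gu⁻¹ := isCS.vuv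
  have cu : Commute gj gu := isCS.ju
  have cv : Commute gj gv := isCS.jv
  have vb : Commute gv gb := isCS.vbc
  have e1 : el 2 (2, 1, 11) = (gb * gu⁻¹) ^ 2 := by
    rw [el, ev_uinv isCS, pow_two]; simp only [sg, mul_assoc]
  have e2 : el 1 (2, 1, 11) = gb * gu⁻¹ := by rw [el, ev_uinv isCS, sg]
  have e3 : el 1 (4, 1, 0) = gb * gv ^ 2 * gu⁻¹ * gj := by
    have : gv ^ 3 * gu * gv = gv ^ 2 * (gv * gu * gv) := by simp only [pow_succ, pow_zero, one_mul, mul_assoc]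
    simp only [el, sg, ev, tt, pow_one, pow_zero, mul_one]
    rw [this, uv, cu.inv_right.eq]
    simp only [mul_assoc]
  have e4 : el 1 (0, 1, 1) = (gb * gj) ^ 3 := by
    have h : gb * gj * gb = gv * gj⁻¹ := isCS.bjb
    have h3 : (gb * gj) ^ 3 = gb * gj * gb * gj * (gb * gj) := by
      simp only [pow_succ, pow_zero, one_mul, mul_assoc]
    rw [h3, h, inv_mul_cancel_right, ← mul_assoc, vb.eq, el, sg, ev_zero, pow_one, pow_one, ej, mul_assoc]
  have e5 : el 1 (0, 3, 0) = (gb * gv) ^ (-5 : ℤ) := by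
    have hb : gb ^ 5 = gb⁻¹ := by
      rw [eq_inv_iff_mul_eq_one, ← pow_succ, show 5 + 1 = 3 * 2 by norm_num, pow_mul, isCS.b3, one_pow]
    have hv : gv ^ 5 = gv := by rw [pow_succ, isCS.v4, one_mul]
    have : (gb * gv) ^ (-5 : ℤ) = ((gb * gv) ^ 5)⁻¹ := by
      rw [_root_.zpow_neg]; rfl
    rw [this, vb.symm.mul_pow, hb, hv, _root_.mul_inv_rev, inv_inv, vb.inv_left.eq, el, sg, ev_zero, v3, pow_zero,
      mul_one]
  simp only [base, List.map_cons, List.map_nil, torsionReps, e1, e2, e3, e4, e5]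
  simp only [el, sg, ev, tt, ej, pow_zero, pow_one, one_mul, mul_one, v3, j11, mul_assoc]

theorem base_good : ∀ p ∈ base, Good (el p.1 p.2) := by
  intro p hp
  refine ⟨el p.1 p.2, ?_, .inl (IsConj.refl _)⟩
  rw [← base_eq]
  exact List.mem_map.2 ⟨p, hp, rfl⟩

/-- The other classes `σ_s k` of finite order, up to inverses and conjugation by `cl s`, each with
a conjugator `c` for `chk`. -/
def tab : List (ℕ × NF × NF) :=
  [(1, (0, 0, 0), (1, 0, 0)), (1, (0, 0, 3), (0, 0, 2)), (1, (0, 0, 11), (0, 0, 0)), (1, (0, 1, 3), (0, 0, 2)),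
   (1, (0, 1, 11), (0, 0, 0)), (1, (1, 0, 2), (1, 0, 1)), (1, (1, 2, 0), (1, 1, 1)), (1, (1, 2, 3), (1, 3, 1)),
   (1, (5, 0, 1), (1, 0, 1)), (2, (0, 0, 0), (0, 0, 0)), (2, (0, 0, 1), (1, 1, 0)), (2, (0, 0, 11), (0, 0, 0)),
   (2, (0, 1, 1), (0, 0, 1)), (2, (0, 2, 1), (0, 0, 1)), (2, (0, 3, 0), (0, 0, 0)), (2, (0, 3, 1), (0, 0, 1)),
   (2, (2, 1, 0), (1, 1, 0)), (2, (0, 2, 0), (0, 0, 0)), (2, (2, 3, 1), (1, 0, 0))]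

theorem tab_chk : chk base tab = true := by decide +kernel

/-- Representatives of all classes of nontrivial elements of finite order in `Sset`. -/
def fins : List (ℕ × NF) := base ++ tab.map fun p => (p.1, p.2.1)

theorem fins_good : ∀ p ∈ fins, Good (el p.1 p.2) := by
  intro p hp
  rcases List.mem_append.1 hp with hp | hp
  · exact base_good p hp
  · obtain ⟨q, hq, rfl⟩ := List.mem_map.1 hp
    exact chk_sound base_good tab_chk q hq

/-- The trace. -/
def trM (A : M3) : Cy := ((A 0 0).add (A 1 1)).add (A 2 2)

/-- Negation. -/
def neg1 (x : Cy) : Cy := Cy.mul ⟨-1, 0, 0, 0⟩ x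

/-- The determinant, expanded along the first row. -/
def detM (A : M3) : Cy :=
  (((A 0 0).mul (((A 1 1).mul (A 2 2)).add (neg1 ((A 1 2).mul (A 2 1))))).add
    (neg1 ((A 0 1).mul (((A 1 0).mul (A 2 2)).add (neg1 ((A 1 2).mul (A 2 0))))))).add
    ((A 0 2).mul (((A 1 0).mul (A 2 1)).add (neg1 ((A 1 1).mul (A 2 0)))))

theorem toC_neg1 (x : Cy) : toC (neg1 x) = -toC x := by
  rw [neg1, toC_mul]; simp [toC]

theorem toC_trM (A : M3) : toC (trM A) = (toM A).trace := by
  simp [trM, toC_add, Matrix.trace, Fin.sum_univ_three, toM]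

theorem toC_detM (A : M3) : toC (detM A) = (toM A).det := by
  simp only [detM, toC_add, toC_mul, toC_neg1, Matrix.det_fin_three, toM, Matrix.of_apply]
  ring

/-- For `t = 4 tr M` and `d = 64 det M`, the real part of this number is `512` times the discriminant
`|tr M|⁴ - 8 Re((tr M)³ conj(det M)) + 18 |tr M|² - 27` of `disc_fin`. -/
def discC (t d : Cy) : Cy :=
  let n := t.mul t.conj
  (((Cy.mul ⟨2, 0, 0, 0⟩ (n.mul n)).add (neg1 ((t.mul (t.mul t)).mul d.conj))).add
    (Cy.mul ⟨576, 0, 0, 0⟩ n)).add ⟨-13824, 0, 0, 0⟩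

theorem disc_sound {M : Mat} {x y : Cy} (ht : toC x = 4 * M.trace) (hd : toC y = 64 * M.det)
    (hp : posT (re2 (discC x y)).1 (re2 (discC x y)).2 = true) :
    0 < normSq M.trace ^ 2 - 8 * (M.trace ^ 3 * starRingEnd ℂ M.det).re + 18 * normSq M.trace - 27 := by
  have h1 := posT_sound hp
  rw [← re2_eq] at h1
  simp only [discC, toC_add, toC_mul, toC_conj, toC_neg1, ht, hd] at h1
  generalize M.trace = t at *
  generalize M.det = d at *
  have hn : 4 * t * starRingEnd ℂ (4 * t) = ((16 * normSq t : ℝ) : ℂ) := by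
    rw [Complex.mul_conj]; simp; norm_num
  have h3 : 4 * t * (4 * t * (4 * t)) * starRingEnd ℂ (64 * d) = ((4096 : ℝ) : ℂ) * (t ^ 3 * starRingEnd ℂ d) := by
    rw [map_mul, map_ofNat]; push_cast; ring
  have h4 : toC ⟨2, 0, 0, 0⟩ = ((2 : ℝ) : ℂ) := by simp [toC]
  have h5 : toC ⟨576, 0, 0, 0⟩ = ((576 : ℝ) : ℂ) := by simp [toC]
  have h6 : toC ⟨-13824, 0, 0, 0⟩ = ((-13824 : ℝ) : ℂ) := by simp [toC]
  rw [hn, h3, h4, h5, h6] at h1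
  simp only [add_re, neg_re, Complex.re_ofReal_mul, Complex.ofReal_re] at h1
  nlinarith

/-- Whether the discriminant of `σ_s k` is positive. -/
def hyp (s : ℕ) (k : NF) : Bool :=
  let z := discC (trM (mulM (mS s) (mN k))) ((detM (mS s)).mul (detM (mN k)))
  posT (re2 z).1 (re2 z).2

/-- An element `σ_s k` of finite order does not have positive discriminant. -/
theorem disc_el {s : ℕ} {k : NF} (hf : IsOfFinOrder (el s k)) : ¬ hyp s k = true := by
  intro hp
  have hr : Rp (rho (wS s * wN k)) 2 (mulM (mS s) (mN k)) := by
    rw [map_mul, rho_wS, rho_wN]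
    exact (rpS s).mul (rpN k)
  have h1 := disc_sound (M := (rho (wS s * wN k) : Mat))
    (by rw [hr, trace_smul, toC_trM, smul_eq_mul]; ring)
    (by rw [hr, det_smul, toM_mul, det_mul, toC_mul, toC_detM, toC_detM, Fintype.card_fin]; ring) hp
  obtain ⟨n, hn, e⟩ := isOfFinOrder_iff_pow_eq_one.1 hf
  obtain ⟨c, hc, h⟩ := rho_proj (w := (wS s * wN k) ^ n) (w' := 1)
    (by rw [map_pow, map_mul, pr_wS, pr_wN, map_one]; exact e)
  have h2 := disc_fin hn hc (M := (rho (wS s * wN k) : Mat)) (by rw [← Units.val_pow_eq_pow_val, ← map_pow, h]; simp)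
  linarith

/-- Representatives of the remaining classes `σ_s k`, `s ≠ 0`, up to inverses and conjugation by `cl s`;
they are of infinite order. -/
def infs : List (ℕ × NF) :=
  [(1, 0, 0, 4), (1, 0, 0, 5), (1, 0, 0, 6), (1, 0, 0, 7), (1, 0, 0, 8), (1, 0, 0, 9), (1, 0, 0, 10), (1, 0, 1, 4),
   (1, 0, 1, 5), (1, 0, 1, 6), (1, 0, 1, 7), (1, 0, 1, 8), (1, 0, 1, 9), (1, 0, 1, 10), (1, 1, 0, 3), (1, 1, 0, 4),
   (1, 1, 0, 5), (1, 1, 0, 6), (1, 1, 0, 7), (1, 1, 0, 8), (1, 1, 0, 9), (1, 1, 0, 10), (1, 1, 0, 11), (1, 1, 2, 1),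
   (1, 1, 2, 2), (1, 1, 2, 4), (1, 1, 2, 5), (1, 1, 2, 6), (1, 1, 2, 7), (1, 1, 2, 8), (1, 1, 2, 9), (1, 1, 2, 10),
   (1, 5, 0, 0), (1, 5, 0, 2), (1, 5, 0, 3), (1, 5, 0, 4), (1, 5, 0, 5), (2, 0, 0, 2), (2, 0, 0, 3), (2, 0, 0, 4),
   (2, 0, 0, 5), (2, 0, 0, 6), (2, 0, 0, 7), (2, 0, 0, 8), (2, 0, 0, 9), (2, 0, 0, 10), (2, 0, 1, 0), (2, 0, 1, 2),
   (2, 0, 1, 3), (2, 0, 1, 4), (2, 0, 1, 5), (2, 0, 2, 2), (2, 0, 2, 3), (2, 0, 2, 4), (2, 0, 2, 5), (2, 0, 2, 6),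
   (2, 0, 2, 7), (2, 0, 2, 8), (2, 0, 2, 9), (2, 0, 2, 10), (2, 0, 2, 11), (2, 0, 3, 2), (2, 0, 3, 3), (2, 0, 3, 4),
   (2, 0, 3, 5), (2, 0, 3, 6), (2, 0, 3, 7), (2, 0, 3, 8), (2, 0, 3, 9), (2, 0, 3, 10), (2, 0, 3, 11), (2, 2, 1, 1),
   (2, 2, 1, 2), (2, 2, 1, 3), (2, 2, 1, 4), (2, 2, 1, 5), (2, 2, 3, 0), (2, 2, 3, 2), (2, 2, 3, 3), (2, 2, 3, 4),
   (2, 2, 3, 5), (2, 2, 3, 11), (2, 3, 3, 0), (2, 3, 3, 1), (2, 3, 3, 2), (2, 3, 3, 3), (2, 3, 3, 8), (2, 3, 3, 9)]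

theorem infs_hyp : ∀ p ∈ infs, hyp p.1 p.2 = true := by decide +kernel

/-- The assertion to be proved, for one group element. -/
def Fine (g : CS) : Prop := g ≠ 1 → IsOfFinOrder g → Good g

theorem Fine.conj {g g' : CS} (h : Fine g) (c : IsConj g g') : Fine g' := by
  intro h1 h2
  obtain ⟨x, rfl⟩ := isConj_iff.1 c
  refine (h ?_ ?_).conj c
  · rintro rfl; simp at h1
  · exact (MulAut.conj x).injective.isOfFinOrder_iff (f := (MulAut.conj x).toMonoidHom) |>.1 h2

theorem Fine.inv {g : CS} (h : Fine g⁻¹) : Fine g := fun h1 h2 =>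
  (h (inv_ne_one.2 h1) (isOfFinOrder_inv_iff.2 h2)).inv

/-- Representatives of all the `σ_s k`, up to inverses and conjugation by `cl s`. -/
def reps : List (ℕ × NF) := (0, 0, 0, 0) :: (fins ++ infs)

theorem reps_fine : ∀ p ∈ reps, Fine (el p.1 p.2) := by
  intro p hp h1 h2
  rcases List.mem_cons.1 hp with rfl | hp
  · simp [el, sg, ev_zero] at h1
  rcases List.mem_append.1 hp with hp | hp
  · exact fins_good p hp
  · exact absurd (infs_hyp p hp) (disc_el h2)

/-- The elements `σ_s k` obtained from a list of such by inversion and conjugation by `cl s`. -/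
def orb (L : List (ℕ × NF)) (s : ℕ) : List NF :=
  L.flatMap fun p => bif Nat.beq p.1 s then
    (cl s).flatMap fun c => [cjN c p.2, cjN c (invK s p.2)] else []

theorem orb_fine {s : ℕ} {k : NF} (h : k ∈ orb reps s) : Fine (el s k) ∧ k ∈ allN := by
  simp only [orb, List.mem_flatMap] at h
  obtain ⟨⟨s', x⟩, hp, h⟩ := h
  have hx := reps_fine _ hp
  dsimp only at h hx
  cases e : Nat.beq s' s
  · simp [e] at h
  obtain rfl := Nat.eq_of_beq_eq_true e
  simp only [e, cond_true, List.mem_flatMap, List.mem_cons, List.not_mem_nil, or_false] at h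
  obtain ⟨c, hc, rfl | rfl⟩ := h
  · exact ⟨hx.conj (el_cj hc _).symm, nrm_mem _⟩
  · refine ⟨Fine.conj ?_ ((el_inv _ _).symm.trans (el_cj hc _).symm), nrm_mem _⟩
    exact Fine.inv (by rwa [inv_inv])

/-- The position of a normal form in the enumeration `allN`. -/
def code (k : NF) : ℕ := 48 * k.1 + 12 * k.2.1 + k.2.2

/-- A list of normal forms as a bit mask. A single number makes it cheap to test that nothing is missing. -/
def mask : List NF → ℕ
  | [] => 0
  | k :: L => Nat.lor (Nat.shiftLeft 1 (code k)) (mask L)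

theorem mask_sound {n : ℕ} : ∀ {L : List NF}, (mask L).testBit n = true → ∃ k ∈ L, code k = n
  | [], h => by simp [mask] at h
  | k :: L, h => by
    have h' : (1 <<< code k ||| mask L).testBit n = true := h
    rw [Nat.testBit_or, Bool.or_eq_true, Nat.one_shiftLeft, Nat.testBit_two_pow] at h'
    rcases h' with h' | h'
    · exact ⟨k, by simp, by simpa using h'⟩
    · obtain ⟨k', hk, e⟩ := mask_sound h'
      exact ⟨k', by simp [hk], e⟩

/-- For each `s` all `288` elements `σ_s k` are reached from `reps`. -/
theorem mask_orb : ∀ s ∈ [0, 1, 2], Nat.beq (mask (orb reps s)) (Nat.sub (Nat.pow 2 288) 1) = true := by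
  decide +kernel

set_option exponentiation.threshold 300 in
theorem el_fine {s : ℕ} {k : NF} (hs : s ∈ [0, 1, 2]) (hk : k ∈ allN) : Fine (el s k) := by
  have bd : ∀ {x : NF}, x ∈ allN → x.1 < 6 ∧ x.2.1 < 4 ∧ x.2.2 < 12 := by
    intro x hx
    simp only [allN, List.mem_flatMap, List.mem_map, List.mem_range] at hx
    obtain ⟨i, hi, q, hq, a, ha, rfl⟩ := hx
    exact ⟨hi, hq, ha⟩
  have e : mask (orb reps s) = 2 ^ 288 - 1 := Nat.eq_of_beq_eq_true (mask_orb s hs)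
  have b1 := bd hk
  have h : (mask (orb reps s)).testBit (code k) = true := by
    rw [e, Nat.testBit_two_pow_sub_one, decide_eq_true_eq, code]
    omega
  obtain ⟨k', hk', e'⟩ := mask_sound h
  obtain ⟨h1, h2⟩ := orb_fine hk'
  have b2 := bd h2
  obtain ⟨i, q, a⟩ := k
  obtain ⟨i', q', a'⟩ := k'
  simp only [code] at e' b1 b2
  obtain ⟨rfl, rfl, rfl⟩ : i' = i ∧ q' = q ∧ a' = a := by omega
  exact h1

/-- An element of finite order is conjugate to some `σ_s k`, and these are covered by `el_fine`.
-/
theorem good_of_finite {g : CS} (hg : g ≠ 1) (hf : IsOfFinOrder g) : Good g := by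
  obtain ⟨_, ⟨⟨n, x, y⟩, rfl⟩, hc⟩ := conj_Sset hf
  obtain ⟨s, hs, es⟩ := sg_red n
  have hc' : IsConj g (el s (nrm (mulN y x))) := by
    rw [el_nrm]
    have := hc.trans (conj_el n x y)
    rwa [el, es, ← el] at this
  exact (el_fine hs (nrm_mem _)).conj hc'.symm hg hf

end Classification

end CSProof

/-- every element of `G` of finite order `n > 1` is conjugate in `G`
to one of the listed elements or to the inverse of one of them. -/
theorem stmt_3 (g : CS) (hg : g ≠ 1) (hfin : IsOfFinOrder g) :
    ∃ t ∈ torsionReps, IsConj t g ∨ IsConj t⁻¹ g :=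
  CSProof.good_of_finite hg hfin
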